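/- arXiv:2602.01847 — 4 statements merged into one kernel-verified Lean document; each statement's English description precedes it below -/
import Mathlib

section
/- Let r be a positive integer, let ψ be the distribution degenerate at r (every edge receives exactly r labels), and let 𝒢=(V,E,λ) be a sample from Γ_{[n]}(ψ). Then for every α>0, the probability that (2−α)·log n/(r·n) ≤ Double(𝒢) ≤ (2+α)·log n/(r·n) tends to 1 as n→∞. -/
open MeasureTheory ProbabilityTheory Filter Set
open scoped ENNReal NNReal Topology

noncomputable section

namespace RTG

/-- A temporal graph on vertex type `V`, given by the finite set of real time labels
attached to each potential edge (unordered pair of vertices). -/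
abbrev TGraph (V : Type*) := Sym2 V → Finset ℝ

/-- `P` is a strict partial order supported on the set `s`. -/
def StrictPartialOrderOn {α : Type*} (s : Set α) (P : α → α → Prop) : Prop :=
  (∀ a, ¬ P a a) ∧ (∀ a b c, P a b → P b c → P a c) ∧ ∀ a b, P a b → a ∈ s ∧ b ∈ s

/-- The temporal graph `Λ` contains `(H, P)` as a `δ`-temporal motif. -/
def Contains {VH V : Type*} (H : SimpleGraph VH) (P : Sym2 VH → Sym2 VH → Prop)
    (Λ : TGraph V) (δ : ℝ) : Prop :=
  ∃ Φ : VH → V, Function.Injective Φ ∧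
    ∃ lab : Sym2 VH → ℝ,
      (∀ e ∈ H.edgeSet, lab e ∈ Λ (Sym2.map Φ e)) ∧
      (∀ e f, P e f → lab e < lab f) ∧
      (∀ e ∈ H.edgeSet, ∀ f ∈ H.edgeSet, lab e - lab f < δ)

/-- The sparsity `ρ_H` of a graph `H`: the minimum over subgraphs with at least two
edges of `|V_I| / (|E_I| - 1)`. -/
def sparsity {VH : Type*} (H : SimpleGraph VH) : ℝ :=
  sInf {x : ℝ | ∃ I : H.Subgraph, 2 ≤ I.edgeSet.ncard ∧
    x = (I.verts.ncard : ℝ) / ((I.edgeSet.ncard : ℝ) - 1)}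

/-- The space of label data on a single edge: a number `k` of labels together with the
tuple of `k` label values (indexed in order of sampling). -/
abbrev LabelSpace := Σ k : ℕ, Fin k → ℝ

/-- The uniform distribution on `(0, 1]`. -/
def unif01 : Measure ℝ := volume.restrict (Set.Ioc 0 1)

/-- The uniform distribution on `{1, …, T}` (as a measure on `ℝ`). -/
def unifDisc (T : ℕ) : Measure ℝ :=
  (T : ℝ≥0∞)⁻¹ • ∑ k ∈ Finset.Icc 1 T, Measure.dirac (k : ℝ)

/-- The distribution of the label data of a single edge: the number of labels is drawn
according to `ψ` and, independently, each label value is drawn according to `ν`. -/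
def edgeMeasure (ν : Measure ℝ) (ψ : Measure ℕ) : Measure LabelSpace :=
  Measure.sum fun k => ψ {k} • (Measure.pi fun _ : Fin k => ν).map (Sigma.mk k)

/-- The doubly random temporal graph model on vertex set `V` with label value
distribution `ν` and label multiplicity distribution `ψ`: all edges receive independent
identically distributed label data. -/
def model (V : Type*) [Fintype V] [DecidableEq V] (ν : Measure ℝ) (ψ : Measure ℕ) :
    Measure (Sym2 V → LabelSpace) :=
  Measure.pi fun _ : Sym2 V => edgeMeasure ν ψ

/-- The continuous doubly random temporal graph `Γ_V(ψ)`. -/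
abbrev contModel (V : Type*) [Fintype V] [DecidableEq V] (ψ : Measure ℕ) :
    Measure (Sym2 V → LabelSpace) := model V unif01 ψ

/-- The discrete doubly random temporal graph `Γ_V(ψ, T)`. -/
abbrev discModel (V : Type*) [Fintype V] [DecidableEq V] (ψ : Measure ℕ) (T : ℕ) :
    Measure (Sym2 V → LabelSpace) := model V (unifDisc T) ψ

/-- The temporal graph determined by a sample `ω` of the model: each non-loop edge
carries the sampled set of labels. -/
def toTGraph {V : Type*} [DecidableEq V] (ω : Sym2 V → LabelSpace) : TGraph V :=
  fun e => if e.IsDiag then ∅ else Finset.image (ω e).2 Finset.univ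

/-- The `T`-discretization of a temporal graph: each label `l` is replaced by `⌈T·l⌉`. -/
def discretize {V : Type*} (T : ℕ) (Λ : TGraph V) : TGraph V :=
  fun e => (Λ e).image fun l => ((⌈(T : ℝ) * l⌉ : ℤ) : ℝ)

/-- `ψ` is a label multiplicity distribution: a probability distribution on `ℕ` with
positive finite mean and finite second moment. -/
def IsLMD (ψ : Measure ℕ) : Prop :=
  IsProbabilityMeasure ψ ∧ Integrable (fun k : ℕ => (k : ℝ)) ψ ∧
    Integrable (fun k : ℕ => (k : ℝ) ^ 2) ψ ∧ 0 < ∫ k, (k : ℝ) ∂ψ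

/-- The mean `r` of a label multiplicity distribution. -/
def lmdMean (ψ : Measure ℕ) : ℝ := ∫ k, (k : ℝ) ∂ψ

/-- The second moment `r₂` of a label multiplicity distribution. -/
def lmdSq (ψ : Measure ℕ) : ℝ := ∫ k, (k : ℝ) ^ 2 ∂ψ

/-- `q = P[Q > 0]` for a label multiplicity distribution. -/
def lmdPos (ψ : Measure ℕ) : ℝ := (ψ {k | 0 < k}).toReal

/-- `v` is reachable from the set `S` by time `t` in the temporal graph `Λ`. -/
def ReachBy {V : Type*} (Λ : TGraph V) (S : Set V) (t : ℝ) (v : V) : Prop :=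
  v ∈ S ∨ ∃ (k : ℕ) (f : ℕ → V) (ts : ℕ → ℝ), 0 < k ∧ f 0 ∈ S ∧ f k = v ∧
    (∀ i < k, ts i ∈ Λ s(f i, f (i + 1))) ∧
    (∀ i j, i < j → j < k → ts i < ts j) ∧ ts (k - 1) ≤ t

/-- The reachability ball `B_Λ(S, t)`. -/
def ball {V : Type*} (Λ : TGraph V) (S : Set V) (t : ℝ) : Set V := {v | ReachBy Λ S t v}

/-- The doubling time of the set `S` in `Λ` (with value `∞` if the reachability ball
never doubles in size). -/
def doubleTime {V : Type*} (Λ : TGraph V) (S : Set V) : ℝ≥0∞ :=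
  ⨅ (t : ℝ) (_ : 0 ≤ t ∧ 2 * S.ncard ≤ (ball Λ S t).ncard), ENNReal.ofReal t

/-- The doubling time of the temporal graph `Λ`: the maximum doubling time over all
nonempty vertex sets of size at most half the number of vertices. -/
def doubleAll {V : Type*} [Fintype V] (Λ : TGraph V) : ℝ≥0∞ :=
  ⨆ (S : Set V) (_ : S.Nonempty ∧ 2 * S.ncard ≤ Fintype.card V), doubleTime Λ S

/-- `Double⁻`: the maximum doubling time over nonempty sets of size at most `n/4`. -/
def doubleSmall {V : Type*} [Fintype V] (Λ : TGraph V) : ℝ≥0∞ :=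
  ⨆ (S : Set V) (_ : S.Nonempty ∧ 4 * S.ncard ≤ Fintype.card V), doubleTime Λ S

/-- `Double⁺`: the maximum doubling time over sets of size in `(n/4, n/2]`. -/
def doubleLarge {V : Type*} [Fintype V] (Λ : TGraph V) : ℝ≥0∞ :=
  ⨆ (S : Set V) (_ : Fintype.card V < 4 * S.ncard ∧ 2 * S.ncard ≤ Fintype.card V),
    doubleTime Λ S

/-- The partial reversal `ℛ(Λ, t)`: every label `l < t` is replaced by `t - l`. -/
def reverse {V : Type*} (Λ : TGraph V) (t : ℝ) : TGraph V :=
  fun e => (Λ e).image fun l => if l < t then t - l else l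

/-- The rank of a time `x` among all the labels of the sample `ω`: the number of labels
(on genuine, non-loop, edges) that are at most `x`. -/
def rank {V : Type*} [Fintype V] [DecidableEq V] (ω : Sym2 V → LabelSpace) (x : ℝ) : ℕ :=
  ∑ e ∈ Finset.univ.filter (fun e : Sym2 V => ¬ e.IsDiag),
    Nat.card {i : Fin (ω e).1 // (ω e).2 i ≤ x}

/-- The order discretization `𝒢^O` of the sample `ω`: each label is replaced by its rank
among all labels. -/
def orderDisc {V : Type*} [Fintype V] [DecidableEq V] (ω : Sym2 V → LabelSpace) :
    TGraph V :=
  fun e => if e.IsDiag then ∅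
    else Finset.image (fun i => (rank ω ((ω e).2 i) : ℝ)) Finset.univ


instance unif01_prob : IsProbabilityMeasure unif01 := by
  constructor
  simp [unif01]

/-- The product space of all label coordinates. -/
def PP (V : Type*) [Fintype V] [DecidableEq V] (r : ℕ) : Measure (Sym2 V × Fin r → ℝ) :=
  Measure.pi fun _ => unif01

instance PP_prob (V : Type*) [Fintype V] [DecidableEq V] (r : ℕ) :
    IsProbabilityMeasure (PP V r) := by
  unfold PP; infer_instance

/-- Turning label coordinates into label data. -/
def GG {V : Type*} {r : ℕ} (x : Sym2 V × Fin r → ℝ) : Sym2 V → LabelSpace :=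
  fun e => ⟨r, fun i => x (e, i)⟩

lemma edgeMeasure_dirac (r : ℕ) :
    edgeMeasure unif01 (Measure.dirac r)
      = (Measure.pi fun _ : Fin r => unif01).map (Sigma.mk r) := by
  unfold edgeMeasure
  ext s hs
  rw [Measure.sum_apply _ hs, tsum_eq_single r]
  · simp
  · intro k hk
    have : ({k} : Set ℕ).indicator (1 : ℕ → ℝ≥0∞) r = 0 := by
      simp [Set.indicator, hk.symm]
    simp [this]

lemma measurable_sigmaMk (r : ℕ) :
    Measurable (fun y : Fin r → ℝ => (⟨r, y⟩ : LabelSpace)) := by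
  intro s hs
  exact MeasurableSpace.measurableSet_iInf.1 hs r

lemma map_comp_inj {ι κ : Type*} [Fintype ι] [Fintype κ] (c : κ → ι)
    (hc : Function.Injective c) :
    (Measure.pi fun _ : ι => unif01).map (fun x i => x (c i))
      = Measure.pi fun _ : κ => unif01 := by
  have h : iIndepFun (fun (i : ι) (x : ι → ℝ) => x i) (Measure.pi fun _ : ι => unif01) :=
    iIndepFun_pi (X := fun _ => id) (fun _ => aemeasurable_id)
  have h2 := h.precomp hc
  rw [iIndepFun_iff_map_fun_eq_pi_map (fun i => (measurable_pi_apply (c i)).aemeasurable)] at h2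
  rw [h2]
  congr
  ext i : 1
  exact (measurePreserving_eval _ (c i)).map_eq

/-- Independence of events depending on disjoint coordinate sets. -/
lemma indep_coord {ι : Type*} [Fintype ι] (A B : Finset ι) (hAB : Disjoint A B)
    (Q R : Set (ι → ℝ)) (hQ : MeasurableSet Q) (hR : MeasurableSet R)
    (hQA : ∀ x y : ι → ℝ, (∀ i ∈ A, x i = y i) → x ∈ Q → y ∈ Q)
    (hRB : ∀ x y : ι → ℝ, (∀ i ∈ B, x i = y i) → x ∈ R → y ∈ R) :
    (Measure.pi fun _ : ι => unif01) (Q ∩ R)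
      = (Measure.pi fun _ : ι => unif01) Q * (Measure.pi fun _ : ι => unif01) R := by
  classical
  have h : iIndepFun (fun (i : ι) (x : ι → ℝ) => x i) (Measure.pi fun _ : ι => unif01) :=
    iIndepFun_pi (X := fun _ => id) (fun _ => aemeasurable_id)
  have h2 := h.indepFun_finset A B hAB (fun i => measurable_pi_apply i)
  have key : ∀ (A : Finset ι) (Q : Set (ι → ℝ)), MeasurableSet Q →
      (∀ x y : ι → ℝ, (∀ i ∈ A, x i = y i) → x ∈ Q → y ∈ Q) →
      ∃ Q' : Set (A → ℝ), MeasurableSet Q' ∧ Q = (fun (a : ι → ℝ) (i : A) => a i) ⁻¹' Q' := by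
    intro A Q hQ hQA
    refine ⟨(fun (y : A → ℝ) (i : ι) => if h : i ∈ A then y ⟨i, h⟩ else 0) ⁻¹' Q, ?_, ?_⟩
    · apply (measurable_pi_lambda _ _) hQ
      intro i
      by_cases h : i ∈ A
      · simp only [h, dif_pos]; exact measurable_pi_apply _
      · simp only [h, dif_neg, not_false_iff]; exact measurable_const
    · ext x
      simp only [mem_preimage]
      constructor
      · apply hQA; intro i hi; simp [hi]
      · apply hQA; intro i hi; simp [hi]
  obtain ⟨Q', hQ', rfl⟩ := key A Q hQ hQA
  obtain ⟨R', hR', rfl⟩ := key B R hR hRB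
  exact h2.measure_inter_preimage_eq_mul _ _ hQ' hR'

lemma measurable_GG {V : Type*} {r : ℕ} :
    Measurable (GG : (Sym2 V × Fin r → ℝ) → Sym2 V → LabelSpace) := by
  apply measurable_pi_lambda
  intro e
  exact (measurable_sigmaMk r).comp (measurable_pi_lambda _ fun i => measurable_pi_apply _)

lemma map_GG (V : Type*) [Fintype V] [DecidableEq V] (r : ℕ) :
    (PP V r).map GG = contModel V (Measure.dirac r) := by
  unfold contModel model
  rw [edgeMeasure_dirac]
  symm
  have : IsProbabilityMeasure ((Measure.pi fun _ : Fin r => unif01).map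
      (fun y : Fin r → ℝ => (⟨r, y⟩ : LabelSpace))) :=
    Measure.isProbabilityMeasure_map (measurable_sigmaMk r).aemeasurable
  apply Measure.pi_eq
  intro s hs
  rw [Measure.map_apply measurable_GG (MeasurableSet.univ_pi hs)]
  set s' : Sym2 V → Set (Fin r → ℝ) := fun e => (fun y : Fin r → ℝ => (⟨r, y⟩ : LabelSpace)) ⁻¹' s e
  have hs' : ∀ e, MeasurableSet (s' e) := fun e => measurable_sigmaMk r (hs e)
  have e1 : ∀ e, ((Measure.pi fun _ : Fin r => unif01).map
      (fun y : Fin r → ℝ => (⟨r, y⟩ : LabelSpace))) (s e)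
      = PP V r {x | (fun i => x (e, i)) ∈ s' e} := by
    intro e
    rw [Measure.map_apply (measurable_sigmaMk r) (hs e),
      ← map_comp_inj (fun i : Fin r => ((e, i) : Sym2 V × Fin r))
        (fun i j h => by simpa using h), Measure.map_apply
        (measurable_pi_lambda _ fun i => measurable_pi_apply _) (hs' e)]
    rfl
  simp_rw [e1]
  have e2 : GG ⁻¹' (Set.univ.pi s) = {x | ∀ e ∈ (Finset.univ : Finset (Sym2 V)),
      (fun i => x (e, i)) ∈ s' e} := by
    ext x; simp [GG, s']
  rw [e2]
  have hm : ∀ e, MeasurableSet {x : Sym2 V × Fin r → ℝ | (fun i => x (e, i)) ∈ s' e} :=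
    fun e => (measurable_pi_lambda _ fun i => measurable_pi_apply _) (hs' e)
  have : ∀ F : Finset (Sym2 V), PP V r {x | ∀ e ∈ F, (fun i => x (e, i)) ∈ s' e}
      = ∏ e ∈ F, PP V r {x | (fun i => x (e, i)) ∈ s' e} := by
    intro F
    induction F using Finset.induction_on with
    | empty => simp
    | insert a F ha ih =>
      rw [Finset.prod_insert ha, ← ih]
      have : {x : Sym2 V × Fin r → ℝ | ∀ e ∈ insert a F, (fun i => x (e, i)) ∈ s' e}
        = {x | (fun i => x (a, i)) ∈ s' a} ∩ {x | ∀ e ∈ F, (fun i => x (e, i)) ∈ s' e} := by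
        ext x; simp
      rw [this]
      apply indep_coord ({a} ×ˢ Finset.univ) (F ×ˢ Finset.univ)
      · rw [Finset.disjoint_left]
        rintro ⟨e, i⟩ h1 h2
        simp at h1 h2
        subst h1; exact ha h2
      · exact hm a
      · have : {x : Sym2 V × Fin r → ℝ | ∀ e ∈ F, (fun i => x (e, i)) ∈ s' e}
          = ⋂ e ∈ F, {x | (fun i => x (e, i)) ∈ s' e} := by ext x; simp
        rw [this]
        exact Finset.measurableSet_biInter F (fun e _ => hm e)
      · intro x y hxy hx
        have : (fun i => y (a, i)) = fun i => x (a, i) := by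
          funext i; exact (hxy (a, i) (by simp)).symm
        simp only [mem_ofPred_eq, this]; exact hx
      · intro x y hxy hx e he
        have : (fun i => y (e, i)) = fun i => x (e, i) := by
          funext i; exact (hxy (e, i) (by simp [he])).symm
        rw [this]; exact hx e he
  exact this _

/-- Boundary coordinates between two vertex sets. -/
def cross {V : Type*} [DecidableEq V] (r : ℕ) (S U : Finset V) : Finset (Sym2 V × Fin r) :=
  ((S ×ˢ U) ×ˢ (Finset.univ : Finset (Fin r))).image fun p => (s(p.1.1, p.1.2), p.2)

lemma mem_cross {V : Type*} [DecidableEq V] {r : ℕ} {S U : Finset V} {c : Sym2 V × Fin r} :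
    c ∈ cross r S U ↔ ∃ u ∈ S, ∃ v ∈ U, c.1 = s(u, v) := by
  unfold cross
  simp only [Finset.mem_image, Finset.mem_product, Finset.mem_univ, and_true, Prod.exists]
  constructor
  · rintro ⟨u, v, i, ⟨hu, hv⟩, rfl⟩
    exact ⟨u, hu, v, hv, rfl⟩
  · rintro ⟨u, hu, v, hv, h⟩
    exact ⟨u, v, c.2, ⟨hu, hv⟩, by rw [← h]⟩

lemma card_cross {V : Type*} [DecidableEq V] (r : ℕ) {S U : Finset V} (h : Disjoint S U) :
    (cross r S U).card = S.card * U.card * r := by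
  unfold cross
  rw [Finset.card_image_of_injOn]
  · simp
  · rintro ⟨⟨u, v⟩, i⟩ h1 ⟨⟨u', v'⟩, i'⟩ h2 h3
    simp at h1 h2 h3
    obtain ⟨h3, rfl⟩ := h3
    rcases h3 with ⟨rfl, rfl⟩ | ⟨rfl, rfl⟩
    · rfl
    · exact absurd h2.2 (Finset.disjoint_left.1 h h1.1)

lemma PP_box {V : Type*} [Fintype V] [DecidableEq V] (r : ℕ) (B : Sym2 V × Fin r → Set ℝ) :
    (PP V r).real {x | ∀ c, x c ∈ B c} = ∏ c, unif01.real (B c) := by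
  have : {x : Sym2 V × Fin r → ℝ | ∀ c, x c ∈ B c} = Set.univ.pi B := by ext; simp
  rw [this, measureReal_def, PP, Measure.pi_pi, ENNReal.toReal_prod]
  rfl

lemma PP_box_finset {V : Type*} [Fintype V] [DecidableEq V] (r : ℕ)
    (F : Finset (Sym2 V × Fin r)) (B : Set ℝ) :
    (PP V r).real {x | ∀ c ∈ F, x c ∈ B} = unif01.real B ^ F.card := by
  have : {x : Sym2 V × Fin r → ℝ | ∀ c ∈ F, x c ∈ B}
      = {x | ∀ c, x c ∈ (if c ∈ F then B else Set.univ)} := by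
    ext x
    simp only [mem_ofPred_eq]
    refine forall_congr' fun c => ?_
    by_cases h : c ∈ F <;> simp [h]
  rw [this, PP_box, ← Finset.prod_const, ← Finset.prod_subset (Finset.subset_univ F)]
  · apply Finset.prod_congr rfl
    intro c hc; simp [hc]
  · intro c _ hc; simp [hc]

lemma unif_Ioc {x y : ℝ} (h0 : 0 ≤ x) (hxy : x ≤ y) (h1 : y ≤ 1) :
    unif01.real (Ioc x y) = y - x := by
  have : Ioc x y ∩ Ioc 0 1 = Ioc x y :=
    Set.inter_eq_left.2 (Ioc_subset_Ioc h0 h1)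
  rw [measureReal_def, unif01, Measure.restrict_apply measurableSet_Ioc, this, Real.volume_Ioc,
    ENNReal.toReal_ofReal (by linarith)]

lemma unif_Ioi {x : ℝ} (h0 : 0 ≤ x) (h1 : x ≤ 1) : unif01.real (Ioi x) = 1 - x := by
  have : Ioi x ∩ Ioc 0 1 = Ioc x 1 := by
    ext z; simp only [mem_inter_iff, mem_Ioi, mem_Ioc]; constructor
    · rintro ⟨a, b, c⟩; exact ⟨a, c⟩
    · rintro ⟨a, c⟩; exact ⟨a, by linarith, c⟩
  rw [measureReal_def, unif01, Measure.restrict_apply measurableSet_Ioi, this, Real.volume_Ioc,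
    ENNReal.toReal_ofReal (by linarith)]

lemma unif_Iic {x : ℝ} (h0 : 0 ≤ x) (h1 : x ≤ 1) : unif01.real (Iic x) = x := by
  have h := prob_compl_eq_one_sub (μ := unif01) (measurableSet_Ioi (a := x))
  have h2 := probReal_compl_eq_one_sub (μ := unif01) (measurableSet_Ioi (a := x))
  rw [compl_Ioi, unif_Ioi h0 h1] at h2
  linarith

lemma mem_toTGraph {V : Type*} [DecidableEq V] {r : ℕ} (x : Sym2 V × Fin r → ℝ) (u v : V)
    (l : ℝ) : l ∈ toTGraph (GG x) s(u, v) ↔ u ≠ v ∧ ∃ i, x (s(u, v), i) = l := by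
  unfold toTGraph GG
  by_cases h : u = v <;> simp [h]



/-- The exploration process from `w` along windows `W`. -/
def Sx {V : Type*} [Fintype V] [DecidableEq V] {r : ℕ} (W : ℕ → Set ℝ) (w : V)
    (x : Sym2 V × Fin r → ℝ) : ℕ → Finset V
  | 0 => {w}
  | j + 1 =>
    haveI := Classical.decPred fun v => ∃ u ∈ Sx W w x j, ∃ i, x (s(u, v), i) ∈ W j
    Sx W w x j ∪ Finset.univ.filter fun v => ∃ u ∈ Sx W w x j, ∃ i, x (s(u, v), i) ∈ W j

section
variable {V : Type*} [Fintype V] [DecidableEq V] {r : ℕ} (W : ℕ → Set ℝ) (w : V)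

lemma mem_Sx_succ (x : Sym2 V × Fin r → ℝ) (j : ℕ) (v : V) :
    v ∈ Sx W w x (j + 1) ↔ v ∈ Sx W w x j ∨ ∃ u ∈ Sx W w x j, ∃ i, x (s(u, v), i) ∈ W j := by
  simp [Sx]

lemma Sx_mono (x : Sym2 V × Fin r → ℝ) : Monotone (Sx W w x) :=
  monotone_nat_of_le_succ fun j v hv => (mem_Sx_succ W w x j v).2 (Or.inl hv)

lemma measurable_coord {B : Set ℝ} (hB : MeasurableSet B) (c : Sym2 V × Fin r) :
    Measurable fun x : Sym2 V × Fin r → ℝ => x c ∈ B :=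
  measurableSet_setOfPred.1 (measurable_pi_apply c hB)

lemma measurable_mem_Sx (hW : ∀ l, MeasurableSet (W l)) (j : ℕ) (v : V) :
    Measurable fun x : Sym2 V × Fin r → ℝ => v ∈ Sx W w x j := by
  induction j generalizing v with
  | zero => simp only [Sx]; exact measurable_const
  | succ j ih =>
    simp only [mem_Sx_succ]
    refine (ih v).or (Measurable.exists fun u => (ih u).and (Measurable.exists fun i => ?_))
    exact measurable_coord (hW j) _

lemma measurableSet_Sx_eq (hW : ∀ l, MeasurableSet (W l)) (j : ℕ) (A : Finset V) :
    MeasurableSet {x : Sym2 V × Fin r → ℝ | Sx W w x j = A} := by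
  simp only [Finset.ext_iff]
  exact measurableSet_setOfPred.2 (Measurable.forall fun v =>
    (measurable_mem_Sx W w hW j v).iff measurable_const)

lemma measurableSet_stay (hW : ∀ l, MeasurableSet (W l)) (j : ℕ) :
    MeasurableSet {x : Sym2 V × Fin r → ℝ | Sx W w x (j + 1) = Sx W w x j} := by
  simp only [Finset.ext_iff]
  exact measurableSet_setOfPred.2 (Measurable.forall fun v =>
    (measurable_mem_Sx W w hW _ v).iff (measurable_mem_Sx W w hW _ v))

lemma measurableSet_hist (hW : ∀ l, MeasurableSet (W l)) (j : ℕ) (A : ℕ → Finset V) :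
    MeasurableSet {x : Sym2 V × Fin r → ℝ | ∀ l ≤ j, Sx W w x l = A l} := by
  have : {x : Sym2 V × Fin r → ℝ | ∀ l ≤ j, Sx W w x l = A l}
    = ⋂ l, ⋂ (_ : l ≤ j), {x | Sx W w x l = A l} := by ext; simp
  rw [this]
  exact MeasurableSet.iInter fun l => MeasurableSet.iInter fun _ => measurableSet_Sx_eq W w hW l _

lemma step_hist (hW : ∀ l, MeasurableSet (W l)) (j : ℕ) (A : ℕ → Finset V)
    (hdis : ∀ l < j, Disjoint (W l) (W j)) (τ : ℝ) (hτ : unif01.real (W j) = τ) :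
    (PP V r).real ({x | ∀ l ≤ j, Sx W w x l = A l} ∩ {x | Sx W w x (j + 1) = Sx W w x j})
      ≤ (1 - τ) ^ ((A j).card * (Fintype.card V - (A j).card) * r)
        * (PP V r).real {x | ∀ l ≤ j, Sx W w x l = A l} := by
  classical
  have hτ0 : 0 ≤ τ := hτ ▸ measureReal_nonneg
  have hτ1 : τ ≤ 1 := hτ ▸ measureReal_le_one
  by_cases hne : ({x : Sym2 V × Fin r → ℝ | ∀ l ≤ j, Sx W w x l = A l}).Nonempty
  swap
  · rw [Set.not_nonempty_iff_eq_empty] at hne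
    rw [hne]; simp
  obtain ⟨x0, hx0⟩ := hne
  have hA0 : A 0 = {w} := by rw [← hx0 0 (Nat.zero_le _)]; rfl
  have hsub : ∀ l ≤ j, A l ⊆ A j := by
    intro l hl
    rw [← hx0 l hl, ← hx0 j le_rfl]
    exact Sx_mono W w x0 hl
  set Q : Set (Sym2 V × Fin r → ℝ) := {x | ∀ l, l < j → ∀ v, v ∈ A j →
    (v ∈ A (l + 1) ↔ v ∈ A l ∨ ∃ u, u ∈ A l ∧ ∃ i, x (s(u, v), i) ∈ W l)} with hQdef
  set bx : Sym2 V × Fin r → Set ℝ := fun c => {y | ∀ l, l < j → ∀ u, u ∈ A l → ∀ v, v ∉ A j →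
    c.1 = s(u, v) → y ∉ W l} with hbx
  set bx' : Sym2 V × Fin r → Set ℝ := fun c => {y | y ∈ bx c ∧ ∀ u, u ∈ A j → ∀ v, v ∉ A j →
    c.1 = s(u, v) → y ∉ W j} with hbx'
  have hbm : ∀ c, MeasurableSet (bx c) := by
    intro c
    apply measurableSet_setOfPred.2
    refine Measurable.forall fun l => Measurable.imp measurable_const <|
      Measurable.forall fun u => Measurable.imp measurable_const <|
      Measurable.forall fun v => Measurable.imp measurable_const <|
      Measurable.imp measurable_const (Measurable.not ?_)
    exact measurableSet_setOfPred.1 (hW l)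
  have hbm' : ∀ c, MeasurableSet (bx' c) := by
    intro c
    apply (hbm c).inter
    apply measurableSet_setOfPred.2
    refine 
      Measurable.forall fun u => Measurable.imp measurable_const <|
      Measurable.forall fun v => Measurable.imp measurable_const <|
      Measurable.imp measurable_const (Measurable.not ?_)
    exact measurableSet_setOfPred.1 (hW j)
  have hD : {x : Sym2 V × Fin r → ℝ | ∀ l ≤ j, Sx W w x l = A l} = Q ∩ {x | ∀ c, x c ∈ bx c} := by
    ext x
    constructor
    · intro hx
      refine ⟨?_, ?_⟩
      · intro l hl v hv
        have := mem_Sx_succ W w x l v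
        rwa [hx l hl.le, hx (l + 1) hl] at this
      · rintro ⟨e, i⟩ l hl u hu v hv he hy
        simp only at he
        subst he
        have := mem_Sx_succ W w x l v
        rw [hx l hl.le, hx (l + 1) hl] at this
        exact hv (hsub (l + 1) hl (this.2 (Or.inr ⟨u, hu, i, hy⟩)))
    · rintro ⟨hq, hc⟩ l
      induction l with
      | zero => intro _; rw [hA0]; rfl
      | succ l ih =>
        intro hl
        have ih := ih (by omega)
        ext v
        rw [mem_Sx_succ, ih]
        by_cases hv : v ∈ A j
        · rw [hq l hl v hv]
        · have h1 : v ∉ A (l + 1) := fun h => hv (hsub _ hl h)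
          have h2 : v ∉ A l := fun h => hv (hsub _ (by omega) h)
          simp only [h1, h2, false_or, iff_false]
          rintro ⟨u, hu, i, hy⟩
          exact hc (s(u, v), i) l hl u hu v hv rfl hy
  have hDH : {x : Sym2 V × Fin r → ℝ | ∀ l ≤ j, Sx W w x l = A l}
      ∩ {x | Sx W w x (j + 1) = Sx W w x j} = Q ∩ {x | ∀ c, x c ∈ bx' c} := by
    ext x
    constructor
    · rintro ⟨hx, hst⟩
      have hx' := hx
      change x ∈ {x : Sym2 V × Fin r → ℝ | ∀ l ≤ j, Sx W w x l = A l} at hx'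
      rw [hD] at hx'
      refine ⟨hx'.1, fun c => ⟨hx'.2 c, ?_⟩⟩
      obtain ⟨e, i⟩ := c
      intro u hu v hv he hy
      simp only at he
      subst he
      have := mem_Sx_succ W w x j v
      rw [show Sx W w x (j + 1) = Sx W w x j from hst, hx j le_rfl] at this
      exact hv (this.2 (Or.inr ⟨u, hu, i, hy⟩))
    · rintro ⟨hq, hc⟩
      have hx : x ∈ {x : Sym2 V × Fin r → ℝ | ∀ l ≤ j, Sx W w x l = A l} := by
        rw [hD]; exact ⟨hq, fun c => (hc c).1⟩
      refine ⟨hx, ?_⟩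
      have hxj : Sx W w x j = A j := hx j le_rfl
      change Sx W w x (j + 1) = Sx W w x j
      ext v
      rw [mem_Sx_succ, hxj]
      constructor
      · rintro (h | ⟨u, hu, i, hy⟩)
        · exact h
        · by_contra hv
          exact (hc (s(u, v), i)).2 u hu v hv rfl hy
      · exact Or.inl
  have hQm : MeasurableSet Q := by
    apply measurableSet_setOfPred.2
    refine Measurable.forall fun l => Measurable.imp measurable_const <|
      Measurable.forall fun v => Measurable.imp measurable_const <|
      Measurable.iff measurable_const <| Measurable.or measurable_const <|
      Measurable.exists fun u => Measurable.and measurable_const <| Measurable.exists fun i => ?_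
    exact measurable_coord (hW l) _
  have hbxm : ∀ b : Sym2 V × Fin r → Set ℝ, (∀ c, MeasurableSet (b c)) →
      MeasurableSet {x : Sym2 V × Fin r → ℝ | ∀ c, x c ∈ b c} := by
    intro b hb
    exact measurableSet_setOfPred.2 (Measurable.forall fun c => measurable_coord (hb c) c)
  -- independence
  have hQc : ∀ x y : Sym2 V × Fin r → ℝ,
      (∀ c ∈ (cross r (A j) (Finset.univ \ A j))ᶜ, x c = y c) → x ∈ Q → y ∈ Q := by
    intro x y hxy hx l hl v hv
    rw [hx l hl v hv]
    apply or_congr_right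
    refine exists_congr fun u => and_congr_right fun hu => exists_congr fun i => ?_
    rw [hxy]
    rw [Finset.mem_compl, mem_cross]
    rintro ⟨u', hu', v', hv', he⟩
    simp only [Finset.mem_sdiff, Finset.mem_univ, true_and] at hv'
    have hu2 := hsub l hl.le hu
    rw [Sym2.eq_iff] at he
    rcases he with ⟨rfl, rfl⟩ | ⟨rfl, rfl⟩
    · exact hv' hv
    · exact hv' hu2
  have hboxdep : ∀ b : Sym2 V × Fin r → Set ℝ,
      (∀ c, c ∉ cross r (A j) (Finset.univ \ A j) → b c = Set.univ) →
      ∀ x y : Sym2 V × Fin r → ℝ,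
      (∀ c ∈ cross r (A j) (Finset.univ \ A j), x c = y c) →
      x ∈ {x : Sym2 V × Fin r → ℝ | ∀ c, x c ∈ b c} →
      y ∈ {x : Sym2 V × Fin r → ℝ | ∀ c, x c ∈ b c} := by
    intro b hb x y hxy hx c
    by_cases hc : c ∈ cross r (A j) (Finset.univ \ A j)
    · rw [← hxy c hc]; exact hx c
    · rw [hb c hc]; trivial
  have hb1 : ∀ c, c ∉ cross r (A j) (Finset.univ \ A j) → bx c = Set.univ := by
    intro c hc
    rw [Set.eq_univ_iff_forall]
    intro y l hl u hu v hv he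
    exact absurd (mem_cross.2 ⟨u, hsub l hl.le hu, v, by simp [hv], he⟩) hc
  have hb2 : ∀ c, c ∉ cross r (A j) (Finset.univ \ A j) → bx' c = Set.univ := by
    intro c hc
    rw [Set.eq_univ_iff_forall]
    intro y
    refine ⟨by rw [hb1 c hc]; trivial, ?_⟩
    intro u hu v hv he
    exact absurd (mem_cross.2 ⟨u, hu, v, by simp [hv], he⟩) hc
  have hdisj : Disjoint (cross r (A j) (Finset.univ \ A j))ᶜ
      (cross r (A j) (Finset.univ \ A j)) := disjoint_compl_left
  have i1 : (PP V r).real (Q ∩ {x | ∀ c, x c ∈ bx c})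
      = (PP V r).real Q * (PP V r).real {x | ∀ c, x c ∈ bx c} := by
    have := indep_coord _ _ hdisj Q _ hQm (hbxm bx hbm) hQc (hboxdep bx hb1)
    rw [measureReal_def, PP, this, ENNReal.toReal_mul]; rfl
  have i2 : (PP V r).real (Q ∩ {x | ∀ c, x c ∈ bx' c})
      = (PP V r).real Q * (PP V r).real {x | ∀ c, x c ∈ bx' c} := by
    have := indep_coord _ _ hdisj Q _ hQm (hbxm bx' hbm') hQc (hboxdep bx' hb2)
    rw [measureReal_def, PP, this, ENNReal.toReal_mul]; rfl
  rw [hDH, hD, i1, i2, PP_box, PP_box]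
  have hcard : (A j).card * (Fintype.card V - (A j).card) * r
      = (cross r (A j) (Finset.univ \ A j)).card := by
    rw [card_cross r Finset.disjoint_sdiff, Finset.card_sdiff_of_subset (Finset.subset_univ _),
      Finset.card_univ]
  have hprod : ∏ c, unif01.real (bx' c) ≤
      (1 - τ) ^ ((A j).card * (Fintype.card V - (A j).card) * r) * ∏ c, unif01.real (bx c) := by
    rw [hcard, ← Finset.prod_const]
    rw [← Finset.prod_subset (Finset.subset_univ (cross r (A j) (Finset.univ \ A j)))
      (f := fun c => unif01.real (bx' c)) (by intro c _ hc; simp [hb2 c hc]),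
      ← Finset.prod_subset (Finset.subset_univ (cross r (A j) (Finset.univ \ A j)))
      (f := fun c => unif01.real (bx c)) (by intro c _ hc; simp [hb1 c hc]),
      ← Finset.prod_mul_distrib]
    apply Finset.prod_le_prod
    · intro c _; exact measureReal_nonneg
    · intro c hc
      obtain ⟨u, hu, v, hv, he⟩ := mem_cross.1 hc
      have hv' : v ∉ A j := by simpa using hv
      have hsubW : W j ⊆ bx c := by
        intro y hy l hl u hu v hv he hyl
        exact Set.disjoint_left.1 (hdis l hl) hyl hy
      have hle : bx' c ⊆ bx c \ W j := by
        rintro y ⟨h1, h2⟩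
        exact ⟨h1, h2 u hu v hv' he⟩
      calc unif01.real (bx' c) ≤ unif01.real (bx c \ W j) := measureReal_mono hle
        _ = unif01.real (bx c) - τ := by
            rw [measureReal_sdiff hsubW (hW j), hτ]
        _ ≤ (1 - τ) * unif01.real (bx c) := by
            have : unif01.real (bx c) ≤ 1 := measureReal_le_one
            nlinarith
  calc _ ≤ (PP V r).real Q * ((1 - τ) ^ ((A j).card * (Fintype.card V - (A j).card) * r)
        * ∏ c, unif01.real (bx c)) := mul_le_mul_of_nonneg_left hprod measureReal_nonneg
    _ = _ := by ring

end



section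
variable {V : Type*} [Fintype V] [DecidableEq V] {r : ℕ} (W : ℕ → Set ℝ) (w : V)

lemma measurable_Sx (hW : ∀ l, MeasurableSet (W l)) (j : ℕ) :
    @Measurable _ _ _ ⊤ (fun x : Sym2 V × Fin r → ℝ => Sx W w x j) := by
  let _ : MeasurableSpace (Finset V) := ⊤
  exact measurable_to_countable' fun A => measurableSet_Sx_eq W w hW j A

lemma measurable_Sx_comp (hW : ∀ l, MeasurableSet (W l)) (j : ℕ) (g : Finset V → ℝ) :
    Measurable (fun x : Sym2 V × Fin r → ℝ => g (Sx W w x j)) := by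
  let _ : MeasurableSpace (Finset V) := ⊤
  exact measurable_from_top.comp (measurable_Sx W w hW j)

lemma integrable_Sx_comp (hW : ∀ l, MeasurableSet (W l)) (j : ℕ) (g : Finset V → ℝ) :
    Integrable (fun x : Sym2 V × Fin r → ℝ => g (Sx W w x j)) (PP V r) := by
  refine Integrable.of_bound (measurable_Sx_comp W w hW j g).aestronglyMeasurable
    (∑ A, |g A|) (Eventually.of_forall fun x => ?_)
  exact Finset.single_le_sum (f := fun A => |g A|) (fun A _ => abs_nonneg _)
    (Finset.mem_univ (Sx W w x j))

lemma step_integral (hW : ∀ l, MeasurableSet (W l)) (j : ℕ)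
    (hdis : ∀ l < j, Disjoint (W l) (W j)) (τ : ℝ) (hτ : unif01.real (W j) = τ)
    (g : Finset V → ℝ) (hg : ∀ A, 0 ≤ g A) :
    ∫ x, ({x | Sx W w x (j + 1) = Sx W w x j}).indicator (fun x => g (Sx W w x j)) x ∂(PP V r)
      ≤ ∫ x, (1 - τ) ^ ((Sx W w x j).card * (Fintype.card V - (Sx W w x j).card) * r)
          * g (Sx W w x j) ∂(PP V r) := by
  classical
  set ext : (Fin (j + 1) → Finset V) → ℕ → Finset V := fun A l => A ⟨min l j, by omega⟩ with hext
  set D : (Fin (j + 1) → Finset V) → Set (Sym2 V × Fin r → ℝ) :=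
    fun A => {x | ∀ l ≤ j, Sx W w x l = ext A l} with hD
  set H : Set (Sym2 V × Fin r → ℝ) := {x | Sx W w x (j + 1) = Sx W w x j} with hH
  have hDm : ∀ A, MeasurableSet (D A) := fun A => measurableSet_hist W w hW j _
  have hHm : MeasurableSet H := measurableSet_stay W w hW j
  have hDiff : ∀ x A, x ∈ D A ↔ A = fun l : Fin (j + 1) => Sx W w x l := by
    intro x A
    constructor
    · intro h
      funext l
      have := h l (by omega)
      rw [this]
      simp only [hext]
      congr 1
      ext; simp; omega
    · rintro rfl l hl
      simp [hext, hl]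
  have decomp : ∀ (F : Finset V → ℝ) (K : Set (Sym2 V × Fin r → ℝ)) (x : Sym2 V × Fin r → ℝ),
      K.indicator (fun x => F (Sx W w x j)) x
        = ∑ A, (D A ∩ K).indicator (fun _ => F (ext A j)) x := by
    intro F K x
    rw [Finset.sum_eq_single (fun l : Fin (j + 1) => Sx W w x l)]
    · have h1 : x ∈ D (fun l : Fin (j + 1) => Sx W w x l) := (hDiff x _).2 rfl
      have h2 : ext (fun l : Fin (j + 1) => Sx W w x l) j = Sx W w x j := by simp [hext]
      by_cases hx : x ∈ K
      · rw [Set.indicator_of_mem hx, Set.indicator_of_mem (Set.mem_inter h1 hx), h2]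
      · rw [Set.indicator_of_notMem hx, Set.indicator_of_notMem (fun h => hx h.2)]
    · intro A _ hA
      rw [Set.indicator_of_notMem]
      rintro ⟨h, _⟩
      exact hA ((hDiff x A).1 h)
    · intro h; exact absurd (Finset.mem_univ _) h
  have dint : ∀ (F : Finset V → ℝ) (K : Set (Sym2 V × Fin r → ℝ)), MeasurableSet K →
      ∫ x, K.indicator (fun x => F (Sx W w x j)) x ∂(PP V r)
        = ∑ A, (PP V r).real (D A ∩ K) * F (ext A j) := by
    intro F K hK
    simp_rw [decomp F K]
    rw [integral_finsetSum]
    · refine Finset.sum_congr rfl fun A _ => ?_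
      rw [integral_indicator_const _ ((hDm A).inter hK), smul_eq_mul]
    · intro A _
      exact (integrable_const _).indicator ((hDm A).inter hK)
  have e2 := dint (fun B => (1 - τ) ^ (B.card * (Fintype.card V - B.card) * r) * g B)
    Set.univ MeasurableSet.univ
  simp only [Set.indicator_univ, Set.inter_univ] at e2
  rw [dint g H hHm, e2]
  apply Finset.sum_le_sum
  intro A _
  have := step_hist (r := r) W w hW j (ext A) hdis τ hτ
  calc _ ≤ _ := mul_le_mul_of_nonneg_right this (hg _)
    _ = _ := by ring

lemma w_mem_Sx (x : Sym2 V × Fin r → ℝ) (j : ℕ) : w ∈ Sx W w x j :=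
  Sx_mono W w x (Nat.zero_le j) (by simp [Sx])

lemma step_exp (hW : ∀ l, MeasurableSet (W l)) (j : ℕ)
    (hdis : ∀ l < j, Disjoint (W l) (W j)) (τ : ℝ) (hτ : unif01.real (W j) = τ)
    (h : ℕ → ℝ) (κ : ℝ)
    (hanti : ∀ s s', 1 ≤ s → s ≤ s' → s' ≤ Fintype.card V → h s' ≤ h s)
    (hn : h (Fintype.card V) = 0)
    (hk : ∀ s, 1 ≤ s → s < Fintype.card V → (1 - κ) * h s ≤
      (h s - h (s + 1)) * (1 - (1 - τ) ^ (s * (Fintype.card V - s) * r))) :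
    ∫ x, h (Sx W w x (j + 1)).card ∂(PP V r) ≤ κ * ∫ x, h (Sx W w x j).card ∂(PP V r) := by
  classical
  set n := Fintype.card V with hn'
  set g : Finset V → ℝ := fun A => if A.card < n ∧ 1 ≤ A.card then h A.card - h (A.card + 1) else 0
    with hgdef
  have hg : ∀ A, 0 ≤ g A := by
    intro A
    simp only [hgdef]
    split_ifs with hA
    · have := hanti A.card (A.card + 1) hA.2 (by omega) (by omega)
      linarith
    · exact le_rfl
  set H : Set (Sym2 V × Fin r → ℝ) := {x | Sx W w x (j + 1) = Sx W w x j} with hH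
  have hHm : MeasurableSet H := measurableSet_stay W w hW j
  have hcard1 : ∀ (x : Sym2 V × Fin r → ℝ) i, 1 ≤ (Sx W w x i).card := fun x i =>
    Finset.card_pos.2 ⟨w, w_mem_Sx W w x i⟩
  have hcardn : ∀ (x : Sym2 V × Fin r → ℝ) i, (Sx W w x i).card ≤ n := fun x i =>
    Finset.card_le_univ _
  have pw : ∀ x, h (Sx W w x (j + 1)).card ≤ (h (Sx W w x j).card - g (Sx W w x j))
      + H.indicator (fun x => g (Sx W w x j)) x := by
    intro x
    by_cases hx : x ∈ H
    · rw [Set.indicator_of_mem hx]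
      rw [show Sx W w x (j + 1) = Sx W w x j from hx]; linarith
    · rw [Set.indicator_of_notMem hx]
      have hss : Sx W w x j ⊂ Sx W w x (j + 1) :=
        lt_of_le_of_ne (Sx_mono W w x (Nat.le_succ j)) (fun h => hx h.symm)
      have hlt := Finset.card_lt_card hss
      have hle := hcardn x (j + 1)
      have h1 := hcard1 x j
      have : g (Sx W w x j) = h (Sx W w x j).card - h ((Sx W w x j).card + 1) := by
        simp only [hgdef]; rw [if_pos ⟨by omega, h1⟩]
      rw [this]
      have := hanti ((Sx W w x j).card + 1) _ (by omega) hlt hle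
      linarith
  have I1 := integrable_Sx_comp (r := r) W w hW (j + 1) (fun A => h A.card)
  have I2 := integrable_Sx_comp (r := r) W w hW j (fun A => h A.card - g A)
  have I3 := (integrable_Sx_comp (r := r) W w hW j g).indicator hHm
  have I4 := integrable_Sx_comp (r := r) W w hW j
    (fun A => (1 - τ) ^ (A.card * (n - A.card) * r) * g A)
  have I5 := integrable_Sx_comp (r := r) W w hW j (fun A => κ * h A.card)
  calc ∫ x, h (Sx W w x (j + 1)).card ∂(PP V r)
      ≤ ∫ x, ((h (Sx W w x j).card - g (Sx W w x j))
      + H.indicator (fun x => g (Sx W w x j)) x) ∂(PP V r) :=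
        integral_mono I1 (I2.add I3) pw
    _ = ∫ x, (h (Sx W w x j).card - g (Sx W w x j)) ∂(PP V r)
      + ∫ x, H.indicator (fun x => g (Sx W w x j)) x ∂(PP V r) := integral_add I2 I3
    _ ≤ ∫ x, (h (Sx W w x j).card - g (Sx W w x j)) ∂(PP V r)
      + ∫ x, (1 - τ) ^ ((Sx W w x j).card * (n - (Sx W w x j).card) * r)
          * g (Sx W w x j) ∂(PP V r) := by
        have := step_integral (r := r) W w hW j hdis τ hτ g hg
        linarith
    _ = ∫ x, ((h (Sx W w x j).card - g (Sx W w x j))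
      + (1 - τ) ^ ((Sx W w x j).card * (n - (Sx W w x j).card) * r)
          * g (Sx W w x j)) ∂(PP V r) := (integral_add I2 I4).symm
    _ ≤ ∫ x, κ * h (Sx W w x j).card ∂(PP V r) := by
        apply integral_mono (I2.add I4) I5
        intro x
        have h1 := hcard1 x j
        have hle := hcardn x j
        by_cases hlt : (Sx W w x j).card < n
        · have : g (Sx W w x j) = h (Sx W w x j).card - h ((Sx W w x j).card + 1) := by
            simp only [hgdef]; rw [if_pos ⟨by omega, h1⟩]
          have hk' := hk _ h1 hlt
          simp only [Pi.add_apply, this]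
          linarith
        · have hEq : (Sx W w x j).card = n := by omega
          have : g (Sx W w x j) = 0 := by
            simp only [hgdef]; rw [if_neg (by omega)]
          simp only [Pi.add_apply, this, hEq, hn]
          simp
    _ = κ * ∫ x, h (Sx W w x j).card ∂(PP V r) := integral_const_mul _ _

end

lemma hk_alg (n r s : ℕ) (τ δ : ℝ) (hnr : (2 : ℝ) ≤ n) (hs1 : (1 : ℝ) ≤ s) (hs2 : (s : ℝ) < n)
    (hsn : s ≤ n) (hτ0 : 0 < τ) (hτ1 : τ ≤ 1) (hδ : 0 < δ) (hδ1 : δ ≤ 1)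
    (hNt : r * (n : ℝ) ^ 2 * τ ≤ δ) :
    (1 - (1 - r * (n - 1) * τ / (1 + δ) ^ 2)) * (((n : ℝ) - s) / (s - (1 - δ))) ≤
      (((n : ℝ) - s) / (s - (1 - δ)) - ((n : ℝ) - (s + 1 : ℕ)) / ((s + 1 : ℕ) - (1 - δ)))
        * (1 - (1 - τ) ^ (s * (n - s) * r)) := by
  obtain ⟨a, ha⟩ : ∃ a, a = 1 - δ := ⟨_, rfl⟩
  rw [← ha]
  have hp : 0 < (s : ℝ) - a := by rw [ha]; linarith
  set m := s * (n - s) * r with hm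
  have hmr : (m : ℝ) = s * (n - s) * r := by
    rw [hm]; push_cast [Nat.cast_sub hsn]; ring
  have hmτ : m * τ ≤ δ := by
    refine le_trans ?_ hNt
    apply mul_le_mul_of_nonneg_right _ hτ0.le
    rw [hmr]
    have hr0 : (0 : ℝ) ≤ r := by positivity
    have : (s : ℝ) * (n - s) ≤ n ^ 2 := by nlinarith
    nlinarith
  have hm0 : 0 ≤ m * τ := by positivity
  have hρ : m * τ / (1 + δ) ≤ 1 - (1 - τ) ^ m := by
    have b1 : 1 + m * τ ≤ (1 + τ) ^ m := one_add_mul_le_pow (by linarith) m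
    have b2 : (1 - τ) ^ m * (1 + τ) ^ m ≤ 1 := by
      rw [← mul_pow]
      exact pow_le_one₀ (by nlinarith) (by nlinarith)
    have b3 : 0 ≤ (1 - τ) ^ m := pow_nonneg (by linarith) _
    have b4 : (1 - τ) ^ m * (1 + m * τ) ≤ 1 := le_trans (mul_le_mul_of_nonneg_left b1 b3) b2
    have b5 : (1 - τ) ^ m ≤ 1 := pow_le_one₀ (by linarith) (by linarith)
    rw [div_le_iff₀ (by linarith)]
    nlinarith
  have hdiff : (((n : ℝ) - s) / (s - a) - ((n : ℝ) - (s + 1 : ℕ)) / ((s + 1 : ℕ) - a)) = (n - a) / ((s - a) * (s + 1 - a)) := by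
    have : (s : ℝ) + 1 - a ≠ 0 := by linarith
    have := hp.ne'
    push_cast
    field_simp
    ring
  have hd0 : 0 ≤ ((n : ℝ) - a) / ((s - a) * (s + 1 - a)) := by
    apply div_nonneg
    · rw [ha]; linarith
    · apply mul_nonneg hp.le; linarith
  rw [hdiff]
  refine le_trans ?_ (mul_le_mul_of_nonneg_left hρ hd0)
  rw [hmr]
  have e1 : (1 - (1 - r * (n - 1) * τ / (1 + δ) ^ 2)) * ((n - s) / (s - a))
      = (r * τ * (n - s) / ((s - a) * (1 + δ))) * ((n - 1) / (1 + δ)) := by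
    have := hp.ne'
    have : 1 + δ ≠ 0 := by linarith
    field_simp
    ring
  have e2 : (n - a) / ((s - a) * (s + 1 - a)) * (s * (n - s) * r * τ / (1 + δ))
      = (r * τ * (n - s) / ((s - a) * (1 + δ))) * ((n - a) * s / (s + 1 - a)) := by
    have := hp.ne'
    have : 1 + δ ≠ 0 := by linarith
    have : (s : ℝ) + 1 - a ≠ 0 := by linarith
    field_simp
  rw [e1, e2]
  apply mul_le_mul_of_nonneg_left
  · rw [div_le_div_iff₀ (by linarith) (by linarith), ha]
    have q1 : 0 ≤ ((n : ℝ) - 1) * (δ * (s - 1)) :=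
      mul_nonneg (by linarith) (mul_nonneg hδ.le (by linarith))
    have q2 : 0 ≤ δ * (s * (1 + δ)) := by positivity
    nlinarith
  · apply div_nonneg
    · have : (0 : ℝ) ≤ n - s := by linarith
      positivity
    · apply mul_nonneg hp.le; linarith

lemma growth_aux {V : Type*} [Fintype V] [DecidableEq V] (r : ℕ) (w : V) (t δ ε : ℝ) (N : ℕ)
    (hN : 0 < N) (hn2 : 2 ≤ Fintype.card V)
    (ht0 : 0 < t) (ht1 : t ≤ 1) (hδ : 0 < δ) (hδ1 : δ ≤ 1) (hε : 0 < ε)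
    (hNt : r * (Fintype.card V : ℝ) ^ 2 * (t / N) ≤ δ) :
    (PP V r).real {x | ((Sx (fun l : ℕ => Ioc (t - (l + 1) * (t / N)) (t - l * (t / N))) w x N).card : ℝ)
        ≤ (1 - ε) * Fintype.card V}
      ≤ 1 / ε * ((Fintype.card V - 1) / δ
        * Real.exp (-(r * t * (Fintype.card V - 1) / (1 + δ) ^ 2))) := by
  classical
  set n := Fintype.card V with hndef
  set τ := t / N with hτdef
  have hNr : (0 : ℝ) < N := by exact_mod_cast hN
  have hnr : (2 : ℝ) ≤ n := by exact_mod_cast hn2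
  have hτ0 : 0 < τ := by positivity
  have hNτ : N * τ = t := by rw [hτdef]; field_simp
  have hτ1 : τ ≤ 1 := by
    have : (1 : ℝ) ≤ N := by exact_mod_cast hN
    nlinarith
  set W : ℕ → Set ℝ := fun l : ℕ => Ioc (t - (l + 1) * τ) (t - l * τ) with hWdef
  have hW : ∀ l, MeasurableSet (W l) := fun l => measurableSet_Ioc
  have hdis : ∀ j, ∀ l < j, Disjoint (W l) (W j) := by
    intro j l hl
    rw [Set.disjoint_left]
    intro y h1 h2
    have : (l : ℝ) + 1 ≤ j := by exact_mod_cast hl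
    have h1' : t - (l + 1) * τ < y := h1.1
    have h2' : y ≤ t - j * τ := h2.2
    nlinarith
  have hWu : ∀ j < N, unif01.real (W j) = τ := by
    intro j hj
    have hj' : (j : ℝ) + 1 ≤ N := by exact_mod_cast hj
    have hj0 : (0 : ℝ) ≤ j := by positivity
    rw [hWdef]
    simp only
    rw [unif_Ioc]
    · ring
    · nlinarith
    · nlinarith
    · nlinarith
  set a : ℝ := 1 - δ with ha
  set h : ℕ → ℝ := fun s => ((n : ℝ) - s) / (s - a) with hh
  set κ : ℝ := 1 - r * (n - 1) * τ / (1 + δ) ^ 2 with hκ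
  have hpos : ∀ s : ℕ, 1 ≤ s → 0 < (s : ℝ) - a := by
    intro s hs
    have : (1 : ℝ) ≤ s := by exact_mod_cast hs
    rw [ha]; linarith
  have hanti : ∀ s s', 1 ≤ s → s ≤ s' → s' ≤ n → h s' ≤ h s := by
    intro s s' hs hss hsn
    have h1 : (s : ℝ) ≤ s' := by exact_mod_cast hss
    have h2 : (s' : ℝ) ≤ n := by exact_mod_cast hsn
    have := hpos s hs
    simp only [hh]
    exact div_le_div₀ (by linarith) (by linarith) this (by linarith)
  have hnz : h n = 0 := by simp [hh]
  have hk : ∀ s, 1 ≤ s → s < n → (1 - κ) * h s ≤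
      (h s - h (s + 1)) * (1 - (1 - τ) ^ (s * (n - s) * r)) := by
    intro s hs hsn
    have hs1 : (1 : ℝ) ≤ s := by exact_mod_cast hs
    have hs2 : (s : ℝ) < n := by exact_mod_cast hsn
    simpa only [hh, ha, hκ] using hk_alg n r s τ δ hnr hs1 hs2 hsn.le hτ0 hτ1 hδ hδ1 hNt
  have hκ0 : 0 ≤ κ := by
    rw [hκ, sub_nonneg, div_le_one (by positivity)]
    have hr0 : (0 : ℝ) ≤ r * τ := by positivity
    have : r * τ * (n - 1) ≤ r * τ * n ^ 2 := by
      apply mul_le_mul_of_nonneg_left _ hr0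
      nlinarith
    nlinarith
  have hiter : ∀ j ≤ N, ∫ x, h (Sx W w x j).card ∂(PP V r) ≤ κ ^ j * ((n - 1) / δ) := by
    intro j
    induction j with
    | zero =>
      intro _
      simp [Sx, hh, ha]
    | succ j ih =>
      intro hj
      have := step_exp (r := r) W w hW j (hdis j) τ (hWu j (by omega)) h κ hanti hnz hk
      calc _ ≤ _ := this
        _ ≤ κ * (κ ^ j * ((n - 1) / δ)) := mul_le_mul_of_nonneg_left (ih (by omega)) hκ0
        _ = _ := by ring
  have hexp : κ ^ N ≤ Real.exp (-(r * t * (n - 1) / (1 + δ) ^ 2)) := by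
    have : κ ≤ Real.exp (-(r * (n - 1) * τ / (1 + δ) ^ 2)) := by
      have := Real.add_one_le_exp (-(r * (n - 1) * τ / (1 + δ) ^ 2))
      rw [hκ]; linarith
    calc κ ^ N ≤ _ := pow_le_pow_left₀ hκ0 this N
      _ = _ := by
        rw [← Real.exp_nat_mul, ← hNτ]; congr 1; ring
  have hmk : ε * (PP V r).real {x | ε ≤ h (Sx W w x N).card}
      ≤ ∫ x, h (Sx W w x N).card ∂(PP V r) := by
    apply mul_meas_ge_le_integral_of_nonneg
    · apply Eventually.of_forall
      intro x
      have h1 : 1 ≤ (Sx W w x N).card := Finset.card_pos.2 ⟨w, w_mem_Sx W w x N⟩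
      have h2 : (Sx W w x N).card ≤ n := Finset.card_le_univ _
      have := hanti _ _ h1 h2 le_rfl
      rw [hnz] at this
      exact this
    · exact integrable_Sx_comp W w hW N (fun A => h A.card)
  have hsub : {x : Sym2 V × Fin r → ℝ | ((Sx W w x N).card : ℝ) ≤ (1 - ε) * n}
      ⊆ {x | ε ≤ h (Sx W w x N).card} := by
    intro x hx
    have hx : ((Sx W w x N).card : ℝ) ≤ (1 - ε) * n := hx
    have h1 : 1 ≤ (Sx W w x N).card := Finset.card_pos.2 ⟨w, w_mem_Sx W w x N⟩
    have hp := hpos _ h1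
    have h2 : (Sx W w x N).card ≤ n := Finset.card_le_univ _
    have h2' : ((Sx W w x N).card : ℝ) ≤ n := by exact_mod_cast h2
    change ε ≤ (n - ((Sx W w x N).card : ℝ)) / ((Sx W w x N).card - a)
    rw [le_div_iff₀ hp]
    have : 0 ≤ a := by rw [ha]; linarith
    nlinarith
  calc _ ≤ (PP V r).real {x | ε ≤ h (Sx W w x N).card} := measureReal_mono hsub
    _ ≤ 1 / ε * (κ ^ N * ((n - 1) / δ)) := by
      rw [div_mul_eq_mul_div, one_mul, le_div_iff₀ hε, mul_comm]
      exact hmk.trans (hiter N le_rfl)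
    _ ≤ _ := by
      apply mul_le_mul_of_nonneg_left _ (by positivity)
      rw [mul_comm]
      apply mul_le_mul_of_nonneg_left hexp
      apply div_nonneg (by linarith) hδ.le



lemma path_of_Sx {V : Type*} [Fintype V] [DecidableEq V] {r : ℕ} (t τ : ℝ) (hτ : 0 ≤ τ) (w : V)
    (x : Sym2 V × Fin r → ℝ) (j : ℕ) (v : V)
    (hv : v ∈ Sx (fun l : ℕ => Ioc (t - (l + 1) * τ) (t - l * τ)) w x j) :
    v = w ∨ ∃ (k : ℕ) (f : ℕ → V) (ts : ℕ → ℝ), 0 < k ∧ f 0 = v ∧ f k = w ∧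
      (∀ i < k, ts i ∈ toTGraph (GG x) s(f i, f (i + 1))) ∧
      (∀ i j, i < j → j < k → ts i < ts j) ∧ (∀ i < k, ts i ∈ Ioc (t - j * τ) t) := by
  induction j generalizing v with
  | zero =>
    left
    simpa [Sx] using hv
  | succ j ih =>
    have key : ∀ u ∈ Sx (fun l : ℕ => Ioc (t - (l + 1) * τ) (t - l * τ)) w x j,
        u = w ∨ ∃ (k : ℕ) (f : ℕ → V) (ts : ℕ → ℝ), 0 < k ∧ f 0 = u ∧ f k = w ∧
      (∀ i < k, ts i ∈ toTGraph (GG x) s(f i, f (i + 1))) ∧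
      (∀ i j, i < j → j < k → ts i < ts j) ∧ (∀ i < k, ts i ∈ Ioc (t - j * τ) t) := fun u hu => ih u hu
    have hjt : t - (j + 1 : ℕ) * τ ≤ t - j * τ := by push_cast; nlinarith
    have hj0 : 0 ≤ j * τ := by positivity
    by_cases hvj : v ∈ Sx (fun l : ℕ => Ioc (t - (l + 1) * τ) (t - l * τ)) w x j
    · rcases key v hvj with h | ⟨k, f, ts, h1, h2, h3, h4, h5, h6⟩
      · exact Or.inl h
      · exact Or.inr ⟨k, f, ts, h1, h2, h3, h4, h5,
          fun i hi => ⟨hjt.trans_lt (h6 i hi).1, (h6 i hi).2⟩⟩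
    · rcases (mem_Sx_succ _ w x j v).1 hv with h | ⟨u, hu, i, hi⟩
      · exact absurd h hvj
      have huv : v ≠ u := fun h => hvj (h ▸ hu)
      have hlab : x (s(u, v), i) ∈ toTGraph (GG x) s(v, u) := by
        rw [mem_toTGraph]
        exact ⟨huv, i, by rw [Sym2.eq_swap]⟩
      have hi1 : t - (j + 1 : ℕ) * τ < x (s(u, v), i) := by have := hi.1; push_cast; exact this
      have hi2 : x (s(u, v), i) ≤ t - j * τ := hi.2
      right
      rcases key u hu with h | ⟨k, f, ts, h1, h2, h3, h4, h5, h6⟩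
      · refine ⟨1, fun m => if m = 0 then v else u, fun _ => x (s(u, v), i), by norm_num, by simp,
          by simp [h], ?_, ?_, ?_⟩
        · intro m hm
          have : m = 0 := by omega
          subst this
          simpa using hlab
        · intro a b h1 h2; omega
        · intro m _
          exact ⟨hi1, by linarith⟩
      · refine ⟨k + 1, fun m => if m = 0 then v else f (m - 1),
          fun m => if m = 0 then x (s(u, v), i) else ts (m - 1), by omega, by simp, by simp [h3],
          ?_, ?_, ?_⟩
        · intro m hm
          rcases m with _ | m
          · simpa [h2] using hlab
          · simpa using h4 m (by omega)
        · intro a b hab hb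
          rcases b with _ | b
          · omega
          rcases a with _ | a
          · simp only [if_true, Nat.add_eq_zero_iff, one_ne_zero, and_false, if_false,
              Nat.add_sub_cancel]
            exact hi2.trans_lt (h6 b (by omega)).1
          · simpa using h5 a b (by omega) (by omega)
        · intro m hm
          rcases m with _ | m
          · simp only [if_true]
            exact ⟨hi1, by linarith⟩
          · simp only [Nat.add_eq_zero_iff, one_ne_zero, and_false, if_false, Nat.add_sub_cancel]
            have := h6 m (by omega)
            exact ⟨hjt.trans_lt this.1, this.2⟩

lemma ball_of_Sx {V : Type*} [Fintype V] [DecidableEq V] {r : ℕ} (t τ : ℝ) (hτ : 0 ≤ τ) (w : V)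
    (x : Sym2 V × Fin r → ℝ) (j : ℕ) (v : V) (S : Set V) (hS : v ∈ S)
    (hv : v ∈ Sx (fun l : ℕ => Ioc (t - (l + 1) * τ) (t - l * τ)) w x j) :
    w ∈ ball (toTGraph (GG x)) S t := by
  rcases path_of_Sx t τ hτ w x j v hv with h | ⟨k, f, ts, h1, h2, h3, h4, h5, h6⟩
  · exact Or.inl (h ▸ hS)
  · exact Or.inr ⟨k, f, ts, h1, h2 ▸ hS, h3, h4, h5, (h6 (k - 1) (by omega)).2⟩

/-- If the ball of `S` is small then many pairs have no early label. -/
lemma static_det {V : Type*} [Fintype V] [DecidableEq V] {r : ℕ} (t : ℝ)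
    (x : Sym2 V × Fin r → ℝ) (S : Finset V) (h2 : 2 * S.card ≤ Fintype.card V)
    (hb : (ball (toTGraph (GG x)) (S : Set V) t).ncard < 2 * S.card) :
    ∃ T : Finset V, T.card = S.card ∧ ∀ c ∈ cross r S (S ∪ T)ᶜ, x c ∈ Ioi t := by
  classical
  set B := (ball (toTGraph (GG x)) (S : Set V) t).toFinset with hB
  have hBc : B.card < 2 * S.card := by rwa [Set.ncard_eq_toFinset_card'] at hb
  have hSB : S ⊆ B := by
    intro v hv
    rw [hB, Set.mem_toFinset]
    exact Or.inl hv
  have h1 : (B \ S).card ≤ S.card := by rw [Finset.card_sdiff_of_subset hSB]; omega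
  obtain ⟨T, hT1, hT2⟩ := Finset.exists_superset_card_eq h1 (by omega)
  refine ⟨T, hT2, ?_⟩
  intro c hc
  obtain ⟨u, hu, v, hv, hcv⟩ := mem_cross.1 hc
  by_contra hlt
  simp only [Set.mem_Ioi, not_lt] at hlt
  rw [Finset.mem_compl, Finset.mem_union, not_or] at hv
  apply hv.2
  apply hT1
  rw [Finset.mem_sdiff]
  refine ⟨?_, hv.1⟩
  rw [hB, Set.mem_toFinset]
  have huv : u ≠ v := fun h => hv.1 (h ▸ hu)
  refine Or.inr ⟨1, fun m => if m = 0 then u else v, fun _ => x c, by norm_num, by simpa using hu,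
    by simp, ?_, ?_, hlt⟩
  · intro m hm
    have : m = 0 := by omega
    subst this
    simp only [if_true, zero_add, one_ne_zero, if_false]
    rw [mem_toTGraph]
    refine ⟨huv, c.2, ?_⟩
    rw [← hcv]
  · intro a b h1 h2; omega

/-- Static bad event. -/
def badS (V : Type*) [Fintype V] [DecidableEq V] (r : ℕ) (t : ℝ) (s : ℕ) :
    Set (Sym2 V × Fin r → ℝ) :=
  ⋃ p ∈ Finset.powersetCard s (Finset.univ : Finset V) ×ˢ
      Finset.powersetCard s (Finset.univ : Finset V),
    {x | ∀ c ∈ cross r p.1 (p.1 ∪ p.2)ᶜ, x c ∈ Ioi t}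

lemma badS_prob {V : Type*} [Fintype V] [DecidableEq V] (r : ℕ) (t ε : ℝ) (s : ℕ)
    (h0 : 0 ≤ t) (h1 : t ≤ 1) (hs : (s : ℝ) ≤ ε * Fintype.card V) :
    (PP V r).real (badS V r t s) ≤
      ((Fintype.card V : ℝ) ^ 2 * Real.exp (-(t * r * (Fintype.card V * (1 - 2 * ε))))) ^ s := by
  set n := Fintype.card V with hn
  have hbound : ∀ p ∈ Finset.powersetCard s (Finset.univ : Finset V) ×ˢ
      Finset.powersetCard s (Finset.univ : Finset V),
      (PP V r).real {x | ∀ c ∈ cross r p.1 (p.1 ∪ p.2)ᶜ, x c ∈ Ioi t} ≤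
        Real.exp (-(t * r * (n * (1 - 2 * ε)))) ^ s := by
    intro p hp
    rw [Finset.mem_product, Finset.mem_powersetCard, Finset.mem_powersetCard] at hp
    rw [PP_box_finset, unif_Ioi h0 h1, card_cross]
    · have hU : (n : ℝ) - 2 * s ≤ (((p.1 ∪ p.2)ᶜ : Finset V).card : ℝ) := by
        have e1 : ((p.1 ∪ p.2)ᶜ : Finset V).card + (p.1 ∪ p.2).card = n := by
          rw [Finset.card_compl]
          have := Finset.card_le_univ (p.1 ∪ p.2)
          omega
        have e2 := Finset.card_union_le p.1 p.2
        have e3 : n ≤ ((p.1 ∪ p.2)ᶜ : Finset V).card + 2 * s := by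
          have := hp.1.2; have := hp.2.2; omega
        have : (n : ℝ) ≤ ((p.1 ∪ p.2)ᶜ : Finset V).card + 2 * s := by exact_mod_cast e3
        linarith
      have e4 : 1 - t ≤ Real.exp (-t) := by have := Real.add_one_le_exp (-t); linarith
      refine (pow_le_pow_left₀ (by linarith) e4 _).trans ?_
      rw [← Real.exp_nat_mul, ← Real.exp_nat_mul, Real.exp_le_exp, hp.1.2]
      push_cast
      have e5 : (n : ℝ) * (1 - 2 * ε) ≤ (((p.1 ∪ p.2)ᶜ : Finset V).card : ℝ) := by nlinarith
      have := mul_le_mul_of_nonneg_left e5 (show 0 ≤ (s : ℝ) * r * t by positivity)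
      nlinarith
    · rw [Finset.disjoint_left]
      intro a ha
      simp [ha]
  refine (measureReal_biUnion_finset_le _ _).trans ((Finset.sum_le_sum hbound).trans ?_)
  rw [Finset.sum_const, Finset.card_product, Finset.card_powersetCard, Finset.card_univ, ← hn,
    nsmul_eq_mul, mul_pow]
  have hc : ((n.choose s : ℕ) : ℝ) ≤ (n : ℝ) ^ s := by exact_mod_cast Nat.choose_le_pow n s
  have : ((n.choose s * n.choose s : ℕ) : ℝ) ≤ ((n : ℝ) ^ 2) ^ s := by
    push_cast
    rw [← pow_mul, mul_comm 2 s, pow_mul, sq]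
    gcongr
  gcongr

lemma geom_le (q : ℝ) (hq0 : 0 ≤ q) (hq : q ≤ 1 / 2) (M : ℕ) :
    ∑ s ∈ Finset.Icc 1 M, q ^ s ≤ 2 * q := by
  have : ∑ s ∈ Finset.Icc 1 M, q ^ s ≤ 2 * q - 2 * q ^ (M + 1) := by
    induction M with
    | zero => simp
    | succ M ih =>
      rw [Finset.sum_Icc_succ_top (by omega)]
      have : q ^ (M + 1 + 1) = q ^ (M + 1) * q := pow_succ _ _
      have h0 : 0 ≤ q ^ (M + 1) := by positivity
      nlinarith
  have h0 : 0 ≤ q ^ (M + 1) := by positivity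
  linarith

lemma upper_prob {V : Type*} [Fintype V] [DecidableEq V] (r : ℕ) (t δ ε : ℝ)
    (hn2 : 2 ≤ Fintype.card V) (ht0 : 0 < t) (ht1 : t ≤ 1) (hδ : 0 < δ) (hδ1 : δ ≤ 1)
    (hε : 0 < ε)
    (hq : (Fintype.card V : ℝ) ^ 2 * Real.exp (-(t * r * (Fintype.card V * (1 - 2 * ε)))) ≤ 1 / 2) :
    (PP V r).real {x | ¬ doubleAll (toTGraph (GG x)) ≤ ENNReal.ofReal t} ≤
      Fintype.card V * (1 / ε * ((Fintype.card V - 1) / δ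
        * Real.exp (-(r * t * (Fintype.card V - 1) / (1 + δ) ^ 2)))) +
      2 * ((Fintype.card V : ℝ) ^ 2 * Real.exp (-(t * r * (Fintype.card V * (1 - 2 * ε))))) := by
  set n := Fintype.card V with hn
  obtain ⟨N, hN⟩ := exists_nat_gt (r * (n : ℝ) ^ 2 * t / δ)
  have hNp : (0 : ℝ) < N := lt_of_le_of_lt (by positivity) hN
  have hNt : r * (n : ℝ) ^ 2 * (t / N) ≤ δ := by
    rw [← mul_div_assoc, div_le_iff₀ hNp]
    rw [div_lt_iff₀ hδ] at hN
    linarith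
  set M := ⌊ε * n⌋₊ with hM
  set E1 : V → Set (Sym2 V × Fin r → ℝ) := fun w =>
    {x | ((Sx (fun l : ℕ => Ioc (t - (l + 1) * (t / N)) (t - l * (t / N))) w x N).card : ℝ)
        ≤ (1 - ε) * n} with hE1
  have hsub : {x : Sym2 V × Fin r → ℝ | ¬ doubleAll (toTGraph (GG x)) ≤ ENNReal.ofReal t} ⊆
      (⋃ w ∈ (Finset.univ : Finset V), E1 w) ∪ ⋃ s ∈ Finset.Icc 1 M, badS V r t s := by
    intro x hx
    by_contra hnot
    apply hx
    rw [Set.mem_union, not_or] at hnot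
    obtain ⟨hn1, hn2'⟩ := hnot
    simp only [Set.mem_iUnion, not_exists] at hn1 hn2'
    refine iSup₂_le fun S hS => ?_
    refine iInf₂_le_of_le t ⟨ht0.le, ?_⟩ le_rfl
    by_contra hlt
    rw [not_le] at hlt
    classical
    have hSn : S.ncard = S.toFinset.card := Set.ncard_eq_toFinset_card' S
    have hSpos : 1 ≤ S.toFinset.card := by
      rw [Nat.one_le_iff_ne_zero, ← hSn]
      exact ((Set.ncard_pos (Set.toFinite S)).2 hS.1).ne'
    by_cases hsm : S.toFinset.card ≤ M
    · obtain ⟨T, hT1, hT2⟩ := static_det (r := r) t x S.toFinset (by rw [← hSn]; exact hS.2)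
        (by rw [Set.coe_toFinset, ← hSn]; exact hlt)
      apply hn2' S.toFinset.card (Finset.mem_Icc.2 ⟨hSpos, hsm⟩)
      unfold badS
      simp only [Set.mem_iUnion]
      refine ⟨(S.toFinset, T), ?_, hT2⟩
      rw [Finset.mem_product, Finset.mem_powersetCard, Finset.mem_powersetCard]
      exact ⟨⟨Finset.subset_univ _, rfl⟩, Finset.subset_univ _, hT1⟩
    · have hall : ball (toTGraph (GG x)) S t = Set.univ := by
        apply Set.eq_univ_of_forall
        intro w
        have hw := hn1 w (Finset.mem_univ w)
        simp only [hE1, Set.mem_ofPred_eq, not_le] at hw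
        have hSe : ε * n < S.toFinset.card := (Nat.floor_lt (by positivity)).1 (not_le.1 hsm)
        have hnd : ¬ Disjoint S.toFinset
            (Sx (fun l : ℕ => Ioc (t - (l + 1) * (t / N)) (t - l * (t / N))) w x N) := by
          intro hd
          have h1 := Finset.card_union_of_disjoint hd
          have h2 := Finset.card_le_univ (S.toFinset ∪
            (Sx (fun l : ℕ => Ioc (t - (l + 1) * (t / N)) (t - l * (t / N))) w x N))
          rw [h1] at h2
          have h3 : ((S.toFinset.card : ℝ) + ((Sx (fun l : ℕ => Ioc (t - (l + 1) * (t / N))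
            (t - l * (t / N))) w x N).card : ℝ)) ≤ n := by exact_mod_cast h2
          linarith
        rw [Finset.not_disjoint_iff] at hnd
        obtain ⟨v, hv1, hv2⟩ := hnd
        exact ball_of_Sx t (t / N) (by positivity) w x N v S (by simpa using hv1) hv2
      rw [hall, Set.ncard_univ, Nat.card_eq_fintype_card] at hlt
      have := hS.2
      omega
  refine (measureReal_mono hsub (measure_ne_top _ _)).trans ((measureReal_union_le _ _).trans ?_)
  apply add_le_add
  · refine (measureReal_biUnion_finset_le _ _).trans ?_
    refine (Finset.sum_le_sum fun w _ =>
      growth_aux r w t δ ε N (by exact_mod_cast hNp) hn2 ht0 ht1 hδ hδ1 hε hNt).trans ?_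
    rw [Finset.sum_const, Finset.card_univ, nsmul_eq_mul]
  · refine (measureReal_biUnion_finset_le _ _).trans ?_
    refine (Finset.sum_le_sum fun s hs => badS_prob r t ε s ht0.le ht1 ?_).trans
      (geom_le _ (by positivity) hq M)
    exact (Nat.le_floor_iff (by positivity)).1 (Finset.mem_Icc.1 hs).2



lemma tendsto_log_exp (c : ℝ) (hc : 0 < c) :
    Tendsto (fun n : ℕ => Real.exp (-(c * Real.log n))) atTop (𝓝 0) := by
  apply Real.tendsto_exp_neg_atTop_nhds_zero.comp
  exact (Real.tendsto_log_atTop.comp tendsto_natCast_atTop_atTop).const_mul_atTop hc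

lemma tendsto_log_div : Tendsto (fun n : ℕ => Real.log n / (n : ℝ)) atTop (𝓝 0) := by
  have := Real.isLittleO_log_id_atTop.tendsto_div_nhds_zero
  exact this.comp tendsto_natCast_atTop_atTop

lemma upper_bound (r n : ℕ) (hr : 0 < r) (α : ℝ) (hα : 0 < α) (hα1 : α ≤ 1) (hn : 2 ≤ n)
    (ht1 : (2 + α) * Real.log n / (r * n) ≤ 1)
    (hq : Real.exp (-(α / 2 * Real.log n)) ≤ 1 / 2) :
    (PP (Fin n) r).real {x | ¬ doubleAll (toTGraph (GG x)) ≤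
        ENNReal.ofReal ((2 + α) * Real.log n / (r * n))} ≤
      (144 / α ^ 2 * Real.exp 3 + 2) * Real.exp (-(α / 2 * Real.log n)) := by
  have hnr : (2 : ℝ) ≤ n := by exact_mod_cast hn
  have hrr : (0 : ℝ) < r := by exact_mod_cast hr
  obtain ⟨L, hL⟩ : ∃ L, L = Real.log n := ⟨_, rfl⟩
  have hL0 : 0 < L := by rw [hL]; exact Real.log_pos (by linarith)
  have hLn : L ≤ n := by rw [hL]; have := Real.log_le_sub_one_of_pos (show (0 : ℝ) < n by linarith); linarith
  have hexpL : (n : ℝ) = Real.exp L := by rw [hL, Real.exp_log (by linarith)]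
  rw [← hL] at ht1 hq ⊢
  set t := (2 + α) * L / (r * n) with ht
  have htrn : t * r * n = (2 + α) * L := by rw [ht]; field_simp
  have ht0 : 0 < t := by rw [ht]; positivity
  have hq2 : (n : ℝ) ^ 2 * Real.exp (-(t * r * (n * (1 - 2 * (α / 12))))) ≤
      Real.exp (-(α / 2 * L)) := by
    rw [show t * r * (n * (1 - 2 * (α / 12))) = t * r * n * (1 - 2 * (α / 12)) by ring, htrn]
    rw [hexpL, ← Real.exp_nat_mul, ← Real.exp_add, Real.exp_le_exp]
    push_cast
    nlinarith [mul_nonneg (mul_nonneg hα.le (sub_nonneg.2 hα1)) hL0.le]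
  have h1 : (n : ℝ) * (1 / (α / 12) * ((n - 1) / (α / 12)
        * Real.exp (-(r * t * (n - 1) / (1 + α / 12) ^ 2)))) ≤
        144 / α ^ 2 * Real.exp 3 * Real.exp (-(α / 2 * L)) := by
    have e1 : Real.exp (-(r * t * (n - 1) / (1 + α / 12) ^ 2)) ≤
        Real.exp (3 - (2 + α / 2) * L) := by
      rw [Real.exp_le_exp]
      have e2 : r * t * ((n : ℝ) - 1) = (2 + α) * L * (1 - 1 / n) := by
        rw [← htrn]; field_simp
      have e3 : (2 + α / 2) * (1 + α / 12) ^ 2 ≤ 2 + α := by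
        have a2 : α ^ 2 ≤ α := by nlinarith
        have a3 : α ^ 3 ≤ α := by nlinarith
        nlinarith
      have e4 : L * (1 - 1 / n) = L - L / n := by ring
      have e5 : L / n ≤ 1 := by rw [div_le_one (by linarith)]; exact hLn
      have e6 : 0 ≤ L * (1 - 1 / n) := by
        rw [e4, sub_nonneg]; exact div_le_self hL0.le (by linarith)
      have e7 : (2 + α / 2) * (L * (1 - 1 / n)) ≤ r * t * (n - 1) / (1 + α / 12) ^ 2 := by
        rw [le_div_iff₀ (by positivity), e2]
        nlinarith [mul_le_mul_of_nonneg_right e3 e6]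
      rw [e4] at e7
      have : 0 ≤ L / n := by positivity
      nlinarith
    calc (n : ℝ) * (1 / (α / 12) * ((n - 1) / (α / 12)
        * Real.exp (-(r * t * (n - 1) / (1 + α / 12) ^ 2))))
        = 144 / α ^ 2 * (n * (n - 1)) * Real.exp (-(r * t * (n - 1) / (1 + α / 12) ^ 2)) := by
          field_simp; ring
      _ ≤ 144 / α ^ 2 * (n * n) * Real.exp (3 - (2 + α / 2) * L) := by
          have h0 : 0 ≤ (n : ℝ) - 1 := by linarith
          gcongr
          linarith
      _ = 144 / α ^ 2 * Real.exp 3 * Real.exp (-(α / 2 * L)) := by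
          rw [hexpL, mul_assoc, mul_assoc, ← Real.exp_add, ← Real.exp_add, mul_assoc (144 / α ^ 2),
            ← Real.exp_add]
          ring_nf
  have := upper_prob (V := Fin n) r t (α / 12) (α / 12) (by simpa using hn) ht0 ht1 (by positivity)
    (by linarith) (by positivity) (by simpa using hq2.trans hq)
  simp only [Fintype.card_fin] at this
  refine this.trans ?_
  rw [add_mul]
  gcongr

lemma upper_tendsto (r : ℕ) (hr : 0 < r) (α : ℝ) (hα : 0 < α) (hα1 : α ≤ 1) :
    Tendsto (fun n : ℕ => (PP (Fin n) r).real {x | ¬ doubleAll (toTGraph (GG x)) ≤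
        ENNReal.ofReal ((2 + α) * Real.log n / (r * n))}) atTop (𝓝 0) := by
  have h1 := tendsto_log_exp (α / 2) (by positivity)
  have h2 := h1.const_mul (144 / α ^ 2 * Real.exp 3 + 2)
  rw [mul_zero] at h2
  have h3 : Tendsto (fun n : ℕ => (2 + α) * Real.log n / (r * n)) atTop (𝓝 0) := by
    have := tendsto_log_div.const_mul ((2 + α) / r)
    rw [mul_zero] at this
    refine this.congr fun n => ?_
    rw [div_mul_div_comm]
  refine tendsto_of_tendsto_of_tendsto_of_le_of_le' tendsto_const_nhds h2
    (Eventually.of_forall fun n => measureReal_nonneg) ?_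
  filter_upwards [eventually_ge_atTop 2, h3.eventually_le_const (show (0 : ℝ) < 1 by norm_num),
    h1.eventually_le_const (show (0 : ℝ) < 1 / 2 by norm_num)] with n hn ht1 hq
  exact upper_bound r n hr α hα hα1 hn ht1 hq



lemma measurableSet_simplex {ι : Type*} (k : ℕ) (c : Fin k → ι) (a : ℝ) :
    MeasurableSet {y : ι → ℝ | StrictMono (fun i => y (c i)) ∧ ∀ i, y (c i) ≤ a} := by
  have : {y : ι → ℝ | StrictMono (fun i => y (c i)) ∧ ∀ i, y (c i) ≤ a} =
      (⋂ i, ⋂ j, ⋂ _ : i < j, {y : ι → ℝ | y (c i) < y (c j)}) ∩ ⋂ i, {y : ι → ℝ | y (c i) ≤ a} := by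
    ext y
    simp [StrictMono]
  rw [this]
  refine MeasurableSet.inter ?_ ?_
  · exact MeasurableSet.iInter fun i => MeasurableSet.iInter fun j => MeasurableSet.iInter fun _ =>
      measurableSet_lt (measurable_pi_apply _) (measurable_pi_apply _)
  · exact MeasurableSet.iInter fun i => measurableSet_le (measurable_pi_apply _) measurable_const

lemma simplex_prob (k : ℕ) (a : ℝ) (h0 : 0 ≤ a) (h1 : a ≤ 1) :
    (Measure.pi fun _ : Fin k => unif01).real {y | StrictMono (fun i => y i) ∧ ∀ i, y i ≤ a} ≤
      a ^ k / k.factorial := by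
  set μ := Measure.pi fun _ : Fin k => unif01 with hμ
  set D : Equiv.Perm (Fin k) → Set (Fin k → ℝ) := fun σ =>
    {y | StrictMono (fun i => y (σ i)) ∧ ∀ i, y (σ i) ≤ a} with hD
  have hDm : ∀ σ, MeasurableSet (D σ) := fun σ => measurableSet_simplex k σ a
  have hD0 : D 1 = {y | StrictMono (fun i => y i) ∧ ∀ i, y i ≤ a} := rfl
  have hDe : ∀ σ, μ.real (D σ) = μ.real (D 1) := by
    intro σ
    have h := map_comp_inj (ι := Fin k) (κ := Fin k) σ σ.injective
    have hm : Measurable (fun (x : Fin k → ℝ) i => x (σ i)) :=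
      measurable_pi_lambda _ fun i => measurable_pi_apply _
    rw [← hμ] at h
    conv_rhs => rw [← h]
    rw [map_measureReal_apply hm (hDm 1)]
    rfl
  have hdis : ∀ σ ∈ (Finset.univ : Finset (Equiv.Perm (Fin k))), ∀ τ ∈ (Finset.univ : Finset _), σ ≠ τ →
      Disjoint (D σ) (D τ) := by
    intro σ _ τ _ hst
    rw [Set.disjoint_left]
    rintro y ⟨hy1, -⟩ ⟨hy2, -⟩
    apply hst
    have hr : Set.range (fun i => y (σ i)) = Set.range (fun i => y (τ i)) := by
      have e1 : ∀ ρ : Equiv.Perm (Fin k), Set.range (fun i => y (ρ i)) = Set.range y :=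
        fun ρ => ρ.surjective.range_comp y
      rw [e1, e1]
    have he := (StrictMono.range_inj hy1 hy2).1 hr
    have hinj : Function.Injective y := by
      intro p q hpq
      have : σ.symm p = σ.symm q := hy1.injective (by simpa using hpq)
      exact σ.symm.injective this
    ext i
    exact congrArg _ (hinj (congrFun he i))
  have hsum : μ.real (⋃ σ ∈ (Finset.univ : Finset (Equiv.Perm (Fin k))), D σ) =
      k.factorial * μ.real (D 1) := by
    rw [measureReal_biUnion_finset (fun σ hσ τ hτ h => hdis σ hσ τ hτ h) (fun σ _ => hDm σ),
      Finset.sum_congr rfl (fun σ _ => hDe σ), Finset.sum_const, Finset.card_univ,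
      Fintype.card_perm, Fintype.card_fin, nsmul_eq_mul]
  have hbox : μ.real {y | ∀ i, y i ≤ a} = a ^ k := by
    have : {y : Fin k → ℝ | ∀ i, y i ≤ a} = Set.pi Set.univ fun _ => Iic a := by
      ext y; simp [Set.pi]
    rw [this, Measure.real, hμ, Measure.pi_pi, ENNReal.toReal_prod]
    have := unif_Iic h0 h1
    rw [Measure.real] at this
    simp [this]
  rw [← hD0, le_div_iff₀ (by positivity), mul_comm, ← hsum, ← hbox]
  apply measureReal_mono _ (measure_ne_top _ _)
  intro y hy
  simp only [Set.mem_iUnion] at hy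
  obtain ⟨σ, -, hy⟩ := hy
  intro i
  simpa using hy.2 (σ.symm i)

section
variable {V : Type*} [Fintype V] [DecidableEq V] {r : ℕ}

/-- Coordinates of a walk `g 0, …, g m, w` with label indices `idx`. -/
def wc {m : ℕ} (w : V) (g : ℕ → V) (idx : ℕ → Fin r) (i : Fin (m + 1)) : Sym2 V × Fin r :=
  (s(g i, if (i : ℕ) = m then w else g (i + 1)), idx i)

/-- The walk has increasing labels, all at most `a`. -/
def Wk (a : ℝ) (m : ℕ) (w : V) (g : ℕ → V) (idx : ℕ → Fin r) : Set (Sym2 V × Fin r → ℝ) :=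
  {x | StrictMono (fun i => x (wc (m := m) w g idx i)) ∧ ∀ i, x (wc (m := m) w g idx i) ≤ a}

/-- No label in `the middle window` on edges from `w` to `U`. -/
def Iev (r : ℕ) (a : ℝ) (w : V) (U : Finset V) : Set (Sym2 V × Fin r → ℝ) :=
  {x | ∀ c ∈ cross r {w} U, x c ∈ (Ioc a (2 * a))ᶜ}

lemma measurableSet_Iev (a : ℝ) (w : V) (U : Finset V) : MeasurableSet (Iev r a w U) := by
  have : Iev r a w U = ⋂ c ∈ cross r {w} U, {x | x c ∈ (Ioc a (2 * a))ᶜ} := by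
    ext x; simp [Iev]
  rw [this]
  exact Finset.measurableSet_biInter _ fun c _ => measurable_pi_apply c measurableSet_Ioc.compl

lemma unif_Ioc_compl {a : ℝ} (h0 : 0 ≤ a) (h1 : 2 * a ≤ 1) :
    unif01.real (Ioc a (2 * a))ᶜ = 1 - a := by
  rw [probReal_compl_eq_one_sub measurableSet_Ioc, unif_Ioc h0 (by linarith) h1]
  ring

lemma Iev_prob (a : ℝ) (h0 : 0 ≤ a) (h1 : 2 * a ≤ 1) (w : V) (U : Finset V) (hw : w ∉ U) :
    (PP V r).real (Iev r a w U) = (1 - a) ^ (U.card * r) := by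
  unfold Iev
  rw [PP_box_finset, unif_Ioc_compl h0 h1, card_cross r (by simpa using hw), Finset.card_singleton,
    one_mul]

lemma Wk_Iev (a : ℝ) (h0 : 0 ≤ a) (h1 : 2 * a ≤ 1) (m : ℕ) (w : V) (g : ℕ → V)
    (idx : ℕ → Fin r) (hg : ∀ i ≤ m, g i ≠ w) :
    (PP V r).real (Wk a m w g idx ∩ Iev r a w {w}ᶜ) ≤
      a ^ (m + 1) / (m + 1).factorial * (1 - a) ^ ((Fintype.card V - 2) * r) := by
  by_cases hinj : Function.Injective (wc (m := m) w g idx)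
  swap
  · have : Wk a m w g idx = ∅ := by
      rw [Set.eq_empty_iff_forall_notMem]
      rintro x ⟨hx, -⟩
      exact hinj fun i j hij => hx.injective (by simp only [hij])
    rw [this, Set.empty_inter, measureReal_empty]
    have : 0 ≤ 1 - a := by linarith
    positivity
  have hU : Iev r a w {w}ᶜ ⊆ Iev r a w {w, g m}ᶜ := by
    intro x hx c hc
    apply hx c
    rw [mem_cross] at hc ⊢
    obtain ⟨u, hu, v, hv, h⟩ := hc
    refine ⟨u, hu, v, ?_, h⟩
    simp at hv ⊢
    tauto
  refine (measureReal_mono (Set.inter_subset_inter_right _ hU) (measure_ne_top _ _)).trans ?_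
  have hgm := hg m le_rfl
  have hi := indep_coord (Finset.univ.image (wc (m := m) w g idx)) (cross r {w} {w, g m}ᶜ)
    (by
      rw [Finset.disjoint_left]
      intro c hc hc'
      rw [Finset.mem_image] at hc
      obtain ⟨i, -, rfl⟩ := hc
      rw [mem_cross] at hc'
      obtain ⟨u, hu, v, hv, h⟩ := hc'
      rw [Finset.mem_singleton] at hu
      subst hu
      simp only [Finset.mem_compl, Finset.mem_insert, Finset.mem_singleton, not_or] at hv
      simp only [wc] at h
      have hgi := hg i (by omega)
      split_ifs at h with him
      · rw [him, Sym2.eq_iff] at h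
        rcases h with h | h
        · exact hgm h.1
        · exact hv.2 h.1.symm
      · have hgi1 := hg (i + 1) (by omega)
        rw [Sym2.eq_iff] at h
        rcases h with h | h
        · exact hgi h.1
        · exact hgi1 h.2)
    (Wk a m w g idx) (Iev r a w {w, g m}ᶜ) (measurableSet_simplex _ _ a) (measurableSet_Iev a w _)
    (by
      intro x y hxy hx
      have : ∀ i, x (wc (m := m) w g idx i) = y (wc (m := m) w g idx i) := fun i =>
        hxy _ (Finset.mem_image_of_mem _ (Finset.mem_univ i))
      simpa only [Wk, Set.mem_ofPred_eq, this] using hx)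
    (by
      intro x y hxy hx c hc
      rw [← hxy c hc]
      exact hx c hc)
  have hW : (PP V r).real (Wk a m w g idx) ≤ a ^ (m + 1) / (m + 1).factorial := by
    refine le_trans (le_of_eq ?_) (simplex_prob (m + 1) a h0 (by linarith))
    rw [← map_comp_inj (wc (m := m) w g idx) hinj,
      map_measureReal_apply (measurable_pi_lambda _ fun i => measurable_pi_apply _)
        (measurableSet_simplex (m + 1) id a)]
    rfl
  have hI := Iev_prob (r := r) a h0 h1 w {w, g m}ᶜ (by simp)
  rw [Finset.card_compl, Finset.card_pair hgm.symm] at hI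
  have hi' : (PP V r).real (Wk a m w g idx ∩ Iev r a w {w, g m}ᶜ) =
    (PP V r).real (Wk a m w g idx) * (PP V r).real (Iev r a w {w, g m}ᶜ) := by
    rw [Measure.real, PP, hi, ENNReal.toReal_mul]
    rfl
  rw [hi', hI]
  have : 0 ≤ 1 - a := by linarith
  gcongr

end



section
variable {V : Type*} [Fintype V] [DecidableEq V] {r : ℕ}

/-- Extension of a finite vertex sequence. -/
def gx {m : ℕ} (v : V) (g : Fin m → V) (i : ℕ) : V :=
  if i = 0 then v else if h : i - 1 < m then g ⟨i - 1, h⟩ else v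

/-- Extension of a finite index sequence. -/
def ix {m : ℕ} (d : Fin (m + 1) → Fin r) (i : ℕ) : Fin r := d (Fin.ofNat (m + 1) i)

/-- There is a temporal walk from `v` to `w` with labels at most `a`. -/
def RR (a : ℝ) (w v : V) : Set (Sym2 V × Fin r → ℝ) :=
  ⋃ m ∈ Finset.range (Fintype.card (Sym2 V × Fin r)),
    ⋃ p ∈ (Finset.univ : Finset ((Fin m → V) × (Fin (m + 1) → Fin r))),
      {x | (∀ i ≤ m, gx v p.1 i ≠ w) ∧ x ∈ Wk a m w (gx v p.1) (ix p.2)}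

lemma measurableSet_RR (a : ℝ) (w v : V) : MeasurableSet (RR (r := r) a w v) := by
  refine Finset.measurableSet_biUnion _ fun m _ => Finset.measurableSet_biUnion _ fun p _ => ?_
  by_cases h : ∀ i ≤ m, gx v p.1 i ≠ w
  · have : {x | (∀ i ≤ m, gx v p.1 i ≠ w) ∧ x ∈ Wk a m w (gx v p.1) (ix p.2)} =
      Wk a m w (gx v p.1) (ix p.2) := by
      ext x; exact ⟨fun hx => hx.2, fun hx => ⟨h, hx⟩⟩
    rw [this]
    exact measurableSet_simplex _ _ a
  · have : {x | (∀ i ≤ m, gx v p.1 i ≠ w) ∧ x ∈ Wk a m w (gx v p.1) (ix p.2)} = ∅ := by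
      ext x; exact ⟨fun hx => h hx.1, fun hx => hx.elim⟩
    rw [this]
    exact MeasurableSet.empty

lemma RR_prob (a : ℝ) (h0 : 0 ≤ a) (h1 : 2 * a ≤ 1) (w v : V) :
    (PP V r).real (RR a w v ∩ Iev r a w {w}ᶜ) * Fintype.card V ≤
      Real.exp (Fintype.card V * r * a) * (1 - a) ^ ((Fintype.card V - 2) * r) := by
  set n := Fintype.card V with hn
  have hb : 0 ≤ (1 - a) ^ ((n - 2) * r) := pow_nonneg (by linarith) _
  have hsub : RR a w v ∩ Iev r a w {w}ᶜ ⊆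
      ⋃ m ∈ Finset.range (Fintype.card (Sym2 V × Fin r)),
        ⋃ p ∈ (Finset.univ : Finset ((Fin m → V) × (Fin (m + 1) → Fin r))),
      ({x | (∀ i ≤ m, gx v p.1 i ≠ w) ∧ x ∈ Wk a m w (gx v p.1) (ix p.2)} ∩ Iev r a w {w}ᶜ) := by
    rintro x ⟨hx, hx2⟩
    unfold RR at hx
    simp only [Set.mem_iUnion] at hx ⊢
    obtain ⟨m, hm, p, hp, hx⟩ := hx
    exact ⟨m, hm, p, hp, hx, hx2⟩
  have hpt : ∀ (m : ℕ) (p : (Fin m → V) × (Fin (m + 1) → Fin r)),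
      (PP V r).real ({x | (∀ i ≤ m, gx v p.1 i ≠ w) ∧ x ∈ Wk a m w (gx v p.1) (ix p.2)} ∩
        Iev r a w {w}ᶜ) ≤ a ^ (m + 1) / (m + 1).factorial * (1 - a) ^ ((n - 2) * r) := by
    intro m p
    by_cases h : ∀ i ≤ m, gx v p.1 i ≠ w
    · refine le_trans (measureReal_mono ?_ (measure_ne_top _ _))
        (Wk_Iev a h0 h1 m w (gx v p.1) (ix p.2) h)
      exact Set.inter_subset_inter_left _ fun x hx => hx.2
    · have : {x | (∀ i ≤ m, gx v p.1 i ≠ w) ∧ x ∈ Wk a m w (gx v p.1) (ix p.2)} = ∅ := by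
        ext x; exact ⟨fun hx => h hx.1, fun hx => hx.elim⟩
      rw [this, Set.empty_inter, measureReal_empty]
      positivity
  have hm : ∀ m, (PP V r).real (⋃ p ∈ (Finset.univ : Finset ((Fin m → V) × (Fin (m + 1) → Fin r))),
      ({x | (∀ i ≤ m, gx v p.1 i ≠ w) ∧ x ∈ Wk a m w (gx v p.1) (ix p.2)} ∩ Iev r a w {w}ᶜ)) * n ≤
      (n * r * a) ^ (m + 1) / (m + 1).factorial * (1 - a) ^ ((n - 2) * r) := by
    intro m
    have := (measureReal_biUnion_finset_le (μ := PP V r) (Finset.univ :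
      Finset ((Fin m → V) × (Fin (m + 1) → Fin r))) (fun p =>
      ({x | (∀ i ≤ m, gx v p.1 i ≠ w) ∧ x ∈ Wk a m w (gx v p.1) (ix p.2)} ∩
        Iev r a w {w}ᶜ))).trans (Finset.sum_le_sum fun p _ => hpt m p)
    refine (mul_le_mul_of_nonneg_right this (by positivity)).trans (le_of_eq ?_)
    rw [Finset.sum_const, Finset.card_univ, Fintype.card_prod, Fintype.card_fun, Fintype.card_fun,
      Fintype.card_fin, Fintype.card_fin, Fintype.card_fin, nsmul_eq_mul, ← hn]
    push_cast
    rw [mul_pow, mul_pow]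
    ring
  refine (mul_le_mul_of_nonneg_right (measureReal_mono hsub (measure_ne_top _ _))
    (by positivity)).trans ?_
  refine (mul_le_mul_of_nonneg_right (measureReal_biUnion_finset_le _ _) (by positivity)).trans ?_
  rw [Finset.sum_mul]
  refine (Finset.sum_le_sum fun m _ => hm m).trans ?_
  rw [← Finset.sum_mul]
  refine mul_le_mul_of_nonneg_right ?_ hb
  have hx : 0 ≤ (n : ℝ) * r * a := by positivity
  have := Real.sum_le_exp_of_nonneg hx (Fintype.card (Sym2 V × Fin r) + 1)
  rw [Finset.sum_range_succ'] at this
  simp only [pow_zero, Nat.factorial_zero, Nat.cast_one, div_one] at this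
  linarith

/-- If `w` is reached from `S` then some start of a short walk lies in `S`. -/
lemma reach_det (a : ℝ) (x : Sym2 V × Fin r → ℝ) (w : V) (S : Set V)
    (hI : x ∈ Iev r a w {w}ᶜ) (hw : w ∉ S) (hR : ∀ v ∈ S, x ∉ RR a w v) :
    w ∉ ball (toTGraph (GG x)) S (2 * a) := by
  rintro (h | ⟨k, f, ts, hk, hf0, hfk, hlab, hmono, hlast⟩)
  · exact hw h
  classical
  have hex : ∃ k', f k' = w := ⟨k, hfk⟩
  set k' := Nat.find hex with hk'
  have hkw1 : f k' = w := Nat.find_spec hex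
  have hkk1 : k' ≤ k := Nat.find_min' hex hfk
  have hmin : ∀ i < k', f i ≠ w := fun i hi => Nat.find_min hex hi
  have hkne : k' ≠ 0 := by
    intro h
    rw [h] at hkw1
    exact hw (hkw1 ▸ hf0)
  obtain ⟨m, hm⟩ := Nat.exists_eq_succ_of_ne_zero hkne
  rw [Nat.succ_eq_add_one] at hm
  rw [hm] at hkw1 hkk1 hmin
  have hl : ∀ i : ℕ, ∃ d : Fin r, i < k → x (s(f i, f (i + 1)), d) = ts i := by
    intro i
    by_cases hik : i < k
    · obtain ⟨-, d, hd⟩ := (mem_toTGraph x _ _ _).1 (hlab i hik)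
      exact ⟨d, fun _ => hd⟩
    · obtain ⟨-, d, hd⟩ := (mem_toTGraph x _ _ _).1 (hlab 0 hk)
      exact ⟨d, fun h => absurd h hik⟩
  choose d hd using hl
  have htm : ts m ≤ a := by
    by_contra hlt
    rw [not_le] at hlt
    have h2 : ts m ≤ 2 * a := by
      rcases Nat.lt_or_ge m (k - 1) with h | h
      · exact (hmono m (k - 1) h (by omega)).le.trans hlast
      · have : m = k - 1 := by omega
        rw [this]; exact hlast
    have h3 := hI (s(f m, f (m + 1)), d m) (by
      rw [mem_cross]
      refine ⟨w, by simp, f m, ?_, ?_⟩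
      · simp [hmin m (by omega)]
      · rw [hkw1]; exact Sym2.eq_swap)
    rw [hd m (by omega)] at h3
    exact h3 ⟨hlt, h2⟩
  set g : Fin m → V := fun j => f (j + 1) with hg
  set e : Fin (m + 1) → Fin r := fun j => d j with he
  have hgx : ∀ i ≤ m, gx (f 0) g i = f i := by
    intro i hi
    unfold gx
    rcases i with _ | i
    · simp
    · simp [hg, show i < m by omega]
  have hix : ∀ i ≤ m, ix e i = d i := by
    intro i hi
    simp only [ix, he, Fin.val_ofNat]
    rw [Nat.mod_eq_of_lt (by omega)]
  have hwc : ∀ i : Fin (m + 1), x (wc (m := m) w (gx (f 0) g) (ix e) i) = ts i := by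
    intro i
    have hi : (i : ℕ) ≤ m := by omega
    unfold wc
    rw [hgx i hi, hix i hi]
    rw [← hd i (by omega)]
    split_ifs with him
    · rw [him, hkw1]
    · rw [hgx _ (by omega)]
  have hWk : x ∈ Wk a m w (gx (f 0) g) (ix e) := by
    have hsm : StrictMono (fun i : Fin (m + 1) => ts i) :=
      fun i j hij => hmono i j hij (by omega)
    refine ⟨?_, ?_⟩
    · simpa only [hwc] using hsm
    · intro i
      rw [hwc]
      exact (hsm.monotone (Fin.le_last i)).trans (by simpa using htm)
  apply hR (f 0) hf0
  unfold RR
  simp only [Set.mem_iUnion]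
  refine ⟨m, ?_, (g, e), Finset.mem_univ _, ?_, hWk⟩
  · rw [Finset.mem_range]
    have hinj : Function.Injective (wc (m := m) w (gx (f 0) g) (ix e)) :=
      fun i j hij => hWk.1.injective (by simp only [hij])
    have := Fintype.card_le_of_injective _ hinj
    rw [Fintype.card_fin] at this
    omega
  · intro i hi
    rw [hgx i hi]
    exact hmin i (by omega)

end



lemma integral_ind {Ω : Type*} [MeasurableSpace Ω] (μ : Measure Ω) [IsProbabilityMeasure μ]
    {A : Set Ω} (hA : MeasurableSet A) : ∫ x, A.indicator (fun _ => (1 : ℝ)) x ∂μ = μ.real A := by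
  rw [integral_indicator hA]; simp

lemma integrable_ind {Ω : Type*} [MeasurableSpace Ω] (μ : Measure Ω) [IsProbabilityMeasure μ]
    {A : Set Ω} (hA : MeasurableSet A) : Integrable (A.indicator (fun _ => (1 : ℝ))) μ :=
  (integrable_const 1).indicator hA

lemma markov_sum {Ω ι : Type*} [MeasurableSpace Ω] (μ : Measure Ω) [IsProbabilityMeasure μ]
    (F : Finset ι) (B : ι → Set Ω) (hB : ∀ i, MeasurableSet (B i)) (c : ℝ) :
    c * μ.real {x | c ≤ ∑ i ∈ F, (B i).indicator (fun _ => (1 : ℝ)) x} ≤ ∑ i ∈ F, μ.real (B i) := by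
  have := mul_meas_ge_le_integral_of_nonneg (μ := μ)
    (f := fun x => ∑ i ∈ F, (B i).indicator (fun _ => (1 : ℝ)) x)
    (Eventually.of_forall fun x => Finset.sum_nonneg fun i _ =>
      Set.indicator_nonneg (fun _ _ => zero_le_one) x)
    (integrable_finsetSum _ fun i _ => integrable_ind μ (hB i)) c
  rw [integral_finsetSum _ (fun i _ => integrable_ind μ (hB i))] at this
  simpa only [integral_ind μ (hB _)] using this

lemma cheb {Ω V : Type*} [MeasurableSpace Ω] [Fintype V] [DecidableEq V] (μ : Measure Ω)
    [IsProbabilityMeasure μ] (A : V → Set Ω) (hA : ∀ w, MeasurableSet (A w)) (p p2 : ℝ)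
    (hp : ∀ w, μ.real (A w) = p) (hp2 : ∀ w w', w ≠ w' → μ.real (A w ∩ A w') ≤ p2)
    (hp0 : 0 ≤ p) (hp20 : 0 ≤ p2) :
    (Fintype.card V * p / 2) ^ 2 *
      μ.real {x | ∑ w, (A w).indicator (fun _ => (1 : ℝ)) x ≤ Fintype.card V * p / 2} ≤
      Fintype.card V * p + (Fintype.card V : ℝ) ^ 2 * (p2 - p ^ 2) := by
  set n := Fintype.card V with hn
  set c := (n : ℝ) * p with hc
  have hc0 : 0 ≤ c := by positivity
  set X : Ω → ℝ := fun x => ∑ w, (A w).indicator (fun _ => (1 : ℝ)) x with hX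
  have hexp : ∀ x, (X x - c) ^ 2 = ∑ w, ∑ w', (A w ∩ A w').indicator (fun _ => (1 : ℝ)) x
      - 2 * c * X x + c ^ 2 := by
    intro x
    have : X x ^ 2 = ∑ w, ∑ w', (A w ∩ A w').indicator (fun _ => (1 : ℝ)) x := by
      rw [sq, hX, Finset.sum_mul_sum]
      refine Finset.sum_congr rfl fun w _ => Finset.sum_congr rfl fun w' _ => ?_
      by_cases h1 : x ∈ A w <;> by_cases h2 : x ∈ A w' <;> simp [h1, h2]
    rw [← this]; ring
  have hi1 : Integrable (fun x => ∑ w, ∑ w', (A w ∩ A w').indicator (fun _ => (1 : ℝ)) x) μ :=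
    integrable_finsetSum _ fun w _ => integrable_finsetSum _ fun w' _ =>
      integrable_ind μ ((hA w).inter (hA w'))
  have hi2 : Integrable X μ := integrable_finsetSum _ fun w _ => integrable_ind μ (hA w)
  have hinte : ∫ x, (X x - c) ^ 2 ∂μ ≤ n * p + (n : ℝ) ^ 2 * (p2 - p ^ 2) := by
    simp only [hexp]
    have hXi : ∫ x, X x ∂μ = c := by
      rw [hX, integral_finsetSum _ (fun w _ => integrable_ind μ (hA w))]
      simp only [integral_ind μ (hA _), hp, Finset.sum_const, Finset.card_univ, nsmul_eq_mul]
      rfl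
    have hi3 : Integrable (fun x => ∑ w, ∑ w', (A w ∩ A w').indicator (fun _ => (1 : ℝ)) x
        - 2 * c * X x) μ := hi1.sub (hi2.const_mul _)
    rw [integral_add hi3 (integrable_const _),
      integral_sub hi1 (hi2.const_mul _), integral_const_mul, hXi,
      integral_finsetSum _ (fun w _ => integrable_finsetSum _ fun w' _ =>
        integrable_ind μ ((hA w).inter (hA w')))]
    have hrow : ∀ w, ∫ x, ∑ w', (A w ∩ A w').indicator (fun _ => (1 : ℝ)) x ∂μ ≤ p + n * p2 := by
      intro w
      rw [integral_finsetSum _ (fun w' _ => integrable_ind μ ((hA w).inter (hA w')))]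
      simp only [integral_ind μ ((hA _).inter (hA _))]
      rw [← Finset.add_sum_erase _ _ (Finset.mem_univ w), Set.inter_self, hp]
      have h1 : ∑ w' ∈ Finset.univ.erase w, μ.real (A w ∩ A w') ≤
          ∑ w' ∈ Finset.univ.erase w, p2 :=
        Finset.sum_le_sum fun w' hw' => hp2 w w' (Finset.ne_of_mem_erase hw').symm
      have h2 : ∑ w' ∈ Finset.univ.erase w, p2 ≤ ∑ w' : V, p2 :=
        Finset.sum_le_sum_of_subset_of_nonneg (Finset.erase_subset _ _) fun _ _ _ => hp20
      have h3 : ∑ w' : V, p2 = n * p2 := by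
        rw [Finset.sum_const, Finset.card_univ, nsmul_eq_mul]
      linarith
    have hrows := Finset.sum_le_sum fun (w : V) (_ : w ∈ Finset.univ) => hrow w
    rw [Finset.sum_const, Finset.card_univ, nsmul_eq_mul, ← hn] at hrows
    simp only [integral_const, probReal_univ, one_smul]
    rw [hc]
    rw [hc] at *
    nlinarith
  have hmk := mul_meas_ge_le_integral_of_nonneg (μ := μ) (f := fun x => (X x - c) ^ 2)
    (Eventually.of_forall fun x => sq_nonneg _)
    (by
      simp only [hexp]
      exact (hi1.sub (hi2.const_mul _)).add (integrable_const _)) ((c / 2) ^ 2)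
  refine le_trans ?_ (hmk.trans hinte)
  refine mul_le_mul_of_nonneg_left (measureReal_mono ?_ (measure_ne_top _ _)) (sq_nonneg _)
  intro x hx
  simp only [Set.mem_ofPred_eq] at hx ⊢
  change X x ≤ c / 2 at hx
  nlinarith

section
variable {V : Type*} [Fintype V] [DecidableEq V] {r : ℕ}

lemma ball_mono (Λ : TGraph V) (S : Set V) {s t : ℝ} (h : s ≤ t) : ball Λ S s ⊆ ball Λ S t := by
  rintro v (hv | ⟨k, f, ts, h1, h2, h3, h4, h5, h6⟩)
  · exact Or.inl hv
  · exact Or.inr ⟨k, f, ts, h1, h2, h3, h4, h5, h6.trans h⟩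

lemma sum_ind_card {Ω ι : Type*} [Fintype ι] (A : ι → Set Ω) (x : Ω)
    [DecidablePred fun i => x ∈ A i] :
    ∑ i, (A i).indicator (fun _ => (1 : ℝ)) x = ((Finset.univ.filter fun i => x ∈ A i).card : ℝ) := by
  rw [Finset.card_filter]
  push_cast
  refine Finset.sum_congr rfl fun i _ => ?_
  by_cases h : x ∈ A i <;> simp [h]

lemma lower_det (a c : ℝ) (x : Sym2 V × Fin r → ℝ) (hn : 20 ≤ Fintype.card V) (hc : 4 ≤ c)
    (hX : c / 2 < ∑ w, (Iev r a w ({w}ᶜ : Finset V)).indicator (fun _ => (1 : ℝ)) x)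
    (hY : ∑ q : V × V, (RR a q.1 q.2 ∩ Iev r a q.1 {q.1}ᶜ).indicator (fun _ => (1 : ℝ)) x <
      Fintype.card V * c / 20) :
    ENNReal.ofReal (2 * a) ≤ doubleAll (toTGraph (GG x)) := by
  classical
  set n := Fintype.card V with hndef
  set I := Finset.univ.filter fun w : V => x ∈ Iev r a w {w}ᶜ with hI
  set R : V → Finset V := fun w => Finset.univ.filter fun v : V => x ∈ RR a w v ∩ Iev r a w {w}ᶜ with hR
  rw [sum_ind_card] at hX
  rw [Fintype.sum_prod_type] at hY
  have hrow : ∀ w : V, ∑ v, (RR a w v ∩ Iev r a w {w}ᶜ).indicator (fun _ => (1 : ℝ)) x =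
      ((R w).card : ℝ) := fun w => sum_ind_card (fun v => RR a w v ∩ Iev r a w {w}ᶜ) x
  simp only [hrow] at hY
  set J := I.filter fun w => 5 * (R w).card < n with hJ
  have hJ2 : 1 < J.card := by
    by_contra hle
    rw [not_lt] at hle
    have h1 : ∑ w ∈ I \ J, ((n : ℝ) / 5) ≤ ∑ w, ((R w).card : ℝ) := by
      refine le_trans (Finset.sum_le_sum fun w hw => ?_)
        (Finset.sum_le_sum_of_subset_of_nonneg (Finset.subset_univ (I \ J)) fun _ _ _ => by positivity)
      have hw' : ¬ 5 * (R w).card < n := fun h => by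
        rw [Finset.mem_sdiff] at hw
        exact hw.2 (Finset.mem_filter.2 ⟨hw.1, h⟩)
      have : (n : ℝ) ≤ 5 * (R w).card := by exact_mod_cast not_lt.1 hw'
      linarith
    rw [Finset.sum_const, nsmul_eq_mul] at h1
    have h2 : (I.card : ℝ) ≤ (I \ J).card + 1 := by
      have hJI : J ⊆ I := Finset.filter_subset _ _
      have := Finset.card_sdiff_add_card_eq_card hJI
      have : I.card ≤ (I \ J).card + 1 := by omega
      exact_mod_cast this
    have h3 : c / 2 < I.card := hX
    have h4 : c / 4 ≤ ((I \ J).card : ℝ) := by linarith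
    have h5 : (0 : ℝ) ≤ n := by positivity
    nlinarith
  obtain ⟨w1, hw1, w2, hw2, hne⟩ := Finset.one_lt_card.1 hJ2
  rw [hJ, Finset.mem_filter] at hw1 hw2
  have hcov : ({w1, w2} ∪ R w1 ∪ R w2).card ≤ 2 + (R w1).card + (R w2).card := by
    have e1 := Finset.card_union_le ({w1, w2} ∪ R w1) (R w2)
    have e2 := Finset.card_union_le {w1, w2} (R w1)
    have e3 := Finset.card_le_two (a := w1) (b := w2)
    omega
  obtain ⟨S, hS1, hS2⟩ := Finset.exists_subset_card_eq (s := ({w1, w2} ∪ R w1 ∪ R w2)ᶜ) (n := n / 2)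
    (by rw [Finset.card_compl, ← hndef]; have := hw1.2; have := hw2.2; omega)
  have hSn : (S : Set V).ncard = n / 2 := by rw [Set.ncard_coe_finset, hS2]
  have hout : ∀ w ∈ I, w ∈ ({w1, w2} ∪ R w1 ∪ R w2 : Finset V) → R w ⊆ {w1, w2} ∪ R w1 ∪ R w2 →
      w ∉ ball (toTGraph (GG x)) (S : Set V) (2 * a) := by
    intro w hwI hwm hRs
    have hwI' := (Finset.mem_filter.1 hwI).2
    apply reach_det a x w S hwI'
    · intro h
      exact Finset.mem_compl.1 (hS1 h) hwm
    · intro v hv hRR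
      refine Finset.mem_compl.1 (hS1 hv) (hRs ?_)
      rw [hR, Finset.mem_filter]
      exact ⟨Finset.mem_univ _, hRR, hwI'⟩
  have ho1 := hout w1 hw1.1 (by simp) (by intro v hv; simp [hv])
  have ho2 := hout w2 hw2.1 (by simp) (by intro v hv; simp [hv])
  have hballcard : (ball (toTGraph (GG x)) (S : Set V) (2 * a)).ncard + 2 ≤ n := by
    have hsub : ball (toTGraph (GG x)) (S : Set V) (2 * a) ⊆ (({w1, w2}ᶜ : Finset V) : Set V) := by
      intro v hv
      simp only [Finset.coe_compl, Set.mem_compl_iff, Finset.mem_coe, Finset.mem_insert,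
        Finset.mem_singleton, not_or]
      exact ⟨fun h => ho1 (h ▸ hv), fun h => ho2 (h ▸ hv)⟩
    have := Set.ncard_le_ncard hsub (Set.toFinite _)
    rw [Set.ncard_coe_finset, Finset.card_compl, Finset.card_pair hne] at this
    omega
  refine le_trans ?_ (le_iSup₂ (f := fun (S : Set V) (_ : S.Nonempty ∧ 2 * S.ncard ≤ Fintype.card V) =>
    doubleTime (toTGraph (GG x)) S) (S : Set V) ⟨?_, ?_⟩)
  · refine le_iInf₂ fun t ht => ?_
    by_contra hlt
    have hta : t ≤ 2 * a := by
      by_contra h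
      exact hlt (ENNReal.ofReal_le_ofReal (not_le.1 h).le)
    have := Set.ncard_le_ncard (ball_mono (toTGraph (GG x)) (S : Set V) hta) (Set.toFinite _)
    have h2 := ht.2
    rw [hSn] at h2
    omega
  · rw [Finset.coe_nonempty, ← Finset.card_pos, hS2]
    omega
  · rw [hSn]
    omega

end



lemma Iev_pair {V : Type*} [Fintype V] [DecidableEq V] {r : ℕ} (a : ℝ) (h0 : 0 ≤ a)
    (h1 : 2 * a ≤ 1) (w w' : V) (hne : w ≠ w') :
    (PP V r).real (Iev r a w {w}ᶜ ∩ Iev r a w' {w'}ᶜ) ≤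
      (1 - a) ^ ((Fintype.card V - 1) * r + (Fintype.card V - 2) * r) := by
  have hsub : Iev r a w {w}ᶜ ∩ Iev r a w' {w'}ᶜ ⊆
      {x | ∀ c ∈ cross r {w} {w}ᶜ ∪ cross r {w'} {w, w'}ᶜ, x c ∈ (Ioc a (2 * a))ᶜ} := by
    rintro x ⟨hx1, hx2⟩ c hc
    rw [Finset.mem_union] at hc
    rcases hc with hc | hc
    · exact hx1 c hc
    · apply hx2 c
      rw [mem_cross] at hc ⊢
      obtain ⟨u, hu, v, hv, h⟩ := hc
      refine ⟨u, hu, v, ?_, h⟩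
      simp at hv ⊢
      tauto
  refine (measureReal_mono hsub (measure_ne_top _ _)).trans (le_of_eq ?_)
  rw [PP_box_finset, unif_Ioc_compl h0 h1, Finset.card_union_of_disjoint, card_cross, card_cross,
    Finset.card_compl, Finset.card_compl, Finset.card_pair hne, Finset.card_singleton,
    Finset.card_singleton, one_mul, one_mul]
  · simp
  · simp
  · rw [Finset.disjoint_left]
    intro c hc hc'
    rw [mem_cross] at hc hc'
    obtain ⟨u, hu, v, hv, h⟩ := hc
    obtain ⟨u', hu', v', hv', h'⟩ := hc'
    rw [Finset.mem_singleton] at hu hu'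
    subst hu hu'
    rw [h, Sym2.eq_iff] at h'
    simp at hv'
    rcases h' with h' | h'
    · exact hne h'.1
    · exact hv'.1 h'.1.symm

set_option maxHeartbeats 2000000 in
lemma lower_bound (r n : ℕ) (hr : 0 < r) (α : ℝ) (hα : 0 < α) (hα1 : α ≤ 1) (hn : 20 ≤ n)
    (a : ℝ) (ha : a = (1 - α / 2) * Real.log n / (r * n)) (ha4 : a ≤ α / 4)
    (hra : r * a ≤ 1 / 2) (hL4 : Real.exp (-(α / 4 * Real.log n)) ≤ 1 / 4) :
    (PP (Fin n) r).real {x | ¬ ENNReal.ofReal (2 * a) ≤ doubleAll (toTGraph (GG x))} ≤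
      4 * Real.exp (-(α / 4 * Real.log n)) + 8 * (r * a) + 40 * Real.exp (-(α / 2 * Real.log n)) := by
  have hnr : (20 : ℝ) ≤ n := by exact_mod_cast hn
  have hrr : (0 : ℝ) < r := by exact_mod_cast hr
  obtain ⟨L, hL⟩ : ∃ L, L = Real.log n := ⟨_, rfl⟩
  have hL0 : 0 < L := by rw [hL]; exact Real.log_pos (by linarith)
  have hexpL : (n : ℝ) = Real.exp L := by rw [hL, Real.exp_log (by linarith)]
  rw [← hL] at ha hL4 ⊢
  have ha0 : 0 < a := by
    rw [ha]
    have : 0 < 1 - α / 2 := by linarith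
    positivity
  have hnra : (n : ℝ) * r * a = (1 - α / 2) * L := by rw [ha]; field_simp
  have h1 : 2 * a ≤ 1 := by linarith
  set b := 1 - a with hb
  have hb0 : 0 < b := by rw [hb]; linarith
  have hb1 : b ≤ 1 := by rw [hb]; linarith
  set p := b ^ ((n - 1) * r) with hp
  have hp0 : 0 < p := pow_pos hb0 _
  set p2 := b ^ ((n - 1) * r + (n - 2) * r) with hp2
  have hbr : 1 - r * a ≤ b ^ r := by
    have := one_add_mul_le_pow (show (-2 : ℝ) ≤ -a by linarith) r
    rw [← sub_eq_add_neg] at this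
    rw [hb]; linarith
  have hpp : b ^ ((n - 2) * r) * b ^ r = p := by
    rw [hp, ← pow_add]
    congr 1
    obtain ⟨m, rfl⟩ : ∃ m, n = m + 2 := ⟨n - 2, by omega⟩
    simp only [Nat.add_sub_cancel, show m + 2 - 1 = m + 1 by omega]
    ring
  have hq0 : 0 < b ^ ((n - 2) * r) := pow_pos hb0 _
  have hq2 : b ^ ((n - 2) * r) ≤ 2 * p := by
    rw [← hpp]
    nlinarith
  have hp2e : p2 = p * b ^ ((n - 2) * r) := by rw [hp2, pow_add]
  have hp2p : p2 - p ^ 2 ≤ 2 * (r * a) * p ^ 2 := by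
    have e1 : p2 - p ^ 2 = p * b ^ ((n - 2) * r) * (1 - b ^ r) := by
      rw [hp2e, mul_sub, mul_one, mul_assoc, hpp]; ring
    rw [e1]
    have e2 : 1 - b ^ r ≤ r * a := by linarith
    calc p * b ^ ((n - 2) * r) * (1 - b ^ r) ≤ p * b ^ ((n - 2) * r) * (r * a) := by gcongr
      _ ≤ p * (2 * p) * (r * a) := by gcongr
      _ = _ := by ring
  set c := (n : ℝ) * p with hc
  -- the expected number of isolated vertices is large
  have hcl : Real.exp (α / 4 * L) ≤ c := by
    have e1 : Real.exp (-(1 - α / 4) * L) ≤ p := by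
      have e2 : p = Real.exp (((n - 1) * r : ℕ) * Real.log b) := by
        rw [Real.exp_nat_mul, Real.exp_log hb0]
      rw [e2, Real.exp_le_exp]
      have e3 : 1 - b⁻¹ ≤ Real.log b := Real.one_sub_inv_le_log_of_pos hb0
      have e4 : Real.log b ≤ 0 := Real.log_nonpos hb0.le hb1
      have e5 : (((n - 1) * r : ℕ) : ℝ) ≤ n * r := by
        exact_mod_cast Nat.mul_le_mul_right r (Nat.sub_le n 1)
      have e6 : (n : ℝ) * r * (1 - b⁻¹) ≤ ((n - 1) * r : ℕ) * Real.log b := by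
        calc (n : ℝ) * r * (1 - b⁻¹) ≤ n * r * Real.log b := by gcongr
          _ ≤ _ := mul_le_mul_of_nonpos_right e5 e4
      refine le_trans ?_ e6
      have e7 : (n : ℝ) * r * (1 - b⁻¹) = -((1 - α / 2) * L / b) := by
        rw [← hnra]
        have : 1 - b⁻¹ = - (a / b) := by
          field_simp
          rw [hb]; ring
        rw [this]; ring
      rw [e7]
      have e8 : (1 - α / 2) * L / b ≤ (1 - α / 4) * L := by
        rw [div_le_iff₀ hb0]
        have e9 : 1 - α / 2 ≤ (1 - α / 4) * b := by
          have : 1 - α / 4 ≤ b := by rw [hb]; linarith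
          nlinarith
        nlinarith
      linarith
    rw [hc]
    calc Real.exp (α / 4 * L) = n * Real.exp (-(1 - α / 4) * L) := by
          rw [hexpL, ← Real.exp_add]; ring_nf
      _ ≤ n * p := by gcongr
  have hinv : Real.exp (α / 4 * L) * Real.exp (-(α / 4 * L)) = 1 := by
    rw [← Real.exp_add]; simp
  have hepos := Real.exp_pos (α / 4 * L)
  have hc4 : 4 ≤ c := by
    refine le_trans ?_ hcl
    nlinarith
  have hc0 : 0 < c := by linarith
  have hcinv : 1 / c ≤ Real.exp (-(α / 4 * L)) := by
    rw [Real.exp_neg, one_div]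
    exact inv_anti₀ hepos hcl
  set μ := PP (Fin n) r with hμ
  have hcard : Fintype.card (Fin n) = n := Fintype.card_fin n
  -- first event
  have hP1 : μ.real {x | ∑ w, (Iev r a w ({w}ᶜ : Finset (Fin n))).indicator (fun _ => (1 : ℝ)) x ≤ c / 2}
      ≤ 4 * Real.exp (-(α / 4 * L)) + 8 * (r * a) := by
    have := cheb μ (fun w : Fin n => Iev r a w {w}ᶜ) (fun w => measurableSet_Iev a w _) p p2
      (fun w => by
        rw [hμ, Iev_prob a ha0.le h1 w _ (by simp), Finset.card_compl, hcard,
          Finset.card_singleton])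
      (fun w w' hww => by
        have := Iev_pair (r := r) a ha0.le h1 w w' hww
        rw [hcard] at this
        exact this) hp0.le (pow_pos hb0 _).le
    rw [hcard, ← hc] at this
    set P1 := μ.real {x | ∑ w, (Iev r a w ({w}ᶜ : Finset (Fin n))).indicator (fun _ => (1 : ℝ)) x ≤ c / 2}
      with hP1
    have e1 : (c / 2) ^ 2 * P1 ≤ c + c ^ 2 * (2 * (r * a)) := by
      refine this.trans ?_
      have := mul_le_mul_of_nonneg_left hp2p (sq_nonneg (n : ℝ))
      rw [hc]
      nlinarith
    have e2 : P1 ≤ 4 * (1 / c) + 8 * (r * a) := by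
      have : (c / 2) ^ 2 * P1 ≤ (c / 2) ^ 2 * (4 * (1 / c) + 8 * (r * a)) := by
        refine e1.trans (le_of_eq ?_)
        field_simp
        ring
      exact le_of_mul_le_mul_left this (by positivity)
    linarith
  -- second event
  have hP2 : μ.real {x | n * c / 20 ≤ ∑ q : Fin n × Fin n,
      (RR a q.1 q.2 ∩ Iev r a q.1 {q.1}ᶜ).indicator (fun _ => (1 : ℝ)) x} ≤
      40 * Real.exp (-(α / 2 * L)) := by
    have := markov_sum μ (Finset.univ : Finset (Fin n × Fin n))
      (fun q => RR a q.1 q.2 ∩ Iev r a q.1 {q.1}ᶜ)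
      (fun q => (measurableSet_RR a _ _).inter (measurableSet_Iev a _ _)) (n * c / 20)
    set P2 := μ.real {x | n * c / 20 ≤ ∑ q : Fin n × Fin n,
      (RR a q.1 q.2 ∩ Iev r a q.1 {q.1}ᶜ).indicator (fun _ => (1 : ℝ)) x} with hP2
    have hE : Real.exp ((1 - α / 2) * L) = n * Real.exp (-(α / 2 * L)) := by
      rw [hexpL, ← Real.exp_add]; ring_nf
    have e1 : ∀ q : Fin n × Fin n, μ.real (RR a q.1 q.2 ∩ Iev r a q.1 {q.1}ᶜ) ≤
        Real.exp (-(α / 2 * L)) * (2 * p) := by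
      intro q
      have := RR_prob (r := r) a ha0.le h1 q.1 q.2
      rw [hcard, hnra, hE] at this
      have e3 : μ.real (RR a q.1 q.2 ∩ Iev r a q.1 {q.1}ᶜ) * n ≤
          (Real.exp (-(α / 2 * L)) * b ^ ((n - 2) * r)) * n := by
        refine this.trans (le_of_eq ?_); ring
      refine (le_of_mul_le_mul_right e3 (by linarith)).trans ?_
      gcongr
    have e2 := this.trans (Finset.sum_le_sum fun q _ => e1 q)
    rw [Finset.sum_const, Finset.card_univ, Fintype.card_prod, hcard, nsmul_eq_mul] at e2
    push_cast at e2
    have e4 : (n * c / 20) * P2 ≤ (n * c / 20) * (40 * Real.exp (-(α / 2 * L))) := by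
      refine e2.trans (le_of_eq ?_)
      rw [hc]; ring
    exact le_of_mul_le_mul_left e4 (by positivity)
  have hsub : {x : Sym2 (Fin n) × Fin r → ℝ | ¬ ENNReal.ofReal (2 * a) ≤ doubleAll (toTGraph (GG x))} ⊆
      {x | ∑ w, (Iev r a w ({w}ᶜ : Finset (Fin n))).indicator (fun _ => (1 : ℝ)) x ≤ c / 2} ∪
      {x | n * c / 20 ≤ ∑ q : Fin n × Fin n,
        (RR a q.1 q.2 ∩ Iev r a q.1 {q.1}ᶜ).indicator (fun _ => (1 : ℝ)) x} := by
    intro x hx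
    by_contra hnot
    rw [Set.mem_union, not_or] at hnot
    simp only [Set.mem_ofPred_eq, not_le] at hnot
    apply hx
    exact lower_det a c x (by rw [hcard]; exact hn) hc4 hnot.1 (by rw [hcard]; exact hnot.2)
  refine (measureReal_mono hsub (measure_ne_top _ _)).trans ((measureReal_union_le _ _).trans ?_)
  linarith

lemma lower_tendsto (r : ℕ) (hr : 0 < r) (α : ℝ) (hα : 0 < α) (hα1 : α ≤ 1) :
    Tendsto (fun n : ℕ => (PP (Fin n) r).real {x | ¬ ENNReal.ofReal
      ((2 - α) * Real.log n / (r * n)) ≤ doubleAll (toTGraph (GG x))}) atTop (𝓝 0) := by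
  have h1 := tendsto_log_exp (α / 4) (by positivity)
  have h2 := tendsto_log_exp (α / 2) (by positivity)
  have h3 : Tendsto (fun n : ℕ => (1 - α / 2) * Real.log n / (r * n)) atTop (𝓝 0) := by
    have := tendsto_log_div.const_mul ((1 - α / 2) / r)
    rw [mul_zero] at this
    refine this.congr fun n => ?_
    rw [div_mul_div_comm]
  have h4 : Tendsto (fun n : ℕ => r * ((1 - α / 2) * Real.log n / (r * n))) atTop (𝓝 0) := by
    simpa using h3.const_mul (r : ℝ)
  have h5 := ((h1.const_mul 4).add (h4.const_mul 8)).add (h2.const_mul 40)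
  simp only [mul_zero, add_zero] at h5
  refine tendsto_of_tendsto_of_tendsto_of_le_of_le' tendsto_const_nhds h5
    (Eventually.of_forall fun n => measureReal_nonneg) ?_
  filter_upwards [eventually_ge_atTop 20, h3.eventually_le_const (show (0 : ℝ) < α / 4 by positivity),
    h4.eventually_le_const (show (0 : ℝ) < 1 / 2 by norm_num),
    h1.eventually_le_const (show (0 : ℝ) < 1 / 4 by norm_num)] with n hn ha4 hra hL4
  have := lower_bound r n hr α hα hα1 hn _ rfl ha4 hra hL4
  rwa [show 2 * ((1 - α / 2) * Real.log n / (r * n)) = (2 - α) * Real.log n / (r * n) by ring] at this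

lemma main_tendsto (r : ℕ) (hr : 0 < r) (α : ℝ) (hα : 0 < α) (hα1 : α ≤ 1) :
    Tendsto (fun n : ℕ =>
        contModel (Fin n) (Measure.dirac r) {ω |
          ENNReal.ofReal ((2 - α) * Real.log n / (r * n)) ≤ doubleAll (toTGraph ω) ∧
          doubleAll (toTGraph ω) ≤ ENNReal.ofReal ((2 + α) * Real.log n / (r * n))})
      atTop (𝓝 1) := by
  have hsum := (lower_tendsto r hr α hα hα1).add (upper_tendsto r hr α hα hα1)
  rw [add_zero] at hsum
  have hlow := (ENNReal.tendsto_ofReal ((tendsto_const_nhds (x := (1 : ℝ))).sub hsum))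
  rw [sub_zero, ENNReal.ofReal_one] at hlow
  refine tendsto_of_tendsto_of_tendsto_of_le_of_le hlow tendsto_const_nhds ?_ ?_
  · intro n
    dsimp only
    rw [← map_GG (Fin n) r]
    refine le_trans ?_ (Measure.le_map_apply measurable_GG.aemeasurable _)
    refine ENNReal.ofReal_le_of_le_toReal ?_
    set A : Set (Sym2 (Fin n) × Fin r → ℝ) := {x | ¬ ENNReal.ofReal
      ((2 - α) * Real.log n / (r * n)) ≤ doubleAll (toTGraph (GG x))} with hA
    set B : Set (Sym2 (Fin n) × Fin r → ℝ) := {x | ¬ doubleAll (toTGraph (GG x)) ≤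
        ENNReal.ofReal ((2 + α) * Real.log n / (r * n))} with hB
    set C : Set (Sym2 (Fin n) × Fin r → ℝ) := GG ⁻¹' {ω |
          ENNReal.ofReal ((2 - α) * Real.log n / (r * n)) ≤ doubleAll (toTGraph ω) ∧
          doubleAll (toTGraph ω) ≤ ENNReal.ofReal ((2 + α) * Real.log n / (r * n))} with hC
    have hcov : (Set.univ : Set (Sym2 (Fin n) × Fin r → ℝ)) ⊆ C ∪ (A ∪ B) := by
      intro x _
      by_cases hxA : x ∈ A
      · exact Or.inr (Or.inl hxA)
      by_cases hxB : x ∈ B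
      · exact Or.inr (Or.inr hxB)
      · exact Or.inl ⟨not_not.1 hxA, not_not.1 hxB⟩
    have e1 := measureReal_mono (μ := PP (Fin n) r) hcov (measure_ne_top _ _)
    have e2 := measureReal_union_le (μ := PP (Fin n) r) C (A ∪ B)
    have e3 := measureReal_union_le (μ := PP (Fin n) r) A B
    rw [probReal_univ] at e1
    change 1 - _ ≤ (PP (Fin n) r).real C
    linarith
  · intro n
    dsimp only
    rw [← map_GG (Fin n) r]
    have : IsProbabilityMeasure ((PP (Fin n) r).map GG) :=
      Measure.isProbabilityMeasure_map measurable_GG.aemeasurable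
    exact prob_le_one

/-- For the degenerate label multiplicity distribution at `r ≥ 1`, the
doubling time of `Γ_{[n]}(ψ)` is `(2 ± α)·log n/(r·n)` with high probability. -/
theorem statement5 (r : ℕ) (hr : 0 < r) (α : ℝ) (hα : 0 < α) :
    Tendsto (fun n : ℕ =>
        contModel (Fin n) (Measure.dirac r) {ω |
          ENNReal.ofReal ((2 - α) * Real.log n / (r * n)) ≤ doubleAll (toTGraph ω) ∧
          doubleAll (toTGraph ω) ≤ ENNReal.ofReal ((2 + α) * Real.log n / (r * n))})
      atTop (𝓝 1) := by
  have h := main_tendsto r hr (min α 1) (lt_min hα one_pos) (min_le_right _ _)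
  refine tendsto_of_tendsto_of_tendsto_of_le_of_le h tendsto_const_nhds ?_ ?_
  · intro n
    dsimp only
    apply measure_mono
    rintro ω ⟨h1, h2⟩
    have hl : 0 ≤ Real.log n := Real.log_natCast_nonneg n
    have hm : min α 1 ≤ α := min_le_left _ _
    refine ⟨le_trans (ENNReal.ofReal_le_ofReal ?_) h1, h2.trans (ENNReal.ofReal_le_ofReal ?_)⟩
    · gcongr
    · gcongr
  · intro n
    dsimp only
    rw [← map_GG (Fin n) r]
    have : IsProbabilityMeasure ((PP (Fin n) r).map GG) :=
      Measure.isProbabilityMeasure_map measurable_GG.aemeasurable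
    exact prob_le_one

end RTG
end
end

section
/- Let 𝒢=(V,E,λ) be a temporal graph all of whose labels lie in (0,1], let T and β be integers with T ≥ β ≥ 1, and let ℋ be the T-discretization of 𝒢, i.e. the temporal graph obtained from 𝒢 by replacing each label l by ⌈T·l⌉. If ℋ contains (H,P) as a β-temporal motif, for a finite graph H and strict partial order P on its edges, then 𝒢 contains (H,P) as a (β/T)-temporal motif. -/
open MeasureTheory ProbabilityTheory Filter Set
open scoped ENNReal NNReal Topology

noncomputable section

namespace RTG

/-- If the `T`-discretization of a temporal graph with labels in
`(0,1]` contains `(H, P)` as a `β`-temporal motif, then the original temporal graph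
contains `(H, P)` as a `(β/T)`-temporal motif. -/
theorem statement7 {V VH : Type} (Λ : TGraph V)
    (hΛ : ∀ e, ∀ l ∈ Λ e, l ∈ Set.Ioc (0 : ℝ) 1)
    (T β : ℕ) (hβ : 1 ≤ β) (hT : β ≤ T)
    (H : SimpleGraph VH) (P : Sym2 VH → Sym2 VH → Prop)
    (hP : StrictPartialOrderOn H.edgeSet P)
    (h : Contains H P (discretize T Λ) (β : ℝ)) :
    Contains H P Λ ((β : ℝ) / (T : ℝ)) := by
  obtain ⟨Φ, hΦ, lab, h1, h2, h3⟩ := h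
  have hT0 : (0 : ℝ) < (T : ℝ) := by
    have : 0 < T := by omega
    exact_mod_cast this
  have hex : ∀ e, ∃ l : ℝ, e ∈ H.edgeSet →
      l ∈ Λ (Sym2.map Φ e) ∧ ((⌈(T : ℝ) * l⌉ : ℤ) : ℝ) = lab e := by
    intro e
    by_cases he : e ∈ H.edgeSet
    · have hm := h1 e he
      simp only [discretize, Finset.mem_image] at hm
      obtain ⟨l, hl, hl'⟩ := hm
      exact ⟨l, fun _ => ⟨hl, hl'⟩⟩
    · exact ⟨0, fun h => absurd h he⟩
  choose m hm using hex
  refine ⟨Φ, hΦ, m, fun e he => (hm e he).1, ?_, ?_⟩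
  · intro e f hef
    obtain ⟨he, hf⟩ := hP.2.2 e f hef
    have hlt := h2 e f hef
    by_contra hcon
    have hle : (T : ℝ) * m f ≤ (T : ℝ) * m e :=
      mul_le_mul_of_nonneg_left (not_lt.mp hcon) hT0.le
    have hc : ((⌈(T : ℝ) * m f⌉ : ℤ) : ℝ) ≤ ((⌈(T : ℝ) * m e⌉ : ℤ) : ℝ) := by
      exact_mod_cast Int.ceil_le_ceil hle
    rw [(hm e he).2, (hm f hf).2] at hc
    linarith
  · intro e he f hf
    have hlt := h3 e he f hf
    rw [← (hm e he).2, ← (hm f hf).2] at hlt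
    have hz : ⌈(T : ℝ) * m e⌉ - ⌈(T : ℝ) * m f⌉ < (β : ℤ) := by exact_mod_cast hlt
    have hz' : ⌈(T : ℝ) * m e⌉ - ⌈(T : ℝ) * m f⌉ + 1 ≤ (β : ℤ) := hz
    have hr : ((⌈(T : ℝ) * m e⌉ : ℤ) : ℝ) - ((⌈(T : ℝ) * m f⌉ : ℤ) : ℝ) + 1 ≤ (β : ℝ) := by
      exact_mod_cast hz'
    have ha := Int.le_ceil ((T : ℝ) * m e)
    have hb := Int.ceil_lt_add_one ((T : ℝ) * m f)
    rw [lt_div_iff₀ hT0]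
    linarith

end RTG
end
end

section
/- Let I=(V_I,E_I) be a fixed graph, P a strict partial order on E_I, and let ψ and χ be two label multiplicity distributions such that ψ is stochastically dominated by χ (i.e. P[Q_ψ ≥ k] ≤ P[Q_χ ≥ k] for every k, where Q_ψ∼ψ and Q_χ∼χ). Let 𝒢 be a sample from Γ_V(ψ) and ℋ a sample from Γ_V(χ) on the same finite vertex set V. Then: (a) for any 0<δ<1, the probability that 𝒢 contains (I,P) as a δ-temporal motif is at most the probability that ℋ contains (I,P) as a δ-temporal motif; and (b) for any integers 0<β<T, the probability that the T-discretization of 𝒢 contains (I,P) as a β-temporal motif is at most the probability that the T-discretization of ℋ contains (I,P) as a β-temporal motif. -/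
open MeasureTheory ProbabilityTheory Filter Set
open scoped ENNReal NNReal Topology

noncomputable section

namespace RTG

section helpers

/-- Decreasing quantile function of a distribution on `ℕ`. -/
def qf (ψ : Measure ℕ) (u : ℝ) : ℕ :=
  if 0 < u then sInf {k : ℕ | ψ (Set.Ici (k + 1)) ≤ ENNReal.ofReal u} else 0

lemma exists_tail (ψ : Measure ℕ) [IsProbabilityMeasure ψ] {u : ℝ} (hu : 0 < u) :
    ∃ k : ℕ, ψ (Set.Ici (k + 1)) ≤ ENNReal.ofReal u := by
  have h : Tendsto (fun k : ℕ => ψ (Set.Ici (k + 1))) atTop (𝓝 (ψ (⋂ k : ℕ, Set.Ici (k + 1)))) := by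
    apply tendsto_measure_iInter_atTop
    · intro i; exact (measurableSet_Ici).nullMeasurableSet
    · intro a b hab
      exact Set.Ici_subset_Ici.2 (by omega)
    · exact ⟨0, measure_ne_top _ _⟩
  have h0 : (⋂ k : ℕ, Set.Ici (k + 1)) = (∅ : Set ℕ) := by
    ext x
    simp only [mem_iInter, mem_Ici, mem_empty_iff_false, iff_false]
    intro h
    have := h x
    omega
  rw [h0, measure_empty] at h
  have := (h.eventually (gt_mem_nhds (ENNReal.ofReal_pos.2 hu))).exists
  obtain ⟨k, hk⟩ := this
  exact ⟨k, hk.le⟩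

lemma qf_le_iff (ψ : Measure ℕ) [IsProbabilityMeasure ψ] {u : ℝ} (hu : 0 < u) (k : ℕ) :
    qf ψ u ≤ k ↔ ψ (Set.Ici (k + 1)) ≤ ENNReal.ofReal u := by
  rw [qf, if_pos hu]
  constructor
  · intro h
    have h1 := Nat.sInf_mem (s := {k : ℕ | ψ (Set.Ici (k + 1)) ≤ ENNReal.ofReal u})
      (exists_tail ψ hu)
    refine le_trans (measure_mono ?_) h1
    exact Set.Ici_subset_Ici.2 (by omega)
  · intro h
    exact Nat.sInf_le h

lemma measurable_qf (ψ : Measure ℕ) [IsProbabilityMeasure ψ] : Measurable (qf ψ) := by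
  apply measurable_of_Iic
  intro k
  have : qf ψ ⁻¹' Set.Iic k =
      Set.Iic 0 ∪ (Set.Ioi 0 ∩ {u : ℝ | ψ (Set.Ici (k + 1)) ≤ ENNReal.ofReal u}) := by
    ext u
    by_cases hu : 0 < u
    · simp [qf_le_iff ψ hu, hu]
    · simp [qf, hu, not_lt.1 hu]
  rw [this]
  exact measurableSet_Iic.union (measurableSet_Ioi.inter
    (measurableSet_le measurable_const ENNReal.measurable_ofReal))

lemma qf_mono (ψ χ : Measure ℕ) [IsProbabilityMeasure ψ] [IsProbabilityMeasure χ]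
    (hdom : ∀ k : ℕ, ψ (Set.Ici k) ≤ χ (Set.Ici k)) (u : ℝ) : qf ψ u ≤ qf χ u := by
  by_cases hu : 0 < u
  · rw [qf_le_iff ψ hu]
    exact (hdom _).trans ((qf_le_iff χ hu _).1 le_rfl)
  · simp [qf, hu]

instance : IsProbabilityMeasure unif01 := ⟨by simp [unif01]⟩

lemma map_qf (ψ : Measure ℕ) [IsProbabilityMeasure ψ] : unif01.map (qf ψ) = ψ := by
  have := Measure.isProbabilityMeasure_map (μ := unif01) (measurable_qf ψ).aemeasurable
  apply Measure.ext_of_Ici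
  intro k
  rcases k with _ | k
  · have : Set.Ici (0 : ℕ) = Set.univ := by ext; simp
    rw [this, measure_univ, measure_univ]
  · rw [Measure.map_apply (measurable_qf ψ) measurableSet_Ici, unif01,
      Measure.restrict_apply (measurable_qf ψ measurableSet_Ici)]
    have hle : ψ (Set.Ici (k + 1)) ≤ 1 := prob_le_one
    have hne : ψ (Set.Ici (k + 1)) ≠ ∞ := measure_ne_top _ _
    have h1 : (ψ (Set.Ici (k + 1))).toReal ≤ 1 := by
      simpa using ENNReal.toReal_mono ENNReal.one_ne_top hle
    have : qf ψ ⁻¹' Set.Ici (k + 1) ∩ Set.Ioc 0 1 =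
        Set.Ioo 0 (ψ (Set.Ici (k + 1))).toReal := by
      ext u
      simp only [mem_inter_iff, mem_preimage, mem_Ici, mem_Ioc, mem_Ioo]
      have key : 0 < u → (k + 1 ≤ qf ψ u ↔ u < (ψ (Set.Ici (k + 1))).toReal) := by
        intro hu
        rw [Nat.add_one_le_iff, ← not_le, qf_le_iff ψ hu, not_le,
          ENNReal.ofReal_lt_iff_lt_toReal hu.le hne]
      constructor
      · rintro ⟨h, hu, -⟩
        exact ⟨hu, (key hu).1 h⟩
      · rintro ⟨hu, h⟩
        exact ⟨(key hu).2 h, hu, by linarith⟩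
    rw [this, Real.volume_Ioo, sub_zero, ENNReal.ofReal_toReal hne]

/-- The sampling map: a number of labels together with an infinite stream of values. -/
def samp (q : ℝ → ℕ) (p : ℝ × (ℕ → ℝ)) : LabelSpace := ⟨q p.1, fun i => p.2 i⟩

lemma samp_preimage (q : ℝ → ℕ) (A : Set LabelSpace) :
    samp q ⁻¹' A = ⋃ k : ℕ, (q ⁻¹' {k}) ×ˢ
      ((fun (x : ℕ → ℝ) (i : Fin k) => x i) ⁻¹' (Sigma.mk (β := fun k : ℕ => Fin k → ℝ) k ⁻¹' A)) := by
  ext ⟨u, x⟩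
  simp [samp]

lemma measurableSet_sigma {A : Set LabelSpace} :
    MeasurableSet A ↔ ∀ k, MeasurableSet (Sigma.mk (β := fun k : ℕ => Fin k → ℝ) k ⁻¹' A) := by
  exact MeasurableSpace.measurableSet_iInf

lemma measurable_sigma_mk (k : ℕ) : Measurable (Sigma.mk (β := fun k : ℕ => Fin k → ℝ) k) :=
  fun _ hA => measurableSet_sigma.1 hA k

lemma measurable_trunc (k : ℕ) : Measurable (fun (x : ℕ → ℝ) (i : Fin k) => x i) := by
  fun_prop

lemma measurable_samp {q : ℝ → ℕ} (hq : Measurable q) : Measurable (samp q) := by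
  intro A hA
  rw [samp_preimage]
  refine MeasurableSet.iUnion fun k => ?_
  exact (hq (measurableSet_singleton k)).prod
    (measurable_trunc k (measurableSet_sigma.1 hA k))

lemma map_trunc (ν : Measure ℝ) [IsProbabilityMeasure ν] (k : ℕ) :
    (Measure.infinitePi fun _ : ℕ => ν).map (fun (x : ℕ → ℝ) (i : Fin k) => x i)
      = Measure.pi fun _ : Fin k => ν := by
  symm
  apply Measure.pi_eq
  intro s hs
  rw [Measure.map_apply (measurable_trunc k) (MeasurableSet.univ_pi hs)]
  let t : ℕ → Set ℝ := fun i => if h : i < k then s ⟨i, h⟩ else Set.univ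
  have h1 : (fun (x : ℕ → ℝ) (i : Fin k) => x i) ⁻¹' (Set.univ.pi s)
      = Set.pi (Finset.range k : Set ℕ) t := by
    ext x
    simp only [mem_preimage, Set.mem_pi, mem_univ, true_imp_iff, Finset.coe_range, mem_Iio, t]
    constructor
    · intro h i hi
      simpa [hi] using h ⟨i, hi⟩
    · intro h i
      simpa using h i i.2
  rw [h1, Measure.infinitePi_pi]
  · rw [Finset.prod_range]
    simp [t]
  · intro i hi
    have : i < k := by simpa using hi
    simp [t, this, hs]

lemma map_samp (ψ : Measure ℕ) (ν ρ : Measure ℝ) [IsProbabilityMeasure ν]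
    [IsProbabilityMeasure ρ] {q : ℝ → ℕ} (hq : Measurable q) (hl : ρ.map q = ψ) :
    (ρ.prod (Measure.infinitePi fun _ : ℕ => ν)).map (samp q) = edgeMeasure ν ψ := by
  ext A hA
  rw [Measure.map_apply (measurable_samp hq) hA, samp_preimage, measure_iUnion, edgeMeasure,
    Measure.sum_apply _ hA]
  · congr 1
    ext k
    rw [Measure.prod_prod, Measure.smul_apply, smul_eq_mul,
      Measure.map_apply (measurable_sigma_mk k) hA, ← map_trunc,
      Measure.map_apply (measurable_trunc k) (measurableSet_sigma.1 hA k), ← hl,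
      Measure.map_apply hq (measurableSet_singleton k)]
  · intro i j hij
    rw [Function.onFun, Set.disjoint_left]
    rintro ⟨u, x⟩ h1 h2
    simp only [mem_prod, mem_preimage, mem_singleton_iff] at h1 h2
    exact hij (h1.1.symm.trans h2.1)
  · intro k
    exact (hq (measurableSet_singleton k)).prod
      (measurable_trunc k (measurableSet_sigma.1 hA k))

/-- The `i`-th label of an edge (junk `0` if there is none). -/
def getLab (i : ℕ) (p : LabelSpace) : ℝ := if h : i < p.1 then p.2 ⟨i, h⟩ else 0

lemma measurable_getLab (i : ℕ) : Measurable (getLab i) := by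
  intro A hA
  rw [measurableSet_sigma]
  intro k
  have : Measurable (fun x : Fin k → ℝ => getLab i ⟨k, x⟩) := by
    by_cases h : i < k
    · simpa only [getLab, h, dite_true] using measurable_pi_apply (X := fun _ : Fin k => ℝ) ⟨i, h⟩
    · simp only [getLab, h, dite_false]; fun_prop
  exact this hA

lemma measurable_num : Measurable (fun p : LabelSpace => p.1) := by
  intro A hA
  rw [measurableSet_sigma]
  intro k
  by_cases h : k ∈ A
  · convert MeasurableSet.univ; ext; simp [h]
  · convert MeasurableSet.empty; ext; simp [h]

lemma mem_toTGraph_s11 {V : Type*} [DecidableEq V] (ω : Sym2 V → LabelSpace) (e : Sym2 V) (x : ℝ) :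
    x ∈ toTGraph ω e ↔ ¬ e.IsDiag ∧ ∃ i : ℕ, i < (ω e).1 ∧ getLab i (ω e) = x := by
  unfold toTGraph
  by_cases h : e.IsDiag
  · simp [h]
  · simp only [h, if_false, Finset.mem_image, Finset.mem_univ, true_and, not_false_eq_true]
    constructor
    · rintro ⟨i, hi⟩
      exact ⟨i, i.2, by simp [getLab, hi]⟩
    · rintro ⟨i, hi, h2⟩
      exact ⟨⟨i, hi⟩, by simpa [getLab, hi] using h2⟩

lemma Contains.mono {VH V : Type*} {H : SimpleGraph VH} {P : Sym2 VH → Sym2 VH → Prop}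
    {Λ Λ' : TGraph V} {δ : ℝ} (h : ∀ e, Λ e ⊆ Λ' e) (hc : Contains H P Λ δ) :
    Contains H P Λ' δ := by
  obtain ⟨Φ, hΦ, lab, h1, h2, h3⟩ := hc
  exact ⟨Φ, hΦ, lab, fun e he => h _ (h1 e he), h2, h3⟩

lemma samp_mono {V : Type*} [DecidableEq V] {q q' : ℝ → ℕ} (h : ∀ u, q u ≤ q' u)
    (p : Sym2 V → ℝ × (ℕ → ℝ)) (e : Sym2 V) :
    toTGraph (fun e => samp q (p e)) e ⊆ toTGraph (fun e => samp q' (p e)) e := by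
  intro x
  rw [mem_toTGraph_s11, mem_toTGraph_s11]
  rintro ⟨hd, i, hi, hx⟩
  have hi' : i < q (p e).1 := hi
  have hi2 : i < q' (p e).1 := hi'.trans_le (h _)
  refine ⟨hd, i, hi2, ?_⟩
  simpa [getLab, samp, hi', hi2] using hx

lemma measurableSet_event {V VH : Type} [Fintype V] [DecidableEq V]
    (H : SimpleGraph VH) (P : Sym2 VH → Sym2 VH → Prop)
    (hP : StrictPartialOrderOn H.edgeSet P) (g : ℝ → ℝ) (hg : Measurable g) (δ : ℝ) :
    MeasurableSet {ω : Sym2 V → LabelSpace |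
      Contains H P (fun e => (toTGraph ω e).image g) δ} := by
  by_cases hfin : Finite VH
  swap
  · convert MeasurableSet.empty
    ext ω
    simp only [mem_ofPred_eq, mem_empty_iff_false, iff_false]
    rintro ⟨Φ, hΦ, -⟩
    exact hfin (Finite.of_injective Φ hΦ)
  have : Finite (Sym2 VH) := by
    unfold Sym2; infer_instance
  have heq : {ω : Sym2 V → LabelSpace |
      Contains H P (fun e => (toTGraph ω e).image g) δ} =
      ⋃ (Φ : VH → V) (idx : Sym2 VH → ℕ),
        {ω | Function.Injective Φ ∧
          (∀ e, e ∈ H.edgeSet → idx e < (ω (Sym2.map Φ e)).1) ∧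
          (∀ e f, P e f → g (getLab (idx e) (ω (Sym2.map Φ e)))
            < g (getLab (idx f) (ω (Sym2.map Φ f)))) ∧
          (∀ e, e ∈ H.edgeSet → ∀ f, f ∈ H.edgeSet →
            g (getLab (idx e) (ω (Sym2.map Φ e)))
            - g (getLab (idx f) (ω (Sym2.map Φ f))) < δ)} := by
    ext ω
    simp only [mem_ofPred_eq, mem_iUnion, Contains]
    constructor
    · rintro ⟨Φ, hΦ, lab, h1, h2, h3⟩
      have : ∀ e : Sym2 VH, ∃ i : ℕ, e ∈ H.edgeSet →
          i < (ω (Sym2.map Φ e)).1 ∧ g (getLab i (ω (Sym2.map Φ e))) = lab e := by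
        intro e
        by_cases he : e ∈ H.edgeSet
        · have := h1 e he
          rw [Finset.mem_image] at this
          obtain ⟨x, hx, hgx⟩ := this
          rw [mem_toTGraph_s11] at hx
          obtain ⟨-, i, hi, hix⟩ := hx
          exact ⟨i, fun _ => ⟨hi, by rw [hix, hgx]⟩⟩
        · exact ⟨0, fun h => absurd h he⟩
      choose idx hidx using this
      refine ⟨Φ, idx, hΦ, fun e he => (hidx e he).1, ?_, ?_⟩
      · intro e f hef
        obtain ⟨he, hf⟩ := hP.2.2 e f hef
        rw [(hidx e he).2, (hidx f hf).2]
        exact h2 e f hef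
      · intro e he f hf
        rw [(hidx e he).2, (hidx f hf).2]
        exact h3 e he f hf
    · rintro ⟨Φ, idx, hΦ, h1, h2, h3⟩
      refine ⟨Φ, hΦ, fun e => g (getLab (idx e) (ω (Sym2.map Φ e))), ?_, h2, h3⟩
      intro e he
      rw [Finset.mem_image]
      refine ⟨_, (mem_toTGraph_s11 _ _ _).2 ⟨?_, idx e, h1 e he, rfl⟩, rfl⟩
      have hd := H.not_isDiag_of_mem_edgeSet he
      induction e using Sym2.ind with
      | _ a b =>
        simp only [Sym2.map_mk, Sym2.mk_isDiag_iff] at hd ⊢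
        exact fun h => hd (hΦ h)
  rw [heq]
  have hm : ∀ (Φ : VH → V) (idx : Sym2 VH → ℕ) (e : Sym2 VH),
      Measurable fun ω : Sym2 V → LabelSpace => g (getLab (idx e) (ω (Sym2.map Φ e))) :=
    fun Φ idx e => hg.comp ((measurable_getLab _).comp (measurable_pi_apply _))
  refine MeasurableSet.iUnion fun Φ => MeasurableSet.iUnion fun idx => ?_
  simp only [ofPred_and, ofPred_forall]
  refine (MeasurableSet.const _).inter (MeasurableSet.inter ?_ (MeasurableSet.inter ?_ ?_))
  · refine MeasurableSet.iInter fun e => MeasurableSet.iInter fun _ => ?_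
    exact measurableSet_lt measurable_const (measurable_num.comp (measurable_pi_apply _))
  · refine MeasurableSet.iInter fun e => MeasurableSet.iInter fun f =>
      MeasurableSet.iInter fun _ => ?_
    exact measurableSet_lt (hm Φ idx e) (hm Φ idx f)
  · refine MeasurableSet.iInter fun e => MeasurableSet.iInter fun _ =>
      MeasurableSet.iInter fun f => MeasurableSet.iInter fun _ => ?_
    exact measurableSet_lt ((hm Φ idx e).sub (hm Φ idx f)) measurable_const

lemma contModel_eq (V : Type) [Fintype V] [DecidableEq V] (ψ : Measure ℕ)
    [IsProbabilityMeasure ψ] :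
    contModel V ψ = (Measure.pi fun _ : Sym2 V =>
      unif01.prod (Measure.infinitePi fun _ : ℕ => unif01)).map
        (fun p e => samp (qf ψ) (p e)) := by
  have hm := measurable_samp (measurable_qf ψ)
  have := Measure.isProbabilityMeasure_map
    (μ := unif01.prod (Measure.infinitePi fun _ : ℕ => unif01)) hm.aemeasurable
  rw [Measure.pi_map_pi (fun _ => hm.aemeasurable),
    map_samp ψ unif01 unif01 (measurable_qf ψ) (map_qf ψ)]
  rfl

lemma main_aux {V VH : Type} [Fintype V] [DecidableEq V]
    (H : SimpleGraph VH) (P : Sym2 VH → Sym2 VH → Prop)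
    (hP : StrictPartialOrderOn H.edgeSet P)
    (ψ χ : Measure ℕ) [IsProbabilityMeasure ψ] [IsProbabilityMeasure χ]
    (hdom : ∀ k : ℕ, ψ (Set.Ici k) ≤ χ (Set.Ici k))
    (g : ℝ → ℝ) (hg : Measurable g) (δ : ℝ) :
    contModel V ψ {ω | Contains H P (fun e => (toTGraph ω e).image g) δ}
      ≤ contModel V χ {ω | Contains H P (fun e => (toTGraph ω e).image g) δ} := by
  have hE := measurableSet_event (V := V) H P hP g hg δ
  have hm : ∀ (φ : Measure ℕ) [IsProbabilityMeasure φ],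
      Measurable (fun (p : Sym2 V → ℝ × (ℕ → ℝ)) (e : Sym2 V) => samp (qf φ) (p e)) :=
    fun φ _ => measurable_pi_lambda _ fun e =>
      (measurable_samp (measurable_qf φ)).comp (measurable_pi_apply e)
  rw [contModel_eq V ψ, contModel_eq V χ, Measure.map_apply (hm ψ) hE,
    Measure.map_apply (hm χ) hE]
  refine measure_mono fun p hp => ?_
  exact Contains.mono (fun e => Finset.image_subset_image
    (samp_mono (qf_mono ψ χ hdom) p e)) hp

end helpers

/-- Stochastic domination of label multiplicity distributions yields
domination of motif-containment probabilities, in both the continuous model and its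
`T`-discretizations. -/
theorem statement11 {V VH : Type} [Fintype V] [DecidableEq V]
    (H : SimpleGraph VH) (P : Sym2 VH → Sym2 VH → Prop)
    (hP : StrictPartialOrderOn H.edgeSet P)
    (ψ χ : Measure ℕ) (hψ : IsLMD ψ) (hχ : IsLMD χ)
    (hdom : ∀ k : ℕ, ψ (Set.Ici k) ≤ χ (Set.Ici k)) :
    (∀ δ : ℝ, 0 < δ → δ < 1 →
      contModel V ψ {ω | Contains H P (toTGraph ω) δ}
        ≤ contModel V χ {ω | Contains H P (toTGraph ω) δ}) ∧
    (∀ β T : ℕ, 0 < β → β < T →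
      contModel V ψ {ω | Contains H P (discretize T (toTGraph ω)) (β : ℝ)}
        ≤ contModel V χ {ω | Contains H P (discretize T (toTGraph ω)) (β : ℝ)}) := by
  have := hψ.1
  have := hχ.1
  constructor
  · intro δ _ _
    have h := main_aux (V := V) H P hP ψ χ hdom id measurable_id δ
    simpa only [Finset.image_id] using h
  · intro β T _ _
    exact main_aux (V := V) H P hP ψ χ hdom (fun l => ((⌈(T : ℝ) * l⌉ : ℤ) : ℝ))
      (by fun_prop) (β : ℝ)

end RTG
end
end

section
/- Let H=(V_H,E_H) be a fixed graph, P a strict partial order on E_H with R(P) linear extensions, ψ a label multiplicity distribution with mean r, 0<δ<1, and 𝒢 a sample from Γ_{[n]}(ψ). Let N_δ be the number of pairs (φ,τ) where φ:V_H→[n] is an injective map and τ assigns to each edge e∈E_H an index τ(e)∈{1,…,l_{φ(e)}} of one of the labels of the edge φ(e) of 𝒢, such that the |E_H| selected labels all lie within an interval of length δ and satisfy X_{φ(uv)} < X_{φ(wx)} whenever uv ≺_P wx. Then E[N_δ] = δ^{|E_H|}·r^{|E_H|}·|V_H|!·(R(P)/|E_H|!)·C(n,|V_H|)·(1 + |E_H|(1−δ)/δ).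 -/
open MeasureTheory ProbabilityTheory Filter Set
open scoped ENNReal NNReal Topology

noncomputable section

namespace RTG

/-- The value of the `j`-th sampled label (0-indexed) on the edge `f` in the sample `ω`
(junk value `0` if there are not that many labels). -/
def labVal {V : Type*} (ω : Sym2 V → LabelSpace) (f : Sym2 V) (j : ℕ) : ℝ :=
  if h : j < (ω f).1 then (ω f).2 ⟨j, h⟩ else 0

/-- The set of occurrences of `(H, P)` as a `δ`-temporal motif in the sample `ω`:
pairs of an injective vertex map `φ` and a choice `τ` of a label index for each edge,
such that the selected labels lie within an interval of length `δ` and realize `P`. -/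
def motifOcc {VH : Type*} {n : ℕ} (H : SimpleGraph VH) (P : Sym2 VH → Sym2 VH → Prop)
    (δ : ℝ) (ω : Sym2 (Fin n) → LabelSpace) : Set ((VH → Fin n) × (Sym2 VH → ℕ)) :=
  {p | Function.Injective p.1 ∧ (∀ e, e ∉ H.edgeSet → p.2 e = 0) ∧
    (∀ e ∈ H.edgeSet, p.2 e < (ω (Sym2.map p.1 e)).1) ∧
    (∀ e ∈ H.edgeSet, ∀ f ∈ H.edgeSet,
      labVal ω (Sym2.map p.1 e) (p.2 e) - labVal ω (Sym2.map p.1 f) (p.2 f) ≤ δ) ∧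
    (∀ e f, P e f →
      labVal ω (Sym2.map p.1 e) (p.2 e) < labVal ω (Sym2.map p.1 f) (p.2 f))}

/-- `R(P)`: the number of linear extensions of the strict partial order `P` on the
edge set of `H`, counted as order-preserving bijections onto `Fin |E_H|`. -/
def numLinExtOn {α : Type*} (s : Set α) (P : α → α → Prop) : ℕ :=
  Nat.card {f : s → Fin s.ncard //
    Function.Bijective f ∧ ∀ a b : s, P ↑a ↑b → f a < f b}


lemma pi_unif_eq {E : Type*} [Fintype E] :
    Measure.pi (fun _ : E => unif01) = (volume : Measure (E → ℝ)).restrict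
      (Set.univ.pi fun _ => Set.Ioc 0 1) := by
  rw [volume_pi, Measure.restrict_pi_pi]; rfl

lemma ae_inj {E : Type*} [Fintype E] :
    ∀ᵐ x ∂(Measure.pi (fun _ : E => unif01)), Function.Injective x := by
  classical
  rw [pi_unif_eq]
  apply ae_restrict_of_ae
  have h : ∀ a b : E, a ≠ b → ∀ᵐ x ∂(volume : Measure (E → ℝ)), x a ≠ x b := by
    intro a b hab
    let S : Submodule ℝ (E → ℝ) := LinearMap.ker
      (LinearMap.proj (R := ℝ) (φ := fun _ : E => ℝ) a - LinearMap.proj b)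
    have hS : S ≠ ⊤ := by
      intro h
      have : (Pi.single a 1 : E → ℝ) ∈ S := by rw [h]; trivial
      simp [S, hab.symm] at this
    have := Measure.addHaar_submodule (volume : Measure (E → ℝ)) S hS
    rw [ae_iff]
    convert this using 2
    ext x
    simp [S, sub_eq_zero]
  have h2 : ∀ᵐ x ∂(volume : Measure (E → ℝ)), ∀ a b : E, a ≠ b → x a ≠ x b := by
    rw [ae_all_iff]; intro a
    rw [ae_all_iff]; intro b
    by_cases hab : a = b
    · simp [hab]
    · filter_upwards [h a b hab] with x hx _ using hx
  filter_upwards [h2] with x hx a b hab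
  by_contra hne
  exact hx a b hne hab

def ordConst (m : ℕ) (δ : ℝ) : ℝ≥0∞ :=
  Measure.pi (fun _ : Fin m => unif01) {y | StrictMono y ∧ ∀ i j, y i - y j ≤ δ}

lemma measurableSet_range {E : Type*} [Fintype E] (δ : ℝ) :
    MeasurableSet {x : E → ℝ | ∀ a b, x a - x b ≤ δ} := by
  simp only [Set.ofPred_forall]
  refine MeasurableSet.iInter fun a => MeasurableSet.iInter fun b => ?_
  exact measurableSet_le (by fun_prop) (by fun_prop)

lemma measurableSet_ord {E : Type*} [Fintype E] (Q : E → E → Prop) :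
    MeasurableSet {x : E → ℝ | ∀ a b, Q a b → x a < x b} := by
  simp only [Set.ofPred_forall]
  refine MeasurableSet.iInter fun a => MeasurableSet.iInter fun b => MeasurableSet.iInter fun _ => ?_
  exact measurableSet_lt (by fun_prop) (by fun_prop)

lemma pi_equiv {E : Type*} [Fintype E] (m : ℕ) (f : E ≃ Fin m) (A : Set (Fin m → ℝ)) :
    Measure.pi (fun _ : E => unif01) {x | x ∘ f.symm ∈ A} =
      Measure.pi (fun _ : Fin m => unif01) A := by
  have := (measurePreserving_piCongrLeft (fun _ : Fin m => unif01) f).measure_preimage_equiv A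
  rw [← this]
  congr 1
  ext x
  simp only [Set.mem_ofPred_eq, Set.mem_preimage]
  have : x ∘ f.symm = (MeasurableEquiv.piCongrLeft (fun _ : Fin m => ℝ) f) x := by
    ext i
    obtain ⟨a, rfl⟩ := f.surjective i
    simp [MeasurableEquiv.coe_piCongrLeft]
  rw [this]

lemma pi_order {E : Type*} [Fintype E] (m : ℕ) (hm : Fintype.card E = m) (P : E → E → Prop)
    (δ : ℝ) :
    Measure.pi (fun _ : E => unif01) {x | (∀ a b, x a - x b ≤ δ) ∧ ∀ a b, P a b → x a < x b} =
      Nat.card {f : E ≃ Fin m // ∀ a b, P a b → f a < f b} * ordConst m δ := by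
  classical
  let L := {f : E ≃ Fin m // ∀ a b, P a b → f a < f b}
  let B : L → Set (E → ℝ) := fun f => {x | x ∘ f.1.symm ∈
    {y : Fin m → ℝ | StrictMono y ∧ ∀ i j, y i - y j ≤ δ}}
  have hB : ∀ f, Measure.pi (fun _ : E => unif01) (B f) = ordConst m δ := fun f => pi_equiv m f.1 _
  have hBm : ∀ f, MeasurableSet (B f) := by
    intro f
    have h1 : MeasurableSet {y : Fin m → ℝ | StrictMono y ∧ ∀ i j, y i - y j ≤ δ} :=
      (measurableSet_ord (E := Fin m) (fun a b => a < b)).inter (measurableSet_range δ)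
    have h2 : Measurable (fun x : E → ℝ => x ∘ f.1.symm) := by
      apply measurable_pi_lambda; intro i; exact measurable_pi_apply _
    exact h2 h1
  have hU : {x : E → ℝ | (∀ a b, x a - x b ≤ δ) ∧ ∀ a b, P a b → x a < x b}
      =ᵐ[Measure.pi (fun _ : E => unif01)] ⋃ f, B f := by
    filter_upwards [ae_inj] with x hx
    apply propext
    change ((∀ a b, x a - x b ≤ δ) ∧ ∀ a b, P a b → x a < x b) ↔ x ∈ ⋃ f, B f
    simp only [Set.mem_iUnion]
    constructor
    · rintro ⟨h1, h2⟩
      letI : LinearOrder E := LinearOrder.lift' x hx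
      let e := Fintype.orderIsoFinOfCardEq E hm
      refine ⟨⟨e.symm.toEquiv, ?_⟩, ?_, ?_⟩
      · intro a b hab
        exact e.symm.strictMono (h2 a b hab)
      · intro i j hij
        exact e.strictMono hij
      · intro i j
        exact h1 _ _
    · rintro ⟨f, h1, h2⟩
      constructor
      · intro a b
        simpa using h2 (f.1 a) (f.1 b)
      · intro a b hab
        simpa using h1 (f.2 a b hab)
  have hD : Pairwise (Function.onFun Disjoint B) := by
    intro f g hfg
    rw [Function.onFun, Set.disjoint_left]
    intro x hxf hxg
    apply hfg
    have h := StrictMono.range_inj hxf.1 hxg.1 |>.1 (by simp [Set.range_comp])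
    have hx : Function.Injective x := by
      have := hxf.1.injective.comp f.1.injective
      simpa [Function.comp_assoc] using this
    have h3 : f.1.symm = g.1.symm := by
      ext i
      exact hx (congrFun h i)
    apply Subtype.ext
    exact Equiv.symm_bijective.injective h3
  rw [measure_congr hU, measure_iUnion hD hBm]
  simp only [hB]
  rw [tsum_fintype]
  simp [L]

lemma range_meas (m : ℕ) (δ : ℝ) (hδ : 0 ≤ δ) :
    Measure.pi (fun _ : Fin (m + 1) => unif01) {x | ∀ a b, x a - x b ≤ δ} =
      (m + 1 : ℕ) * ∫⁻ a, (unif01 (Set.Icc a (a + δ))) ^ m ∂unif01 := by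
  classical
  let B : Fin (m + 1) → Set (Fin (m + 1) → ℝ) := fun i =>
    {x | ∀ j, x (i.succAbove j) ∈ Set.Icc (x i) (x i + δ)}
  have hBm : ∀ i, MeasurableSet (B i) := by
    intro i
    simp only [B, Set.ofPred_forall, Set.mem_Icc, Set.ofPred_and]
    refine MeasurableSet.iInter fun a => MeasurableSet.inter ?_ ?_
    · exact measurableSet_le (by fun_prop) (by fun_prop)
    · exact measurableSet_le (by fun_prop) (by fun_prop)
  have key : ∀ i (x : Fin (m + 1) → ℝ), x ∈ B i ↔ ∀ j, x j ∈ Set.Icc (x i) (x i + δ) := by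
    intro i x
    constructor
    · intro h j
      by_cases hj : j = i
      · subst hj; simp [hδ]
      · obtain ⟨k, rfl⟩ := Fin.exists_succAbove_eq hj
        exact h k
    · intro h j
      exact h _
  have hU : {x : Fin (m + 1) → ℝ | ∀ a b, x a - x b ≤ δ} = ⋃ i, B i := by
    ext x
    simp only [Set.mem_iUnion, key, Set.mem_ofPred_eq]
    constructor
    · intro h
      obtain ⟨i, hi⟩ := Finite.exists_min x
      exact ⟨i, fun j => ⟨hi j, by linarith [h j i]⟩⟩
    · rintro ⟨i, hi⟩ a b
      linarith [(hi a).2, (hi b).1]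
  have hD : Pairwise (Function.onFun (AEDisjoint (Measure.pi (fun _ : Fin (m + 1) => unif01))) B) := by
    intro i j hij
    change Measure.pi (fun _ : Fin (m + 1) => unif01) (B i ∩ B j) = 0
    refine measure_mono_null ?_ (ae_iff.1 (ae_inj (E := Fin (m + 1))))
    rintro x ⟨hi, hj⟩ hx
    rw [key] at hi hj
    exact hij (hx (le_antisymm (hi j).1 (hj i).1))
  have hB : ∀ i, Measure.pi (fun _ : Fin (m + 1) => unif01) (B i) =
      ∫⁻ a, (unif01 (Set.Icc a (a + δ))) ^ m ∂unif01 := by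
    intro i
    let A : Set (ℝ × (Fin m → ℝ)) := {p | ∀ j, p.2 j ∈ Set.Icc p.1 (p.1 + δ)}
    have hA : MeasurableSet A := by
      simp only [A, Set.ofPred_forall, Set.mem_Icc, Set.ofPred_and]
      refine MeasurableSet.iInter fun a => MeasurableSet.inter ?_ ?_
      · exact measurableSet_le (by fun_prop) (by fun_prop)
      · exact measurableSet_le (by fun_prop) (by fun_prop)
    have := (measurePreserving_piFinSuccAbove (fun _ : Fin (m + 1) => unif01) i).measure_preimage_equiv A
    have h2 : B i = (MeasurableEquiv.piFinSuccAbove (fun _ : Fin (m + 1) => ℝ) i) ⁻¹' A := by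
      ext x
      rfl
    rw [h2, this, Measure.prod_apply hA]
    congr 1
    ext a
    have h3 : Prod.mk a ⁻¹' A = Set.univ.pi fun _ : Fin m => Set.Icc a (a + δ) := by
      ext y
      change (∀ j, y j ∈ Set.Icc a (a + δ)) ↔ ∀ j, j ∈ Set.univ → y j ∈ Set.Icc a (a + δ)
      simp only [Set.mem_univ, true_implies]
    rw [h3, Measure.pi_pi]
    simp
  rw [hU, measure_iUnion₀ hD (fun i => (hBm i).nullMeasurableSet), tsum_fintype]
  simp only [hB]
  simp

lemma range_int (m : ℕ) (δ : ℝ) (hδ : 0 < δ) (hδ1 : δ < 1) :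
    ∫⁻ a, (unif01 (Set.Icc a (a + δ))) ^ m ∂unif01 =
      ENNReal.ofReal ((1 - δ) * δ ^ m + δ ^ (m + 1) / (m + 1)) := by
  have h1 : ∀ a ∈ Set.Ioc (0:ℝ) 1, (unif01 (Set.Icc a (a + δ))) ^ m =
      ENNReal.ofReal ((min δ (1 - a)) ^ m) := by
    intro a ha
    have : Set.Icc a (a + δ) ∩ Set.Ioc 0 1 = Set.Icc a (min (a + δ) 1) := by
      ext y
      simp only [Set.mem_inter_iff, Set.mem_Icc, Set.mem_Ioc, le_min_iff]
      constructor
      · rintro ⟨⟨_, _⟩, _, _⟩; tauto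
      · rintro ⟨h1, h2, h3⟩; exact ⟨⟨h1, h2⟩, lt_of_lt_of_le ha.1 h1, h3⟩
    have hmn : 0 ≤ min δ (1 - a) := le_min hδ.le (by linarith [ha.2])
    rw [unif01, Measure.restrict_apply measurableSet_Icc, this, Real.volume_Icc,
      ENNReal.ofReal_pow hmn]
    congr 2
    rw [← min_sub_sub_right]; congr 1; ring
  rw [unif01] at *
  rw [setLIntegral_congr_fun measurableSet_Ioc h1]
  have hc : Continuous fun a : ℝ => (min δ (1 - a)) ^ m := by fun_prop
  rw [← ofReal_integral_eq_lintegral_ofReal]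
  · congr 1
    rw [← intervalIntegral.integral_of_le zero_le_one]
    rw [← intervalIntegral.integral_add_adjacent_intervals (b := 1 - δ)
      (hc.intervalIntegrable _ _) (hc.intervalIntegrable _ _)]
    have e1 : ∫ a in (0:ℝ)..(1 - δ), (min δ (1 - a)) ^ m = ∫ a in (0:ℝ)..(1 - δ), δ ^ m := by
      apply intervalIntegral.integral_congr
      intro a ha
      rw [Set.uIcc_of_le (by linarith)] at ha
      simp only
      rw [min_eq_left (by linarith [ha.2])]
    have e2 : ∫ a in (1 - δ)..1, (min δ (1 - a)) ^ m = ∫ a in (1 - δ)..1, (1 - a) ^ m := by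
      apply intervalIntegral.integral_congr
      intro a ha
      rw [Set.uIcc_of_le (by linarith)] at ha
      simp only
      rw [min_eq_right (by linarith [ha.1])]
    rw [e1, e2, intervalIntegral.integral_comp_sub_left (fun a => a ^ m) 1]
    simp
  · exact (hc.integrableOn_Icc).mono_set Set.Ioc_subset_Icc_self
  · filter_upwards [ae_restrict_mem measurableSet_Ioc] with a ha
    exact pow_nonneg (le_min hδ.le (by linarith [ha.2])) m

lemma ordConst_eq (m : ℕ) (δ : ℝ) (hδ : 0 < δ) (hδ1 : δ < 1) :
    ordConst m δ = ENNReal.ofReal (δ ^ m * (1 + m * (1 - δ) / δ) / (Nat.factorial m)) := by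
  have h := pi_order (E := Fin m) m (by simp) (fun _ _ => False) δ
  have hc : Nat.card {f : Fin m ≃ Fin m // ∀ a b : Fin m, False → f a < f b} = Nat.factorial m := by
    simp [Nat.card_eq_fintype_card, Fintype.card_equiv (Equiv.refl (Fin m))]
  rw [hc] at h
  have hf : (0:ℝ) < Nat.factorial m := by exact_mod_cast Nat.factorial_pos m
  have h2 : Measure.pi (fun _ : Fin m => unif01) {x | ∀ a b, x a - x b ≤ δ} =
      ENNReal.ofReal (δ ^ m * (1 + m * (1 - δ) / δ)) := by
    cases m with
    | zero => simp
    | succ k =>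
      rw [range_meas k δ hδ.le, range_int k δ hδ hδ1, ← ENNReal.ofReal_natCast,
        ← ENNReal.ofReal_mul (by positivity)]
      congr 1
      push_cast
      field_simp
      ring
  simp only [IsEmpty.forall_iff, implies_true, and_true] at h
  rw [h2] at h
  rw [ENNReal.ofReal_div_of_pos hf, h, ENNReal.ofReal_natCast]
  rw [mul_comm, ENNReal.mul_div_cancel_right]
  · exact_mod_cast (Nat.factorial_pos m).ne'
  · exact ENNReal.natCast_ne_top _

abbrev smk (k : ℕ) : (Fin k → ℝ) → LabelSpace := @Sigma.mk ℕ (fun k => Fin k → ℝ) k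

lemma measurable_sigma_mk_s12 (k : ℕ) : Measurable (smk k) := by
  intro s hs
  exact (MeasurableSpace.measurableSet_iInf.1 hs) k

lemma measurable_from_label {β : Type*} [MeasurableSpace β] {f : LabelSpace → β}
    (h : ∀ k, Measurable (fun x : Fin k → ℝ => f ⟨k, x⟩)) : Measurable f := by
  intro s hs
  exact MeasurableSpace.measurableSet_iInf.2 fun k => h k hs

/-- value of label `t` -/
def lval (t : ℕ) (x : LabelSpace) : ℝ := if h : t < x.1 then x.2 ⟨t, h⟩ else 0

lemma measurable_lval (t : ℕ) : Measurable (lval t) := by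
  apply measurable_from_label
  intro k
  by_cases h : t < k
  · simp only [lval, h, dite_true]
    exact measurable_pi_apply (X := fun _ : Fin k => ℝ) ⟨t, h⟩
  · simp only [lval, h, dite_false]; exact measurable_const

lemma measurableSet_cnt (t : ℕ) : MeasurableSet {x : LabelSpace | t < x.1} :=
  MeasurableSpace.measurableSet_iInf.2 fun k =>
    (MeasurableSet.const (t < k) : MeasurableSet {_x : Fin k → ℝ | t < k})

lemma tail_eq (ψ : Measure ℕ) (S : Set ℕ) [DecidablePred (· ∈ S)] :
    ψ S = ∑' k, if k ∈ S then ψ {k} else 0 := by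
  rw [← Measure.tsum_indicator_apply_singleton ψ S (MeasurableSet.of_discrete)]
  congr 1
  ext k
  simp [Set.indicator_apply]

lemma edge_apply (ψ : Measure ℕ) {A : Set LabelSpace} (hA : MeasurableSet A) :
    edgeMeasure unif01 ψ A =
      ∑' k, ψ {k} * (Measure.pi fun _ : Fin k => unif01) (smk k ⁻¹' A) := by
  rw [edgeMeasure, Measure.sum_apply _ hA]
  congr 1
  ext k
  rw [Measure.smul_apply, Measure.map_apply (measurable_sigma_mk_s12 k) hA, smul_eq_mul]

instance edge_prob (ψ : Measure ℕ) [IsProbabilityMeasure ψ] :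
    IsProbabilityMeasure (edgeMeasure unif01 ψ) := ⟨by
  classical
  rw [edge_apply ψ MeasurableSet.univ]
  simp only [Set.preimage_univ, measure_univ, mul_one]
  have := tail_eq ψ Set.univ
  simpa using this.symm⟩

lemma edge_map (ψ : Measure ℕ) (t : ℕ) :
    ((edgeMeasure unif01 ψ).restrict {x | t < x.1}).map (lval t) = ψ (Set.Ioi t) • unif01 := by
  classical
  ext A hA
  rw [Measure.map_apply (measurable_lval t) hA,
    Measure.restrict_apply (measurable_lval t hA),
    edge_apply ψ ((measurable_lval t hA).inter (measurableSet_cnt t)), Measure.smul_apply,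
    tail_eq ψ (Set.Ioi t), smul_eq_mul, ← ENNReal.tsum_mul_right]
  congr 1
  ext k
  by_cases h : t < k
  · have : smk k ⁻¹' (lval t ⁻¹' A ∩ {x : LabelSpace | t < x.1}) =
        Function.eval (⟨t, h⟩ : Fin k) ⁻¹' A := by
      ext x
      simp [lval, h]
    rw [this]
    have h2 := (measurePreserving_eval (fun _ : Fin k => unif01) ⟨t, h⟩).measure_preimage
      hA.nullMeasurableSet
    rw [h2]
    simp [h]
  · have : smk k ⁻¹' (lval t ⁻¹' A ∩ {x : LabelSpace | t < x.1}) = ∅ := by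
      ext x
      simp [h]
    simp [this, h]

lemma pi_smul_unif {E : Type*} [Fintype E] (c : E → ℝ≥0∞) (hc : ∀ e, c e ≠ ∞) :
    Measure.pi (fun e => c e • unif01) = (∏ e, c e) • Measure.pi (fun _ : E => unif01) := by
  haveI : ∀ e, IsFiniteMeasure (c e • unif01) := fun e => Measure.smul_finite _ (hc e)
  apply Measure.pi_eq
  intro s hs
  simp [Measure.pi_pi, Finset.prod_mul_distrib]

lemma occ_meas {E W : Type*} [Fintype E] [Fintype W] [DecidableEq W] (ψ : Measure ℕ)
    [IsProbabilityMeasure ψ] (g : E → W) (hg : Function.Injective g) (τ : E → ℕ)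
    (B : Set (E → ℝ)) (hB : MeasurableSet B) :
    Measure.pi (fun _ : W => edgeMeasure unif01 ψ)
      {ω | (∀ e, τ e < (ω (g e)).1) ∧ (fun e => lval (τ e) (ω (g e))) ∈ B} =
    (∏ e, ψ (Set.Ioi (τ e))) * Measure.pi (fun _ : E => unif01) B := by
  have h1 : (Measure.pi (fun _ : W => edgeMeasure unif01 ψ)).map (fun ω e => ω (g e)) =
      Measure.pi (fun _ : E => edgeMeasure unif01 ψ) := by
    have hi : iIndepFun (fun (e : W) (ω : W → LabelSpace) => ω e)
        (Measure.pi (fun _ : W => edgeMeasure unif01 ψ)) :=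
      iIndepFun_pi (X := fun _ x => x) (fun _ => aemeasurable_id)
    have hi2 := iIndepFun.precomp hg hi
    rw [iIndepFun_iff_map_fun_eq_pi_map (fun i => (measurable_pi_apply _).aemeasurable)] at hi2
    rw [hi2]
    congr 1
    ext1 e
    exact (measurePreserving_eval (fun _ : W => edgeMeasure unif01 ψ) (g e)).map_eq
  have hm1 : Measurable (fun (ω : W → LabelSpace) (e : E) => ω (g e)) :=
    measurable_pi_lambda _ fun e => measurable_pi_apply _
  have hm2 : Measurable (fun (x : E → LabelSpace) (e : E) => lval (τ e) (x e)) :=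
    measurable_pi_lambda _ fun e => (measurable_lval _).comp (measurable_pi_apply _)
  have hS : MeasurableSet (Set.univ.pi fun e : E => {x : LabelSpace | τ e < x.1}) :=
    MeasurableSet.univ_pi fun e => measurableSet_cnt _
  haveI : ∀ e, IsFiniteMeasure (ψ (Set.Ioi (τ e)) • unif01) :=
    fun e => Measure.smul_finite _ (measure_ne_top _ _)
  haveI : ∀ e, SigmaFinite
      (Measure.map (lval (τ e)) ((edgeMeasure unif01 ψ).restrict {x | τ e < x.1})) := by
    intro e
    rw [edge_map]
    infer_instance
  calc _ = (Measure.pi (fun _ : W => edgeMeasure unif01 ψ)).map (fun ω e => ω (g e))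
        ((fun (x : E → LabelSpace) (e : E) => lval (τ e) (x e)) ⁻¹' B ∩
          (Set.univ.pi fun e : E => {x : LabelSpace | τ e < x.1})) := by
        rw [Measure.map_apply hm1 ((hm2 hB).inter hS)]
        congr 1
        ext ω
        simp [and_comm]
    _ = ((Measure.pi (fun e : E => (edgeMeasure unif01 ψ).restrict {x | τ e < x.1})).map
          (fun (x : E → LabelSpace) (e : E) => lval (τ e) (x e))) B := by
        rw [h1, Measure.map_apply hm2 hB, ← Measure.restrict_pi_pi,
          Measure.restrict_apply (hm2 hB)]
    _ = _ := by
        rw [Measure.pi_map_pi (fun e => (measurable_lval _).aemeasurable)]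
        simp only [edge_map]
        rw [pi_smul_unif _ (fun e => measure_ne_top _ _)]
        rfl

lemma tsum_pi_fin (a : ℕ → ℝ≥0∞) (m : ℕ) :
    ∑' τ : Fin m → ℕ, ∏ e, a (τ e) = (∑' t, a t) ^ m := by
  induction m with
  | zero => simp [tsum_fintype]
  | succ k ih =>
    rw [← (Fin.consEquiv (fun _ : Fin (k + 1) => ℕ)).tsum_eq, ENNReal.tsum_prod
        (f := fun t τ => ∏ e, a ((Fin.consEquiv (fun _ : Fin (k + 1) => ℕ)) (t, τ) e)), pow_succ', ← ih,
      ← ENNReal.tsum_mul_right]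
    congr 1
    ext t
    rw [← ENNReal.tsum_mul_left]
    congr 1
    ext τ
    simp [Fin.consEquiv, Fin.prod_univ_succ]

lemma tsum_pi_eq {E : Type*} [Fintype E] (a : ℕ → ℝ≥0∞) :
    ∑' τ : E → ℕ, ∏ e, a (τ e) = (∑' t, a t) ^ (Fintype.card E) := by
  rw [← tsum_pi_fin, ← (Equiv.arrowCongr (Fintype.equivFin E) (Equiv.refl ℕ)).tsum_eq]
  congr 1
  ext τ
  rw [← (Fintype.equivFin E).prod_comp]
  simp [Equiv.arrowCongr]

lemma tail_sum (ψ : Measure ℕ) (hψ : IsLMD ψ) :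
    ∑' t, ψ (Set.Ioi t) = ENNReal.ofReal (lmdMean ψ) := by
  rw [lmdMean, ofReal_integral_eq_lintegral_ofReal hψ.2.1 (Filter.Eventually.of_forall (by
    intro k; positivity))]
  have : ∀ k : ℕ, ENNReal.ofReal (k : ℝ) = ∑' t, (Set.Ioi t).indicator (fun _ => (1 : ℝ≥0∞)) k := by
    intro k
    rw [tsum_eq_sum (s := Finset.range k)]
    · rw [Finset.sum_congr rfl (g := fun _ => (1:ℝ≥0∞))]
      · simp
      · intro t ht
        simp at ht
        simp [ht]
    · intro t ht
      simpa using ht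
  simp only [this]
  rw [lintegral_tsum (fun t => (measurable_of_countable _).aemeasurable)]
  congr 1
  ext t
  rw [lintegral_indicator MeasurableSet.of_discrete]
  simp

lemma linext_card {α : Type*} (s : Set α) [Finite s] (P : α → α → Prop) :
    Nat.card {f : s ≃ Fin s.ncard // ∀ a b : s, P a b → f a < f b} = numLinExtOn s P := by
  unfold numLinExtOn
  apply Nat.card_congr
  refine ⟨fun f => ⟨f.1, f.1.bijective, f.2⟩, fun f => ⟨Equiv.ofBijective f.1 f.2.1, f.2.2⟩, ?_, ?_⟩
  · intro f
    apply Subtype.ext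
    ext x
    rfl
  · intro f
    rfl

lemma measurable_labVal {n : ℕ} (f : Sym2 (Fin n)) (j : ℕ) :
    Measurable (fun ω : Sym2 (Fin n) → LabelSpace => labVal ω f j) :=
  (measurable_lval j).comp (measurable_pi_apply f)

lemma measurableSet_occ {VH : Type} [Fintype VH] (H : SimpleGraph VH)
    (P : Sym2 VH → Sym2 VH → Prop) (δ : ℝ) (n : ℕ) (p : (VH → Fin n) × (Sym2 VH → ℕ)) :
    MeasurableSet {ω | p ∈ motifOcc H P δ ω} := by
  have hc : ∀ q : Prop, MeasurableSet {_ω : Sym2 (Fin n) → LabelSpace | q} :=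
    fun q => MeasurableSet.const q
  have h1 : MeasurableSet {ω : Sym2 (Fin n) → LabelSpace |
      ∀ e ∈ H.edgeSet, p.2 e < (ω (Sym2.map p.1 e)).1} := by
    simp only [Set.ofPred_forall]
    refine MeasurableSet.iInter fun e => MeasurableSet.iInter fun _ => ?_
    have hm : Measurable (fun ω : Sym2 (Fin n) → LabelSpace => ω (Sym2.map p.1 e)) :=
      measurable_pi_apply _
    exact hm (measurableSet_cnt (p.2 e))
  have h2 : MeasurableSet {ω : Sym2 (Fin n) → LabelSpace |
      ∀ e ∈ H.edgeSet, ∀ f ∈ H.edgeSet,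
      labVal ω (Sym2.map p.1 e) (p.2 e) - labVal ω (Sym2.map p.1 f) (p.2 f) ≤ δ} := by
    simp only [Set.ofPred_forall]
    refine MeasurableSet.iInter fun e => MeasurableSet.iInter fun _ =>
      MeasurableSet.iInter fun f => MeasurableSet.iInter fun _ => ?_
    exact measurableSet_le ((measurable_labVal _ _).sub (measurable_labVal _ _)) measurable_const
  have h3 : MeasurableSet {ω : Sym2 (Fin n) → LabelSpace | ∀ e f, P e f →
      labVal ω (Sym2.map p.1 e) (p.2 e) < labVal ω (Sym2.map p.1 f) (p.2 f)} := by
    simp only [Set.ofPred_forall]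
    refine MeasurableSet.iInter fun e => MeasurableSet.iInter fun f =>
      MeasurableSet.iInter fun _ => ?_
    exact measurableSet_lt (measurable_labVal _ _) (measurable_labVal _ _)
  exact (hc _).inter ((hc _).inter (h1.inter (h2.inter h3)))

open Classical in
/-- extend a label choice by zero off the edge set -/
def extTau {α : Type*} (s : Set α) (τ : s → ℕ) (e : α) : ℕ := if h : e ∈ s then τ ⟨e, h⟩ else 0

lemma extTau_coe {α : Type*} (s : Set α) (τ : s → ℕ) (e : s) : extTau s τ e = τ e := by
  simp [extTau]

lemma occ_prob {VH : Type} [Fintype VH] (H : SimpleGraph VH) [Fintype H.edgeSet]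
    (P : Sym2 VH → Sym2 VH → Prop) (hP : StrictPartialOrderOn H.edgeSet P)
    (ψ : Measure ℕ) [IsProbabilityMeasure ψ] (δ : ℝ) (n : ℕ) (φ : VH ↪ Fin n)
    (τ : H.edgeSet → ℕ) :
    contModel (Fin n) ψ {ω | ((φ : VH → Fin n), extTau H.edgeSet τ) ∈ motifOcc H P δ ω} =
      (∏ e, ψ (Set.Ioi (τ e))) *
        (numLinExtOn H.edgeSet P * ordConst H.edgeSet.ncard δ) := by
  have hcard : Fintype.card H.edgeSet = H.edgeSet.ncard := by
    rw [← Nat.card_eq_fintype_card]; rfl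
  rw [← linext_card, ← pi_order (E := H.edgeSet) _ hcard (fun a b => P a b) δ]
  have hg : Function.Injective (fun e : H.edgeSet => Sym2.map φ (e : Sym2 VH)) :=
    (Sym2.map.injective φ.injective).comp Subtype.val_injective
  have hB : MeasurableSet {x : H.edgeSet → ℝ | (∀ a b, x a - x b ≤ δ) ∧
      ∀ a b : H.edgeSet, P a b → x a < x b} :=
    (measurableSet_range δ).inter (measurableSet_ord (fun a b : H.edgeSet => P a b))
  rw [← occ_meas ψ _ hg τ _ hB]
  unfold contModel model
  congr 1
  ext ω
  have hlv : ∀ e : H.edgeSet, labVal ω (Sym2.map φ (e : Sym2 VH)) (extTau H.edgeSet τ e) =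
      lval (τ e) (ω (Sym2.map φ (e : Sym2 VH))) := by
    intro e
    rw [extTau_coe]; rfl
  change (Function.Injective φ ∧ (∀ e, e ∉ H.edgeSet → extTau H.edgeSet τ e = 0) ∧
    (∀ e ∈ H.edgeSet, extTau H.edgeSet τ e < (ω (Sym2.map φ e)).1) ∧
    (∀ e ∈ H.edgeSet, ∀ f ∈ H.edgeSet,
      labVal ω (Sym2.map φ e) (extTau H.edgeSet τ e)
        - labVal ω (Sym2.map φ f) (extTau H.edgeSet τ f) ≤ δ) ∧
    (∀ e f, P e f →
      labVal ω (Sym2.map φ e) (extTau H.edgeSet τ e)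
        < labVal ω (Sym2.map φ f) (extTau H.edgeSet τ f))) ↔
    ((∀ e : H.edgeSet, τ e < (ω (Sym2.map φ (e : Sym2 VH))).1) ∧
      (∀ a b : H.edgeSet, lval (τ a) (ω (Sym2.map φ (a : Sym2 VH)))
        - lval (τ b) (ω (Sym2.map φ (b : Sym2 VH))) ≤ δ) ∧
      (∀ a b : H.edgeSet, P a b → lval (τ a) (ω (Sym2.map φ (a : Sym2 VH)))
        < lval (τ b) (ω (Sym2.map φ (b : Sym2 VH)))))
  constructor
  · rintro ⟨-, -, h1, h2, h3⟩
    refine ⟨fun e => ?_, fun a b => ?_, fun a b hab => ?_⟩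
    · rw [← extTau_coe H.edgeSet τ e]; exact h1 e e.2
    · rw [← hlv, ← hlv]; exact h2 a a.2 b b.2
    · rw [← hlv, ← hlv]; exact h3 a b hab
  · rintro ⟨h1, h2, h3⟩
    refine ⟨φ.injective, fun e he => by simp [extTau, he], fun e he => ?_, fun e he f hf => ?_,
      fun e f hef => ?_⟩
    · rw [extTau_coe _ τ ⟨e, he⟩]; exact h1 ⟨e, he⟩
    · rw [hlv ⟨e, he⟩, hlv ⟨f, hf⟩]; exact h2 ⟨e, he⟩ ⟨f, hf⟩
    · obtain ⟨he, hf⟩ := hP.2.2 e f hef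
      rw [hlv ⟨e, he⟩, hlv ⟨f, hf⟩]; exact h3 ⟨e, he⟩ ⟨f, hf⟩ hef

lemma expect_occ {VH : Type} [Fintype VH] [DecidableEq VH] (H : SimpleGraph VH)
    (P : Sym2 VH → Sym2 VH → Prop) (hP : StrictPartialOrderOn H.edgeSet P)
    (ψ : Measure ℕ) (hψ : IsLMD ψ) (δ : ℝ) (n : ℕ) :
    ∑' p, contModel (Fin n) ψ {ω | p ∈ motifOcc H P δ ω} =
      (n.descFactorial (Fintype.card VH) : ℕ) *
        (ENNReal.ofReal (lmdMean ψ) ^ H.edgeSet.ncard *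
          (numLinExtOn H.edgeSet P * ordConst H.edgeSet.ncard δ)) := by
  classical
  have := hψ.1
  have hcard : Fintype.card H.edgeSet = H.edgeSet.ncard := by
    rw [← Nat.card_eq_fintype_card]; rfl
  let g : (VH ↪ Fin n) × (H.edgeSet → ℕ) → (VH → Fin n) × (Sym2 VH → ℕ) :=
    fun q => (q.1, extTau H.edgeSet q.2)
  have hg : Function.Injective g := by
    rintro ⟨φ, τ⟩ ⟨φ', τ'⟩ h
    simp only [g, Prod.mk.injEq] at h
    refine Prod.ext (DFunLike.coe_injective h.1) ?_
    ext e
    have := congrFun h.2 (e : Sym2 VH)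
    simpa [extTau_coe] using this
  rw [← hg.tsum_eq]
  · simp only [g]
    rw [ENNReal.tsum_prod (f := fun (φ : VH ↪ Fin n) (τ : H.edgeSet → ℕ) =>
      contModel (Fin n) ψ {ω | ((φ : VH → Fin n), extTau H.edgeSet τ) ∈ motifOcc H P δ ω})]
    simp only [occ_prob H P hP ψ δ n]
    simp only [ENNReal.tsum_mul_right]
    rw [tsum_pi_eq (fun t => ψ (Set.Ioi t)), tail_sum ψ hψ, hcard, tsum_fintype]
    rw [Finset.sum_const, nsmul_eq_mul, Finset.card_univ, Fintype.card_embedding_eq,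
      Fintype.card_fin]
    ring
  · rintro ⟨φ, τ⟩ h
    rw [Function.mem_support] at h
    obtain ⟨ω, hω⟩ := nonempty_of_measure_ne_zero h
    refine ⟨(⟨φ, hω.1⟩, fun e => τ e), ?_⟩
    refine Prod.ext rfl ?_
    ext e
    by_cases he : e ∈ H.edgeSet
    · simp [g, extTau, he]
    · have := hω.2.1 e he
      simp only at this
      simp [g, extTau, he, this]

/-- The expected number of `δ`-temporal occurrences of `(H, P)` in
`Γ_{[n]}(ψ)`. -/
theorem statement12 {VH : Type} [Fintype VH] [DecidableEq VH] (H : SimpleGraph VH)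
    (P : Sym2 VH → Sym2 VH → Prop) (hP : StrictPartialOrderOn H.edgeSet P)
    (ψ : Measure ℕ) (hψ : IsLMD ψ) (δ : ℝ) (hδ : 0 < δ) (hδ1 : δ < 1) (n : ℕ) :
    ∫ ω, ((motifOcc H P δ ω).ncard : ℝ) ∂(contModel (Fin n) ψ)
      = δ ^ H.edgeSet.ncard * lmdMean ψ ^ H.edgeSet.ncard
        * (Nat.factorial (Fintype.card VH) : ℝ)
        * ((numLinExtOn H.edgeSet P : ℝ) / (Nat.factorial H.edgeSet.ncard : ℝ))
        * (n.choose (Fintype.card VH) : ℝ)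
        * (1 + H.edgeSet.ncard * (1 - δ) / δ) := by
  classical
  have hcount : ∀ ω : Sym2 (Fin n) → LabelSpace, ((motifOcc H P δ ω).ncard : ℝ) =
      (∑' p, ({ω | p ∈ motifOcc H P δ ω} : Set (Sym2 (Fin n) → LabelSpace)).indicator
        (fun _ => (1 : ℝ≥0∞)) ω).toReal := by
    intro ω
    have h1 : ∑' p, ({ω | p ∈ motifOcc H P δ ω} : Set (Sym2 (Fin n) → LabelSpace)).indicator
        (fun _ => (1 : ℝ≥0∞)) ω = ((motifOcc H P δ ω).encard : ℝ≥0∞) := by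
      rw [← ENNReal.tsum_set_one, tsum_subtype (motifOcc H P δ ω) (fun _ => (1 : ℝ≥0∞))]
      rfl
    rw [h1, Set.ncard_def]
    generalize (motifOcc H P δ ω).encard = k
    cases k <;> simp
  have hmeas : ∀ p, Measurable
      (({ω | p ∈ motifOcc H P δ ω} : Set (Sym2 (Fin n) → LabelSpace)).indicator
        (fun _ => (1 : ℝ≥0∞))) :=
    fun p => measurable_const.indicator (measurableSet_occ H P δ n p)
  have hint : ∫⁻ ω, ∑' p, ({ω | p ∈ motifOcc H P δ ω} :
      Set (Sym2 (Fin n) → LabelSpace)).indicator (fun _ => (1 : ℝ≥0∞)) ω ∂(contModel (Fin n) ψ) =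
      (n.descFactorial (Fintype.card VH) : ℕ) *
        (ENNReal.ofReal (lmdMean ψ) ^ H.edgeSet.ncard *
          (numLinExtOn H.edgeSet P * ordConst H.edgeSet.ncard δ)) := by
    rw [lintegral_tsum (fun p => (hmeas p).aemeasurable), ← expect_occ H P hP ψ hψ δ n]
    congr 1
    ext p
    rw [lintegral_indicator (measurableSet_occ H P δ n p)]
    simp
  rw [ordConst_eq _ δ hδ hδ1] at hint
  have hfin : ((n.descFactorial (Fintype.card VH) : ℕ) : ℝ≥0∞) *
        (ENNReal.ofReal (lmdMean ψ) ^ H.edgeSet.ncard *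
          (numLinExtOn H.edgeSet P * ENNReal.ofReal (δ ^ H.edgeSet.ncard *
            (1 + H.edgeSet.ncard * (1 - δ) / δ) / (Nat.factorial H.edgeSet.ncard)))) ≠ ∞ := by
    refine ENNReal.mul_ne_top (ENNReal.natCast_ne_top _) (ENNReal.mul_ne_top
      (ENNReal.pow_ne_top ENNReal.ofReal_ne_top) (ENNReal.mul_ne_top (ENNReal.natCast_ne_top _)
        ENNReal.ofReal_ne_top))
  simp only [hcount]
  have hm : Measurable fun ω => ∑' p, ({ω | p ∈ motifOcc H P δ ω} :
      Set (Sym2 (Fin n) → LabelSpace)).indicator (fun _ => (1 : ℝ≥0∞)) ω :=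
    Measurable.ennreal_tsum hmeas
  rw [integral_toReal hm.aemeasurable (ae_lt_top hm (by rw [hint]; exact hfin)), hint]
  have hr : 0 ≤ lmdMean ψ := hψ.2.2.2.le
  have hd : 0 ≤ 1 - δ := by linarith
  rw [ENNReal.toReal_mul, ENNReal.toReal_mul, ENNReal.toReal_mul, ENNReal.toReal_pow,
    ENNReal.toReal_ofReal hr, ENNReal.toReal_ofReal (by positivity), ENNReal.toReal_natCast,
    ENNReal.toReal_natCast, Nat.descFactorial_eq_factorial_mul_choose]
  push_cast
  ring

end RTG
end
end
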